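/- Let G be a finitely generated co-Hopfian virtually free group with Out(G) finite. Then G is strongly co-Hopfian: there exists a finite subset F of G \ {1} such that every group endomorphism φ of G with φ(f) ≠ 1 for all f ∈ F is an automorphism of G (bijective). -/

import Mathlib

open FirstOrder Language

/-- Function symbols of the first-order language of groups:
a binary multiplication, a unary inverse and a constant for the identity. -/
inductive GroupFunc : ℕ → Type
  | mul : GroupFunc 2
  | inv : GroupFunc 1
  | one : GroupFunc 0

/-- The first-order language of groups. -/
def groupLang : FirstOrder.Language :=
  { Functions := GroupFunc
    Relations := fun _ => Empty }

/-- Every group is a structure for the language of groups in the natural way. -/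
instance groupLangStructure (G : Type*) [Group G] : groupLang.Structure G where
  funMap {n} f v :=
    match f with
    | .mul => v 0 * v 1
    | .inv => (v 0)⁻¹
    | .one => 1
  RelMap {n} r _ := r.elim

/-- Existential formulas: iterated existential quantifications of a
quantifier-free formula. -/
inductive IsExistentialQF {α : Type*} : ∀ {n : ℕ}, groupLang.BoundedFormula α n → Prop
  | of_isQF {n : ℕ} {φ : groupLang.BoundedFormula α n} (h : φ.IsQF) : IsExistentialQF φ
  | ex {n : ℕ} {φ : groupLang.BoundedFormula α (n + 1)} (h : IsExistentialQF φ) :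
      IsExistentialQF φ.ex

/-- Universal formulas: iterated universal quantifications of a
quantifier-free formula. -/
inductive IsUniversalQF {α : Type*} : ∀ {n : ℕ}, groupLang.BoundedFormula α n → Prop
  | of_isQF {n : ℕ} {φ : groupLang.BoundedFormula α n} (h : φ.IsQF) : IsUniversalQF φ
  | all {n : ℕ} {φ : groupLang.BoundedFormula α (n + 1)} (h : IsUniversalQF φ) :
      IsUniversalQF φ.all

/-- ∀∃-formulas: iterated universal quantifications of an existential formula. -/
inductive IsAE {α : Type*} : ∀ {n : ℕ}, groupLang.BoundedFormula α n → Prop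
  | of_existential {n : ℕ} {φ : groupLang.BoundedFormula α n} (h : IsExistentialQF φ) : IsAE φ
  | all {n : ℕ} {φ : groupLang.BoundedFormula α (n + 1)} (h : IsAE φ) : IsAE φ.all

/-- A group is virtually free if it has a free subgroup of finite index. -/
def VirtuallyFree (G : Type*) [Group G] : Prop :=
  ∃ H : Subgroup G, H.FiniteIndex ∧ Nonempty (IsFreeGroup H)

/-- A group is co-Hopfian if every injective endomorphism is surjective. -/
def CoHopfian (G : Type*) [Group G] : Prop :=
  ∀ φ : G →* G, Function.Injective φ → Function.Surjective φ

/-- Two homomorphisms `φ, φ' : G → G'` are equivalent if they coincide up to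
conjugation on every finite subgroup of `G`. -/
def HomEquiv {G G' : Type*} [Group G] [Group G'] (φ φ' : G →* G') : Prop :=
  ∀ H : Subgroup G, (H : Set G).Finite →
    ∃ g' : G', ∀ h ∈ H, φ' h = g' * φ h * g'⁻¹

/-- Two groups are ∀∃-equivalent if they satisfy the same ∀∃-sentences. -/
def AEEquivalent (G : Type*) (G' : Type*) [Group G] [Group G'] : Prop :=
  ∀ φ : groupLang.Sentence, IsAE φ → (G ⊨ φ ↔ G' ⊨ φ)

/-- Two groups are ∃-equivalent if they satisfy the same existential sentences. -/
def ExistentiallyEquivalent (G : Type*) (G' : Type*) [Group G] [Group G'] : Prop :=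
  ∀ φ : groupLang.Sentence, IsExistentialQF φ → (G ⊨ φ ↔ G' ⊨ φ)

/-- An endomorphism is rigid-testing: `G` is rigid if every endomorphism
equivalent to the identity is an automorphism. -/
def Rigid (G : Type*) [Group G] : Prop :=
  ∀ φ : G →* G, HomEquiv φ (MonoidHom.id G) → Function.Bijective φ

/-- `Out G` is finite, expressed as: the inner automorphisms form a finite index
subgroup of `Aut G`. -/
def OutFinite (G : Type*) [Group G] : Prop :=
  (MulAut.conj : G →* MulAut G).range.FiniteIndex

/-- Iterated composition of an endomorphism. -/
def homPow {G : Type*} [Group G] (φ : G →* G) : ℕ → (G →* G)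
  | 0 => MonoidHom.id G
  | n + 1 => φ.comp (homPow φ n)

/-- An endomorphism `φ` of `G` is class-permuting if some positive power of `φ`
is equivalent to the identity of `G`. -/
def ClassPermuting {G : Type*} [Group G] (φ : G →* G) : Prop :=
  ∃ n : ℕ, 1 ≤ n ∧ HomEquiv (homPow φ n) (MonoidHom.id G)

/-- A maximal finite subgroup: a finite subgroup maximal with respect to
inclusion among finite subgroups. -/
def MaximalFiniteSubgroup {G : Type*} [Group G] (A : Subgroup G) : Prop :=
  (A : Set G).Finite ∧ ∀ B : Subgroup G, (B : Set G).Finite → A ≤ B → A = B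

/-- Two subgroups are conjugate. -/
def SubgroupConj {G : Type*} [Group G] (A B : Subgroup G) : Prop :=
  ∃ g : G, B = A.map (MulAut.conj g).toMonoidHom

/-- A group is strongly co-Hopfian if there is a finite subset `F` of
`G \ {1}` such that every endomorphism whose kernel misses `F` is an
automorphism. -/
def StronglyCoHopfian (G : Type*) [Group G] : Prop :=
  ∃ F : Finset G, (1 : G) ∉ F ∧
    ∀ φ : G →* G, (∀ f ∈ F, φ f ≠ 1) → Function.Bijective φ

/-- A group is finitely presented. -/
def GroupFinitelyPresented (G : Type*) [Group G] : Prop :=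
  ∃ (n : ℕ) (rels : Finset (FreeGroup (Fin n))),
    Nonempty (PresentedGroup (rels : Set (FreeGroup (Fin n))) ≃* G)

/-!
By Nielsen–Schreier and passing to the core, `G` contains a normal free subgroup `F` of finite
index. The translates of the two ends `f ^ ±∞` of the nontrivial `f ∈ F` can be separated by almost
invariant subsets of `G` with bounded boundary; among these, the optimally nested minimal cuts form
a `G`-invariant tree with finite edge stabilizers (Dunwoody).

An edge of the tree whose stabilizer has infinite centralizer could be twisted by the powers of an
element of this centralizer. The twists are congruent to the identity modulo a characteristic
subgroup of `F`, hence injective, hence automorphisms since `G` is co-Hopfian, and they would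
represent infinitely many outer automorphisms. So all edge stabilizers have finite centralizers.

If `G` is not strongly co-Hopfian, the non-injective endomorphisms are discriminating: every finite
set of nontrivial elements is disjoint from the kernel of one of them. Pigeonhole arguments yield a
discriminating semigroup of such endomorphisms which all preserve a finite subgroup `P` with finite
centralizer. Since such a subgroup is contained in only finitely many conjugates of a given finite
subgroup, moving along the tree shows that each conjugate of `P`, and then each element of `G`, has
only finitely many images under the semigroup. An idempotent argument now gives an element of the
semigroup which fixes all generators, although it is not injective.
-/

open Set
open scoped Pointwise

/-! ### Minimal cuts separating ultrafilters -/

section Cuts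

variable {X : Type*} {Γ : SimpleGraph X} {A B C D : Set X}
  {p q : Ultrafilter X × Ultrafilter X} {Q : Set (Ultrafilter X × Ultrafilter X)}

/-- The edge boundary of a vertex set `A`, encoded as the set of edges oriented out of `A`. -/
def edgeBoundary (Γ : SimpleGraph X) (A : Set X) : Set (X × X) :=
  {e | Γ.Adj e.1 e.2 ∧ e.1 ∈ A ∧ e.2 ∉ A}

/-- The weight of a cut: the size of its edge boundary, with junk value `0` if that is infinite. -/
noncomputable def cutWeight (Γ : SimpleGraph X) (A : Set X) : ℕ := (edgeBoundary Γ A).ncard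

theorem edgeBoundary_compl (Γ : SimpleGraph X) (A : Set X) :
    edgeBoundary Γ Aᶜ = Prod.swap '' edgeBoundary Γ A := by
  ext ⟨x, y⟩
  simp only [edgeBoundary, image_swap_eq_preimage_swap, mem_preimage, mem_ofPred_eq, mem_compl_iff,
    not_not, Prod.fst_swap, Prod.snd_swap, Γ.adj_comm x y, and_comm]

theorem finite_edgeBoundary_compl (h : (edgeBoundary Γ A).Finite) :
    (edgeBoundary Γ Aᶜ).Finite := by
  rw [edgeBoundary_compl]
  exact h.image _

theorem cutWeight_compl (Γ : SimpleGraph X) (A : Set X) : cutWeight Γ Aᶜ = cutWeight Γ A := by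
  rw [cutWeight, cutWeight, edgeBoundary_compl, ncard_image_of_injective _ Prod.swap_injective]

theorem edgeBoundary_inter_union_subset (Γ : SimpleGraph X) (A B : Set X) :
    edgeBoundary Γ (A ∩ B) ∪ edgeBoundary Γ (A ∪ B) ⊆ edgeBoundary Γ A ∪ edgeBoundary Γ B := by
  rintro ⟨x, y⟩
  simp only [edgeBoundary, mem_union, mem_ofPred_eq, mem_inter_iff]
  tauto

theorem finite_edgeBoundary_inter (hA : (edgeBoundary Γ A).Finite)
    (hB : (edgeBoundary Γ B).Finite) : (edgeBoundary Γ (A ∩ B)).Finite :=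
  (hA.union hB).subset (subset_union_left.trans (edgeBoundary_inter_union_subset Γ A B))

theorem cutWeight_inter_add_cutWeight_union_le (hA : (edgeBoundary Γ A).Finite)
    (hB : (edgeBoundary Γ B).Finite) :
    cutWeight Γ (A ∩ B) + cutWeight Γ (A ∪ B) ≤ cutWeight Γ A + cutWeight Γ B := by
  have hunion := edgeBoundary_inter_union_subset Γ A B
  have hinter : edgeBoundary Γ (A ∩ B) ∩ edgeBoundary Γ (A ∪ B) ⊆
      edgeBoundary Γ A ∩ edgeBoundary Γ B := by
    rintro ⟨x, y⟩
    simp only [edgeBoundary, mem_union, mem_ofPred_eq, mem_inter_iff]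
    tauto
  have hfin := (hA.union hB).subset hunion
  unfold cutWeight
  rw [← ncard_union_add_ncard_inter _ _ (hfin.subset subset_union_left)
    (hfin.subset subset_union_right), ← ncard_union_add_ncard_inter _ _ hA hB]
  exact Nat.add_le_add (ncard_le_ncard hunion (hA.union hB))
    (ncard_le_ncard hinter (hA.inter_of_left _))

theorem exists_adj_of_preconnected_induce (h : (Γ.induce A).Preconnected) {x y : X}
    (hxA : x ∈ A) (hxB : x ∈ B) (hyA : y ∈ A) (hyB : y ∉ B) :
    ∃ u ∈ A, ∃ v ∈ A, Γ.Adj u v ∧ u ∈ B ∧ v ∉ B := by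
  obtain ⟨w⟩ := h ⟨x, hxA⟩ ⟨y, hyA⟩
  obtain ⟨d, -, hd, hd'⟩ := w.exists_boundary_dart (Subtype.val ⁻¹' B) hxB hyB
  exact ⟨d.fst, d.fst.2, d.snd, d.snd.2, d.adj, hd, hd'⟩

theorem edgeBoundary_nonempty (hΓ : Γ.Preconnected) (hA : A.Nonempty) (hA' : Aᶜ.Nonempty) :
    (edgeBoundary Γ A).Nonempty := by
  obtain ⟨⟨x, hx⟩, ⟨y, hy⟩⟩ := hA, hA'
  obtain ⟨w⟩ := hΓ x y
  obtain ⟨d, -, hd, hd'⟩ := w.exists_boundary_dart A hx hy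
  exact ⟨(d.fst, d.snd), d.adj, hd, hd'⟩

theorem exists_subset_not_adj_of_not_preconnected_induce (h : ¬ (Γ.induce A).Preconnected) :
    ∃ B ⊆ A, B.Nonempty ∧ (A \ B).Nonempty ∧ ∀ u ∈ B, ∀ v ∈ A \ B, ¬ Γ.Adj u v := by
  simp only [SimpleGraph.Preconnected, not_forall] at h
  obtain ⟨x, y, hxy⟩ := h
  refine ⟨Subtype.val '' {z | (Γ.induce A).Reachable x z}, ?_, ⟨x, x, .refl _, rfl⟩,
    ⟨y, y.2, ?_⟩, ?_⟩
  · rintro _ ⟨z, -, rfl⟩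
    exact z.2
  · rintro ⟨z, hz, hzy⟩
    exact hxy (Subtype.ext hzy ▸ hz)
  · rintro _ ⟨u, hu, rfl⟩ v ⟨hvA, hv⟩ huv
    have hadj : (Γ.induce A).Adj u ⟨v, hvA⟩ := huv
    exact hv ⟨⟨v, hvA⟩, hu.trans hadj.reachable, rfl⟩

/-- A vertex set separates a pair of ultrafilters (thought of as a pair of ends of the graph) if it
belongs to exactly one of them. -/
def Separates (A : Set X) (p : Ultrafilter X × Ultrafilter X) : Prop := ¬ (A ∈ p.1 ↔ A ∈ p.2)

theorem separates_compl : Separates Aᶜ p ↔ Separates A p := by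
  simp only [Separates, Ultrafilter.compl_mem_iff_notMem]
  tauto

theorem Separates.inter_of_mem (h : Separates A p) (h₁ : B ∈ p.1) (h₂ : B ∈ p.2) :
    Separates (A ∩ B) p := by
  have hmem {u : Ultrafilter X} (hu : B ∈ u) : A ∩ B ∈ u ↔ A ∈ u :=
    Filter.inter_mem_iff.trans (and_iff_left hu)
  rwa [Separates, hmem h₁, hmem h₂]

theorem Separates.or_sdiff (h : Separates A p) (hBA : B ⊆ A) :
    Separates B p ∨ Separates (A \ B) p := by
  have hmem (u : Ultrafilter X) : A ∈ u ↔ B ∈ u ∨ A \ B ∈ u := by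
    rw [← Ultrafilter.union_mem_iff, union_sdiff_cancel hBA]
  have hdisj (u : Ultrafilter X) : ¬ (B ∈ u ∧ A \ B ∈ u) := fun hu ↦
    u.empty_notMem <| inter_sdiff_self B A ▸ Filter.inter_mem hu.1 hu.2
  have h₁ := hdisj p.1
  have h₂ := hdisj p.2
  simp only [Separates, hmem] at h ⊢
  tauto

/-- A cut with finite boundary and of minimal weight among those separating the pair `p`. -/
def IsMinCut (Γ : SimpleGraph X) (p : Ultrafilter X × Ultrafilter X) (A : Set X) : Prop :=
  MinimalFor (fun B ↦ (edgeBoundary Γ B).Finite ∧ Separates B p) (cutWeight Γ) A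

namespace IsMinCut

theorem finite_edgeBoundary (h : IsMinCut Γ p A) : (edgeBoundary Γ A).Finite := h.prop.1

theorem separates (h : IsMinCut Γ p A) : Separates A p := h.prop.2

theorem cutWeight_le (h : IsMinCut Γ p A) (hB : (edgeBoundary Γ B).Finite) (hBp : Separates B p) :
    cutWeight Γ A ≤ cutWeight Γ B :=
  not_lt.1 (h.not_lt ⟨hB, hBp⟩)

theorem of_cutWeight_le (h : IsMinCut Γ p A) (hB : (edgeBoundary Γ B).Finite)
    (hBp : Separates B p) (hle : cutWeight Γ B ≤ cutWeight Γ A) : IsMinCut Γ p B :=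
  ⟨⟨hB, hBp⟩, fun _ hC _ ↦ hle.trans (h.cutWeight_le hC.1 hC.2)⟩

theorem compl (h : IsMinCut Γ p A) : IsMinCut Γ p Aᶜ :=
  h.of_cutWeight_le (finite_edgeBoundary_compl h.finite_edgeBoundary)
    (separates_compl.2 h.separates) (cutWeight_compl Γ A).le

/-- If `A` were the disjoint union of `B` and `A \ B` without edges between them, one of the two
would be a lighter cut separating the same pair. -/
theorem preconnected_induce (hΓ : Γ.Preconnected) (h : IsMinCut Γ p A) :
    (Γ.induce A).Preconnected := by
  by_contra hA
  obtain ⟨B, hBA, hB, hAB, hadj⟩ := exists_subset_not_adj_of_not_preconnected_induce hA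
  have hunion : edgeBoundary Γ B ∪ edgeBoundary Γ (A \ B) = edgeBoundary Γ A := by
    ext ⟨x, y⟩
    have := hadj x
    have := hadj y
    have := @hBA x
    have := @hBA y
    have := Γ.adj_comm x y
    simp only [edgeBoundary, mem_union, mem_ofPred_eq, mem_sdiff] at *
    grind
  have hdisj : Disjoint (edgeBoundary Γ B) (edgeBoundary Γ (A \ B)) :=
    disjoint_left.2 fun _ he he' ↦ he'.2.1.2 he.2.1
  have hfin := h.finite_edgeBoundary
  have hB_fin := hfin.subset (hunion ▸ subset_union_left)
  have hAB_fin := hfin.subset (hunion ▸ subset_union_right)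
  have hadd : cutWeight Γ B + cutWeight Γ (A \ B) = cutWeight Γ A := by
    simp only [cutWeight, ← hunion, ncard_union_eq hdisj hB_fin hAB_fin]
  have hB_pos : 0 < cutWeight Γ B := (ncard_pos hB_fin).2 <|
    edgeBoundary_nonempty hΓ hB (hAB.mono fun _ hx ↦ hx.2)
  have hAB_pos : 0 < cutWeight Γ (A \ B) := (ncard_pos hAB_fin).2 <|
    edgeBoundary_nonempty hΓ hAB (hB.mono fun _ hx hx' ↦ hx'.2 hx)
  rcases h.separates.or_sdiff hBA with hsep | hsep
  · have := h.cutWeight_le hB_fin hsep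
    lia
  · have := h.cutWeight_le hAB_fin hsep
    lia

end IsMinCut

/-- The limit of a family of sets along an ultrafilter. -/
def ultralimit {ι : Type*} (U : Ultrafilter ι) (A : ι → Set X) : Set X :=
  {x | ∀ᶠ i in (U : Filter ι), x ∈ A i}

section Ultralimit

variable {ι : Type*} {U : Ultrafilter ι} {F : ι → Set X}

theorem eventually_mem_iff_mem_ultralimit (U : Ultrafilter ι) (F : ι → Set X) (x : X) :
    ∀ᶠ i in (U : Filter ι), (x ∈ F i ↔ x ∈ ultralimit U F) := by
  by_cases hx : x ∈ ultralimit U F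
  · filter_upwards [show ∀ᶠ i in (U : Filter ι), x ∈ F i from hx] with i hi
    simp only [hi, hx]
  · filter_upwards [Ultrafilter.eventually_not.2 hx] with i hi
    simp only [hi, hx]

theorem eventually_forall_mem_iff_mem_ultralimit (U : Ultrafilter ι) (F : ι → Set X)
    {T : Set (X × X)} (hT : T.Finite) :
    ∀ᶠ i in (U : Filter ι), ∀ e ∈ T,
      (e.1 ∈ F i ↔ e.1 ∈ ultralimit U F) ∧ (e.2 ∈ F i ↔ e.2 ∈ ultralimit U F) :=
  (Filter.eventually_all_finite hT).2 fun e _ ↦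
    (eventually_mem_iff_mem_ultralimit U F e.1).and (eventually_mem_iff_mem_ultralimit U F e.2)

theorem finite_edgeBoundary_ultralimit {k : ℕ} (hF : ∀ i, (edgeBoundary Γ (F i)).Finite)
    (hk : ∀ i, cutWeight Γ (F i) ≤ k) : (edgeBoundary Γ (ultralimit U F)).Finite := by
  by_contra hinf
  obtain ⟨T, hT, hcard⟩ := Set.Infinite.exists_subset_card_eq hinf (k + 1)
  obtain ⟨i, hi⟩ :=
    (eventually_forall_mem_iff_mem_ultralimit U F T.finite_toSet).exists
  have hsub : (T : Set (X × X)) ⊆ edgeBoundary Γ (F i) := fun e he ↦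
    ⟨(hT he).1, (hi e he).1.2 (hT he).2.1, fun h ↦ (hT he).2.2 ((hi e he).2.1 h)⟩
  have hle := ncard_le_ncard hsub (hF i)
  rw [ncard_coe_finset, hcard] at hle
  exact absurd (hle.trans (hk i)) (Nat.not_succ_le_self k)

theorem eventually_eq_ultralimit {u v : X} {k : ℕ} (hF : ∀ i, (edgeBoundary Γ (F i)).Finite)
    (hk : ∀ i, cutWeight Γ (F i) ≤ k) (hconn : ∀ i, (Γ.induce (F i)).Preconnected)
    (hconn' : ∀ i, (Γ.induce (F i)ᶜ).Preconnected) (hu : ∀ i, u ∈ F i) (hv : ∀ i, v ∉ F i) :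
    ∀ᶠ i in (U : Filter ι), F i = ultralimit U F := by
  have hfin : (edgeBoundary Γ (ultralimit U F)).Finite := finite_edgeBoundary_ultralimit hF hk
  have hua : u ∈ ultralimit U F := Filter.Eventually.of_forall hu
  have hva : v ∉ ultralimit U F := fun h ↦ by
    obtain ⟨i, hi⟩ := Filter.Eventually.exists h
    exact hv i hi
  filter_upwards [eventually_forall_mem_iff_mem_ultralimit U F hfin] with i hi
  refine subset_antisymm (fun y hy ↦ ?_) (fun y hy ↦ ?_) <;> by_contra hy'
  · obtain ⟨s, -, t, ht, hst, hs, ht'⟩ :=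
      exists_adj_of_preconnected_induce (hconn i) (hu i) hua hy hy'
    exact ht' ((hi (s, t) ⟨hst, hs, ht'⟩).2.1 ht)
  · obtain ⟨s, hs, t, -, hst, hs', ht⟩ :=
      exists_adj_of_preconnected_induce (hconn' i) hy' hy (hv i) hva
    exact hs ((hi (s, t) ⟨hst, hs', ht⟩).1.2 hs')

end Ultralimit

/-- Compactness: a non-principal ultrafilter on an infinite set of such cuts would concentrate on
its own limit. -/
theorem finite_setOf_connected_cuts (Γ : SimpleGraph X) (u v : X) (k : ℕ) :
    {A : Set X | (edgeBoundary Γ A).Finite ∧ cutWeight Γ A ≤ k ∧ (Γ.induce A).Preconnected ∧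
      (Γ.induce Aᶜ).Preconnected ∧ u ∈ A ∧ v ∉ A}.Finite := by
  by_contra hinf
  set S : Set (Set X) := {A | _}
  have : Infinite S := Set.Infinite.to_subtype hinf
  let U : Ultrafilter S := Filter.hyperfilter S
  have heq : ∀ᶠ A : S in U, (A : Set X) = ultralimit U Subtype.val :=
    eventually_eq_ultralimit (fun A ↦ A.2.1) (fun A ↦ A.2.2.1) (fun A ↦ A.2.2.2.1)
      (fun A ↦ A.2.2.2.2.1) (fun A ↦ A.2.2.2.2.2.1) (fun A ↦ A.2.2.2.2.2.2)
  obtain ⟨A₀, hA₀⟩ := heq.exists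
  refine Filter.notMem_hyperfilter_of_finite (finite_singleton A₀) ?_
  filter_upwards [heq] with A hA
  exact Subtype.ext (hA.trans hA₀.symm)

/-- Two subsets of `X`, viewed as bipartitions of `X`, are nested if one of their four corners is
empty. -/
def Nested (A B : Set X) : Prop := A ⊆ B ∨ A ⊆ Bᶜ ∨ Aᶜ ⊆ B ∨ Aᶜ ⊆ Bᶜ

theorem Nested.symm (h : Nested A B) : Nested B A := by
  rcases h with h | h | h | h
  · exact .inr (.inr (.inr (compl_subset_compl.2 h)))
  · exact .inr (.inl (subset_compl_comm.1 h))
  · exact .inr (.inr (.inl (compl_subset_comm.1 h)))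
  · exact .inl (compl_subset_compl.1 h)

theorem nested_compl_right : Nested A Bᶜ ↔ Nested A B := by
  simp only [Nested, _root_.compl_compl]
  tauto

theorem nested_compl_left : Nested Aᶜ B ↔ Nested A B := by
  simp only [Nested, _root_.compl_compl]
  tauto

theorem Nested.inter (hA : Nested A C) (hB : Nested B C) (hAB : ¬ Nested A B) :
    Nested (A ∩ B) C := by
  rcases hA with h | h | hA
  · exact .inl (inter_subset_left.trans h)
  · exact .inr (.inl (inter_subset_left.trans h))
  rcases hB with h | h | hB
  · exact .inl (inter_subset_right.trans h)
  · exact .inr (.inl (inter_subset_right.trans h))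
  rcases hA with hA | hA <;> rcases hB with hB | hB
  · exact .inr (.inr (.inl (compl_inter A B ▸ union_subset hA hB)))
  · exact absurd (.inr (.inr (.inl (hA.trans (compl_subset_compl.1 hB))))) hAB
  · exact absurd (.inr (.inr (.inl (hA.trans (compl_subset_comm.1 hB))))) hAB
  · exact .inr (.inr (.inr (compl_inter A B ▸ union_subset hA hB)))

theorem Nested.inter_or_compl_inter_compl (B : Set X) (h : Nested A C) :
    Nested (A ∩ B) C ∨ Nested (Aᶜ ∩ Bᶜ) C := by
  rcases h with h | h | h | h
  · exact .inl (.inl (inter_subset_left.trans h))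
  · exact .inl (.inr (.inl (inter_subset_left.trans h)))
  · exact .inr (.inl (inter_subset_left.trans h))
  · exact .inr (.inr (.inl (inter_subset_left.trans h)))

/-- The minimal cuts, for pairs in `Q`, that are not nested with `A`. -/
def crossingCuts (Γ : SimpleGraph X) (Q : Set (Ultrafilter X × Ultrafilter X)) (A : Set X) :
    Set (Set X) :=
  {D | (∃ p ∈ Q, IsMinCut Γ p D) ∧ ¬ Nested A D}

theorem crossingCuts_compl (Γ : SimpleGraph X) (Q : Set (Ultrafilter X × Ultrafilter X))
    (A : Set X) : crossingCuts Γ Q Aᶜ = crossingCuts Γ Q A := by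
  simp only [crossingCuts, nested_compl_left]

/-- A connected cut crossing `A` contains an endpoint of an edge of the boundary of `A`, and so does
its complement. -/
theorem finite_crossingCuts (hΓ : Γ.Preconnected) {k : ℕ}
    (hk : ∀ p ∈ Q, ∀ D, IsMinCut Γ p D → cutWeight Γ D ≤ k) (hA : (edgeBoundary Γ A).Finite) :
    (crossingCuts Γ Q A).Finite := by
  refine (hA.biUnion fun e _ ↦ hA.biUnion fun f _ ↦
    finite_setOf_connected_cuts Γ e.1 f.1 k).subset ?_
  rintro D ⟨⟨p, hp, hD⟩, hAD⟩
  have hconn := hD.preconnected_induce hΓ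
  have hconn' := hD.compl.preconnected_induce hΓ
  simp only [Nested, not_or, not_subset, mem_compl_iff, not_not] at hAD
  obtain ⟨⟨x₁, hx₁, hx₁'⟩, ⟨x₂, hx₂, hx₂'⟩, ⟨x₃, hx₃, hx₃'⟩, ⟨x₄, hx₄, hx₄'⟩⟩ := hAD
  obtain ⟨s, hs, t, -, hst, hsA, htA⟩ :=
    exists_adj_of_preconnected_induce hconn hx₂' hx₂ hx₄' hx₄
  obtain ⟨s', hs', t', -, hst', hsA', htA'⟩ :=
    exists_adj_of_preconnected_induce hconn' hx₁' hx₁ hx₃' hx₃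
  simp only [mem_iUnion]
  exact ⟨(s, t), ⟨hst, hsA, htA⟩, (s', t'), ⟨hst', hsA', htA'⟩, hD.finite_edgeBoundary,
    hk p hp D hD, hconn, hconn', hs, hs'⟩

theorem ncard_crossingCuts_corners_lt (hΓ : Γ.Preconnected) {k : ℕ}
    (hk : ∀ p ∈ Q, ∀ D, IsMinCut Γ p D → cutWeight Γ D ≤ k) (hp : p ∈ Q) (hC : IsMinCut Γ p C)
    (hD : (edgeBoundary Γ D).Finite) (hCD : ¬ Nested C D) :
    (crossingCuts Γ Q (C ∩ D)).ncard + (crossingCuts Γ Q (Cᶜ ∩ Dᶜ)).ncard <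
      (crossingCuts Γ Q C).ncard + (crossingCuts Γ Q D).ncard := by
  have hC_fin := hC.finite_edgeBoundary
  have hfin {A : Set X} (hA : (edgeBoundary Γ A).Finite) := finite_crossingCuts (Q := Q) hΓ hk hA
  have hunion : crossingCuts Γ Q (C ∩ D) ∪ crossingCuts Γ Q (Cᶜ ∩ Dᶜ) ⊆
      crossingCuts Γ Q C ∪ crossingCuts Γ Q D := by
    rintro H (⟨hH, hcross⟩ | ⟨hH, hcross⟩) <;> by_contra hnot <;>
      simp only [crossingCuts, mem_union, mem_ofPred_eq, hH, true_and, not_or, not_not] at hnot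
    · exact hcross (hnot.1.inter hnot.2 hCD)
    · exact hcross ((nested_compl_left.2 hnot.1).inter (nested_compl_left.2 hnot.2)
        (by rwa [nested_compl_left, nested_compl_right]))
  have hssub : crossingCuts Γ Q (C ∩ D) ∪ crossingCuts Γ Q (Cᶜ ∩ Dᶜ) ⊂
      crossingCuts Γ Q C ∪ crossingCuts Γ Q D := by
    refine (ssubset_iff_of_subset hunion).2
      ⟨C, .inr ⟨⟨p, hp, hC⟩, fun h ↦ hCD h.symm⟩, ?_⟩
    rintro (h | h)
    · exact h.2 (.inl inter_subset_left)
    · exact h.2 (.inr (.inl inter_subset_left))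
  have hinter : crossingCuts Γ Q (C ∩ D) ∩ crossingCuts Γ Q (Cᶜ ∩ Dᶜ) ⊆
      crossingCuts Γ Q C ∩ crossingCuts Γ Q D := by
    rintro H ⟨h, h'⟩
    refine ⟨⟨h.1, fun hCH ↦ ?_⟩, ⟨h.1, fun hDH ↦ ?_⟩⟩
    · exact (hCH.inter_or_compl_inter_compl D).elim h.2 h'.2
    · have := hDH.inter_or_compl_inter_compl C
      rw [inter_comm, inter_comm Dᶜ] at this
      exact this.elim h.2 h'.2
  have hC_fin' := finite_edgeBoundary_compl hC_fin
  have hD' := finite_edgeBoundary_compl hD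
  rw [← ncard_union_add_ncard_inter _ _ (hfin (finite_edgeBoundary_inter hC_fin hD))
    (hfin (finite_edgeBoundary_inter hC_fin' hD')),
    ← ncard_union_add_ncard_inter _ _ (hfin hC_fin) (hfin hD)]
  exact Nat.add_lt_add_of_lt_of_le (ncard_lt_ncard hssub ((hfin hC_fin).union (hfin hD)))
    (ncard_le_ncard hinter ((hfin hC_fin).inter_of_left _))

/-- An optimal cut for `p` (Dunwoody): a minimal cut which crosses as few minimal cuts as
possible. -/
def IsOptimalCut (Γ : SimpleGraph X) (Q : Set (Ultrafilter X × Ultrafilter X))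
    (p : Ultrafilter X × Ultrafilter X) (A : Set X) : Prop :=
  MinimalFor (IsMinCut Γ p) (fun B ↦ (crossingCuts Γ Q B).ncard) A

theorem exists_isOptimalCut (Q : Set (Ultrafilter X × Ultrafilter X))
    (h : ∃ A, (edgeBoundary Γ A).Finite ∧ Separates A p) : ∃ A, IsOptimalCut Γ Q p A :=
  exists_minimalFor_of_wellFoundedLT _ _ (exists_minimalFor_of_wellFoundedLT _ _ h)

namespace IsOptimalCut

theorem isMinCut (h : IsOptimalCut Γ Q p A) : IsMinCut Γ p A := h.prop

theorem ncard_le (h : IsOptimalCut Γ Q p A) (hB : IsMinCut Γ p B) :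
    (crossingCuts Γ Q A).ncard ≤ (crossingCuts Γ Q B).ncard :=
  not_lt.1 (h.not_lt hB)

theorem of_ncard_le (h : IsOptimalCut Γ Q p A) (hB : IsMinCut Γ p B)
    (hle : (crossingCuts Γ Q B).ncard ≤ (crossingCuts Γ Q A).ncard) : IsOptimalCut Γ Q p B :=
  ⟨hB, fun _ hC _ ↦ hle.trans (h.ncard_le hC)⟩

theorem of_eq_or_eq_compl (h : IsOptimalCut Γ Q p A) (hB : B = A ∨ B = Aᶜ) :
    IsOptimalCut Γ Q p B := by
  obtain rfl | rfl := hB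
  · exact h
  · exact h.of_ncard_le h.isMinCut.compl (crossingCuts_compl Γ Q A ▸ le_rfl)

/-- Both opposite corners are minimal by submodularity of the weight, and together they cross fewer
minimal cuts than `C` and `D`. -/
theorem nested_of_separates_corners (hΓ : Γ.Preconnected) {k : ℕ}
    (hk : ∀ p ∈ Q, ∀ D, IsMinCut Γ p D → cutWeight Γ D ≤ k) (hp : p ∈ Q)
    (hC : IsOptimalCut Γ Q p C) (hD : IsOptimalCut Γ Q q D) (h : Separates (C ∩ D) p)
    (h' : Separates (Cᶜ ∩ Dᶜ) q) : Nested C D := by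
  by_contra hCD
  have hC_fin := hC.isMinCut.finite_edgeBoundary
  have hD_fin := hD.isMinCut.finite_edgeBoundary
  have hfin := finite_edgeBoundary_inter hC_fin hD_fin
  have hfin' := finite_edgeBoundary_inter (finite_edgeBoundary_compl hC_fin)
    (finite_edgeBoundary_compl hD_fin)
  have hsubmod := cutWeight_inter_add_cutWeight_union_le hC_fin hD_fin
  rw [← cutWeight_compl Γ (C ∪ D), compl_union] at hsubmod
  have hle := hC.isMinCut.cutWeight_le hfin h
  have hle' := hD.isMinCut.cutWeight_le hfin' h'
  have hmin := hC.isMinCut.of_cutWeight_le hfin h (by lia)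
  have hmin' := hD.isMinCut.of_cutWeight_le hfin' h' (by lia)
  have hlt := ncard_crossingCuts_corners_lt hΓ hk hp hC.isMinCut hD_fin hCD
  have := hC.ncard_le hmin
  have := hD.ncard_le hmin'
  lia

theorem swap (hC : IsOptimalCut Γ Q p C) (hD : IsOptimalCut Γ Q q D) (hCq : Separates C q)
    (hDp : Separates D p) : IsOptimalCut Γ Q p D := by
  have hC_fin := hC.isMinCut.finite_edgeBoundary
  have hD_fin := hD.isMinCut.finite_edgeBoundary
  have hmin := hC.isMinCut.of_cutWeight_le hD_fin hDp (hD.isMinCut.cutWeight_le hC_fin hCq)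
  have hmin' := hD.isMinCut.of_cutWeight_le hC_fin hCq (hC.isMinCut.cutWeight_le hD_fin hDp)
  exact hC.of_ncard_le hmin (hD.ncard_le hmin')

end IsOptimalCut

theorem exists_mem_of_not_separates (h : ¬ Separates A p) :
    ∃ B, (B = A ∨ B = Aᶜ) ∧ B ∈ p.1 ∧ B ∈ p.2 := by
  rw [Separates, not_not] at h
  by_cases hA : A ∈ p.1
  · exact ⟨A, .inl rfl, hA, h.1 hA⟩
  · exact ⟨Aᶜ, .inr rfl, Ultrafilter.compl_mem_iff_notMem.2 hA,
      Ultrafilter.compl_mem_iff_notMem.2 (mt h.2 hA)⟩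

theorem exists_separates_inter_and_compl_inter_compl (hC : Separates C p) (hD : Separates D p) :
    ∃ B, (B = D ∨ B = Dᶜ) ∧ Separates (C ∩ B) p ∧ Separates (Cᶜ ∩ Bᶜ) p := by
  have hinter (A B : Set X) (u : Ultrafilter X) : A ∩ B ∈ u ↔ A ∈ u ∧ B ∈ u :=
    Filter.inter_mem_iff
  by_cases h : C ∈ p.1 ↔ D ∈ p.1
  · refine ⟨D, .inl rfl, ?_⟩
    simp only [Separates, hinter, Ultrafilter.compl_mem_iff_notMem] at *
    tauto
  · refine ⟨Dᶜ, .inr rfl, ?_⟩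
    simp only [Separates, hinter, Ultrafilter.compl_mem_iff_notMem] at *
    tauto

/-- The choice of a pair of opposite corners in the proof that optimal cuts are nested; in the
second case the roles of `p` and `q` can be exchanged. -/
theorem exists_separates_opposite_corners (hC : Separates C p) (hD : Separates D q) :
    ∃ C' D', (C' = C ∨ C' = Cᶜ) ∧ (D' = D ∨ D' = Dᶜ) ∧ Separates (C' ∩ D') p ∧
      (Separates (C'ᶜ ∩ D'ᶜ) q ∨
        Separates C q ∧ Separates D p ∧ Separates (C'ᶜ ∩ D'ᶜ) p) := by
  have hcompl {A B : Set X} (h : B = A ∨ B = Aᶜ) : Bᶜ = A ∨ Bᶜ = Aᶜ :=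
    h.elim (fun h ↦ .inr (h ▸ rfl)) fun h ↦ .inl (h ▸ _root_.compl_compl A)
  have hsep {A B : Set X} {r} (h : B = A ∨ B = Aᶜ) (hA : Separates A r) : Separates B r :=
    h.elim (fun h ↦ h ▸ hA) fun h ↦ h ▸ separates_compl.2 hA
  by_cases hDp : Separates D p <;> by_cases hCq : Separates C q
  · obtain ⟨B, hB, h, h'⟩ := exists_separates_inter_and_compl_inter_compl hC hDp
    exact ⟨C, B, .inl rfl, hB, h, .inr ⟨hCq, hDp, h'⟩⟩
  · obtain ⟨A, hA, h₁, h₂⟩ := exists_mem_of_not_separates hCq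
    obtain ⟨B, hB, h, -⟩ :=
      exists_separates_inter_and_compl_inter_compl (hsep (hcompl hA) hC) hDp
    refine ⟨Aᶜ, B, hcompl hA, hB, h, .inl ?_⟩
    rw [_root_.compl_compl, inter_comm]
    exact (separates_compl.2 (hsep hB hD)).inter_of_mem h₁ h₂
  · obtain ⟨B, hB, h₁, h₂⟩ := exists_mem_of_not_separates hDp
    obtain ⟨A, hA, h, -⟩ :=
      exists_separates_inter_and_compl_inter_compl (hsep (hcompl hB) hD) hCq
    refine ⟨Aᶜ, B, hcompl hA, hB, ?_, .inl ?_⟩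
    · exact (hsep (hcompl hA) hC).inter_of_mem h₁ h₂
    · rwa [_root_.compl_compl, inter_comm]
  · obtain ⟨A, hA, hA₁, hA₂⟩ := exists_mem_of_not_separates hCq
    obtain ⟨B, hB, hB₁, hB₂⟩ := exists_mem_of_not_separates hDp
    refine ⟨Aᶜ, B, hcompl hA, hB, (hsep (hcompl hA) hC).inter_of_mem hB₁ hB₂, .inl ?_⟩
    rw [_root_.compl_compl, inter_comm]
    exact (hsep (hcompl hB) hD).inter_of_mem hA₁ hA₂

theorem IsOptimalCut.nested (hΓ : Γ.Preconnected) {k : ℕ}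
    (hk : ∀ p ∈ Q, ∀ D, IsMinCut Γ p D → cutWeight Γ D ≤ k) (hp : p ∈ Q)
    (hC : IsOptimalCut Γ Q p C) (hD : IsOptimalCut Γ Q q D) : Nested C D := by
  obtain ⟨C', D', hC', hD', hcorner, hcase⟩ :=
    exists_separates_opposite_corners hC.isMinCut.separates hD.isMinCut.separates
  have hnested : Nested C' D' := by
    have hC'p := hC.of_eq_or_eq_compl hC'
    rcases hcase with hcorner' | ⟨hCq, hDp, hcorner'⟩
    · exact nested_of_separates_corners hΓ hk hp hC'p (hD.of_eq_or_eq_compl hD') hcorner hcorner'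
    · exact nested_of_separates_corners hΓ hk hp hC'p
        ((hC.swap hD hCq hDp).of_eq_or_eq_compl hD') hcorner hcorner'
  obtain rfl | rfl := hC' <;> obtain rfl | rfl := hD' <;>
    simpa only [nested_compl_left, nested_compl_right] using hnested

end Cuts

/-! ### Almost invariant sets separating the ends of infinite cyclic subgroups -/

section AlmostInvariant

open Filter

variable {G H : Type*} [Group G] [Group H]

/-- Almost invariance under right translations. On a finitely generated group these are the sets
with finite edge boundary in a Cayley graph. -/
def AlmostInvariant (A : Set G) : Prop :=
  ∀ h, {x ∈ A | x * h ∉ A}.Finite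

theorem finite_setOf_mul_mul_notMem {A : Set G} {g h : G} (hg : {x ∈ A | x * g ∉ A}.Finite)
    (hh : {x ∈ A | x * h ∉ A}.Finite) : {x ∈ A | x * (g * h) ∉ A}.Finite := by
  refine (hg.union (hh.preimage (mul_left_injective g).injOn)).subset ?_
  rintro x ⟨hx, hxgh⟩
  by_cases hxg : x * g ∈ A
  · exact .inr ⟨hxg, by rwa [mul_assoc]⟩
  · exact .inl ⟨hx, hxg⟩

theorem almostInvariant_of_closure_eq_top {S : Set G} (hS : Subgroup.closure S = ⊤) {A : Set G}
    (hA : ∀ s ∈ S, {x ∈ A | x * s ∉ A}.Finite ∧ {x ∈ A | x * s⁻¹ ∉ A}.Finite) :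
    AlmostInvariant A := by
  suffices ∀ h, {x ∈ A | x * h ∉ A}.Finite ∧ {x ∈ A | x * h⁻¹ ∉ A}.Finite from fun h ↦ (this h).1
  intro h
  have hh : h ∈ Subgroup.closure S := hS ▸ Subgroup.mem_top h
  induction hh using Subgroup.closure_induction with
  | mem s hs => exact hA s hs
  | one => simp
  | mul g h _ _ hg hh =>
    rw [mul_inv_rev]
    exact ⟨finite_setOf_mul_mul_notMem hg.1 hh.1, finite_setOf_mul_mul_notMem hh.2 hg.2⟩
  | inv g _ hg => rwa [inv_inv, and_comm]

theorem AlmostInvariant.compl {A : Set G} (hA : AlmostInvariant A) : AlmostInvariant Aᶜ := by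
  refine fun h ↦ ((hA h⁻¹).image (· * h⁻¹)).subset ?_
  rintro x ⟨hx, hxh⟩
  exact ⟨x * h, ⟨not_not.1 hxh, by simpa using hx⟩, by simp⟩

theorem AlmostInvariant.smul {A : Set G} (hA : AlmostInvariant A) (g : G) :
    AlmostInvariant (g • A) := by
  refine fun h ↦ ((hA h).image (g * ·)).subset ?_
  rintro _ ⟨⟨x, hx, rfl⟩, hxh⟩
  refine ⟨x, ⟨hx, fun hxh' ↦ hxh ⟨x * h, hxh', by simp [mul_assoc]⟩⟩, rfl⟩

theorem AlmostInvariant.preimage {A : Set G} (hA : AlmostInvariant A) {φ : H →* G}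
    (hφ : Function.Injective φ) : AlmostInvariant (φ ⁻¹' A) := by
  intro h
  simpa only [Set.mem_preimage, map_mul, Set.preimage_ofPred_eq] using
    (hA (φ h)).preimage hφ.injOn

theorem AlmostInvariant.exists_preimage_subtype_eq {F : Subgroup G} [F.FiniteIndex] {W : Set F}
    (hW : AlmostInvariant W) : ∃ A : Set G, AlmostInvariant A ∧ F.subtype ⁻¹' A = W := by
  obtain ⟨T, hT, h1T⟩ := F.exists_isComplement_right 1
  have : Finite T := hT.finite_right
  refine ⟨{x | (hT.equiv x).1 ∈ W}, fun h ↦ ?_, ?_⟩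
  · have hmul (x : G) : (hT.equiv (x * h)).1 =
        (hT.equiv x).1 * (hT.equiv ((hT.equiv x).2 * h)).1 := by
      conv_lhs => rw [← hT.equiv_fst_mul_equiv_snd x, mul_assoc, hT.equiv_mul_left]
    refine (Set.finite_iUnion fun t : T ↦
      (hW (hT.equiv (t * h)).1).image fun f : F ↦ (f * t : G)).subset ?_
    rintro x ⟨hx, hxh⟩
    rw [Set.mem_ofPred_eq, hmul] at hxh
    exact Set.mem_iUnion.2 ⟨_, _, ⟨hx, hxh⟩, hT.equiv_fst_mul_equiv_snd x⟩
  · ext f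
    rw [Set.mem_preimage, Set.mem_ofPred_eq]
    exact iff_of_eq (congrArg W (hT.equiv_fst_eq_self_of_mem_of_one_mem h1T f.2))

theorem AlmostInvariant.mem_map_mul_right_iff {A : Set G} (hA : AlmostInvariant A)
    {p : Ultrafilter G} (hp : (p : Filter G) ≤ cofinite) (h : G) :
    A ∈ p.map (· * h) ↔ A ∈ p := by
  refine eventually_congr (hp ?_ : ∀ᶠ x in p, x * h ∈ A ↔ x ∈ A)
  refine mem_cofinite.2 (((hA h).union (hA.compl h)).subset fun x hx ↦ ?_)
  simp only [Set.mem_compl_iff, Set.mem_ofPred_eq, Set.mem_union] at hx ⊢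
  tauto

/-- A nonprincipal limit of the sequence of powers of `f`. -/
noncomputable def powerLimit (f : G) : Ultrafilter G :=
  (hyperfilter ℕ).map (f ^ ·)

/-- The two ends of the cyclic subgroup generated by `f`, represented by ultrafilters. -/
noncomputable def powerLimits (f : G) : Ultrafilter G × Ultrafilter G :=
  (powerLimit f, powerLimit f⁻¹)

theorem powerLimit_le_cofinite {f : G} (hf : ¬ IsOfFinOrder f) :
    (powerLimit f : Filter G) ≤ cofinite :=
  (injective_pow_iff_not_isOfFinOrder.2 hf).tendsto_cofinite.mono_left hyperfilter_le_cofinite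

theorem mem_powerLimit_map_iff (φ : H →* G) {f : H} {A : Set G} :
    A ∈ powerLimit (φ f) ↔ φ ⁻¹' A ∈ powerLimit f := by
  simp [powerLimit, Ultrafilter.mem_map, Set.preimage_preimage]

theorem AlmostInvariant.mem_powerLimit_conj_iff {A : Set G} (hA : AlmostInvariant A) {f : G}
    (hf : ¬ IsOfFinOrder f) (c : G) :
    A ∈ powerLimit (c * f * c⁻¹) ↔ c⁻¹ • A ∈ powerLimit f := by
  rw [← (hA.smul c⁻¹).mem_map_mul_right_iff (powerLimit_le_cofinite hf) c⁻¹]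
  simp only [powerLimit, Ultrafilter.mem_map, conj_pow]
  convert Iff.rfl using 2
  ext n
  simp [Set.mem_smul_set_iff_inv_smul_mem, mul_assoc]

theorem separates_powerLimits_map_iff (φ : H →* G) {f : H} {A : Set G} :
    Separates A (powerLimits (φ f)) ↔ Separates (φ ⁻¹' A) (powerLimits f) := by
  simp only [Separates, powerLimits, ← map_inv, mem_powerLimit_map_iff]

theorem AlmostInvariant.separates_powerLimits_conj_iff {A : Set G} (hA : AlmostInvariant A) {f : G}
    (hf : ¬ IsOfFinOrder f) (c : G) :
    Separates (c • A) (powerLimits (c * f * c⁻¹)) ↔ Separates A (powerLimits f) := by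
  have hf' : ¬ IsOfFinOrder f⁻¹ := by rwa [isOfFinOrder_inv_iff]
  have hinv : (c * f * c⁻¹)⁻¹ = c * f⁻¹ * c⁻¹ := by group
  simp only [Separates, powerLimits, hinv, (hA.smul c).mem_powerLimit_conj_iff hf,
    (hA.smul c).mem_powerLimit_conj_iff hf', inv_smul_smul]

end AlmostInvariant

section FreeGroup

variable {α : Type*} [DecidableEq α]

/-- The elements of a free group whose reduced word starts with the inverse of the letter `l`.
Reading the last letter of the inverse makes right multiplication act on the head of a list. -/
def halfTree (l : α × Bool) : Set (FreeGroup α) :=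
  {w | (w⁻¹).toWord.getLast? = some l}

theorem mem_halfTree {l : α × Bool} {w : FreeGroup α} :
    w ∈ halfTree l ↔ (w⁻¹).toWord.getLast? = some l :=
  Iff.rfl

theorem finite_setOf_mul_letter_notMem_halfTree (l x : α × Bool) :
    {w ∈ halfTree l | w * FreeGroup.mk [x] ∉ halfTree l}.Finite := by
  refine (Set.finite_singleton (FreeGroup.mk [l])⁻¹).subset ?_
  rintro w ⟨hw, hwx⟩
  have hword : ((w * FreeGroup.mk [x])⁻¹).toWord =
      FreeGroup.reduce ((x.1, !x.2) :: (w⁻¹).toWord) := by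
    conv_lhs => rw [mul_inv_rev, ← FreeGroup.mk_toWord (x := w⁻¹), FreeGroup.inv_mk,
      FreeGroup.mul_mk, FreeGroup.toWord_mk]
    rfl
  rw [mem_halfTree] at hw hwx
  rw [hword, FreeGroup.reduce.cons, FreeGroup.reduce_toWord] at hwx
  rw [Set.mem_singleton_iff, ← inv_inj, inv_inv, ← FreeGroup.mk_toWord (x := w⁻¹)]
  rcases hL : (w⁻¹).toWord with _ | ⟨a, _ | ⟨b, t⟩⟩ <;> rw [hL] at hw hwx
  · simp at hw
  · simp_all
  · dsimp only at hwx
    split_ifs at hwx <;> simp_all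

theorem almostInvariant_halfTree (l : α × Bool) : AlmostInvariant (halfTree l) := by
  refine almostInvariant_of_closure_eq_top (FreeGroup.closure_range_of α) ?_
  rintro _ ⟨x, rfl⟩
  exact ⟨finite_setOf_mul_letter_notMem_halfTree l (x, true),
    finite_setOf_mul_letter_notMem_halfTree l (x, false)⟩

theorem exists_separates_halfTree_of_isCyclicallyReduced {L : List (α × Bool)}
    (hL : FreeGroup.IsCyclicallyReduced L) (hL0 : L ≠ []) :
    ∃ l, Separates (halfTree l) (powerLimits (FreeGroup.mk L)) := by
  have hpow (n : ℕ) : (FreeGroup.mk L ^ n).toWord = (List.replicate n L).flatten := by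
    rw [FreeGroup.toWord_pow, FreeGroup.toWord_mk, hL.isReduced.reduce_eq,
      (hL.flatten_replicate n).isReduced.reduce_eq]
  have hpos : ∀ᶠ n in (Filter.hyperfilter ℕ : Filter ℕ), n ≠ 0 :=
    Filter.hyperfilter_le_cofinite (Set.finite_singleton 0).compl_mem_cofinite
  refine ⟨L.getLast hL0, ?_⟩
  have hmem : halfTree (L.getLast hL0) ∈ powerLimit (FreeGroup.mk L)⁻¹ := by
    refine Ultrafilter.mem_map.2 (hpos.mono fun n hn ↦ ?_)
    change (FreeGroup.mk L)⁻¹ ^ n ∈ halfTree _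
    rw [mem_halfTree, inv_pow, inv_inv, hpow,
      List.getLast?_flatten_replicate hn, List.getLast?_eq_some_getLast hL0]
  have hnotMem : halfTree (L.getLast hL0) ∉ powerLimit (FreeGroup.mk L) := by
    refine Ultrafilter.eventually_not.1 (Filter.eventually_map.2 (hpos.mono fun n hn hlast ↦ ?_))
    simp only [FreeGroup.toWord_inv, hpow, FreeGroup.invRev, List.getLast?_reverse, List.head?_map,
      List.head?_flatten_replicate hn, List.head?_eq_some_head hL0, Option.map_some,
      Option.some.injEq] at hlast
    have := hL.2 _ (List.getLast?_eq_some_getLast hL0) _ (List.head?_eq_some_head hL0)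
    simp [← hlast] at this
  exact fun h ↦ hnotMem (h.2 hmem)

theorem exists_conj_separates_halfTree {y : FreeGroup α} (hy : y ≠ 1) :
    ∃ c v, y = c * v * c⁻¹ ∧ ∃ l, Separates (halfTree l) (powerLimits v) := by
  let c := FreeGroup.mk (FreeGroup.reduceCyclically.conjugator y.toWord)
  have hconj : y = c * FreeGroup.mk (FreeGroup.reduceCyclically y.toWord) * c⁻¹ := by
    rw [FreeGroup.inv_mk, FreeGroup.mul_mk, FreeGroup.mul_mk,
      FreeGroup.reduceCyclically.conj_conjugator_reduceCyclically, FreeGroup.mk_toWord]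
  refine ⟨c, _, hconj, exists_separates_halfTree_of_isCyclicallyReduced
    (FreeGroup.reduceCyclically.isCyclicallyReduced FreeGroup.isReduced_toWord) fun hnil ↦ hy ?_⟩
  rw [hconj, hnil, ← FreeGroup.one_eq_mk, mul_one, mul_inv_cancel]

theorem finite_of_fg_freeGroup (α : Type*) [Group.FG (FreeGroup α)] : Finite α := by
  have : AddGroup.FG (FreeAbelianGroup α) := by
    have : Group.FG (Abelianization (FreeGroup α)) :=
      Group.fg_of_surjective (f := Abelianization.of) (QuotientGroup.mk'_surjective _)
    exact inferInstanceAs (AddGroup.FG (Additive (Abelianization (FreeGroup α))))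
  have : Module.Finite ℤ (FreeAbelianGroup α) := Module.Finite.iff_addGroup_fg.2 this
  exact Module.Finite.finite_basis
    (.ofRepr (FreeAbelianGroup.equivFinsupp α).toIntLinearEquiv : Module.Basis α ℤ _)

end FreeGroup

theorem exists_finite_separating_almostInvariant {G α : Type*} [Group G] [Finite α]
    (F : Subgroup G) [F.FiniteIndex] (e : F ≃* FreeGroup α) :
    ∃ 𝒜 : Set (Set G), 𝒜.Finite ∧ (∀ A ∈ 𝒜, AlmostInvariant A) ∧
      ∀ f ∈ F, f ≠ 1 → ∃ A ∈ 𝒜, ∃ g : G, Separates (g • A) (powerLimits f) := by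
  classical
  choose A hA hAW using fun l ↦
    ((almostInvariant_halfTree l).preimage (φ := e.toMonoidHom)
      e.injective).exists_preimage_subtype_eq
  refine ⟨Set.range A, Set.finite_range A, Set.forall_mem_range.2 hA, fun f hf hf1 ↦ ?_⟩
  obtain ⟨c, v, hcv, l, hl⟩ := exists_conj_separates_halfTree
    (y := e ⟨f, hf⟩) (by simpa using hf1)
  let ι : FreeGroup α →* G := F.subtype.comp e.symm.toMonoidHom
  have hι : Function.Injective ι := Subtype.val_injective.comp e.symm.injective
  have hfι : f = ι c * ι v * (ι c)⁻¹ := by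
    have := congrArg ι hcv
    simpa [ι] using this
  have hv : ¬ IsOfFinOrder (ι v) := by
    rw [hι.isOfFinOrder_iff]
    refine not_isOfFinOrder_of_isMulTorsionFree ?_
    rintro rfl
    simp [powerLimits, Separates] at hl
  refine ⟨_, ⟨l, rfl⟩, ι c, ?_⟩
  rw [hfι, (hA l).separates_powerLimits_conj_iff hv, separates_powerLimits_map_iff]
  convert hl
  ext w
  simpa [ι] using Set.ext_iff.1 (hAW l) (e.symm w)

/-! ### Translation of cuts and Cayley graphs -/

section Translation

variable {G X : Type*} [Group G] [MulAction G X] {Γ : SimpleGraph X}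
  {p : Ultrafilter X × Ultrafilter X} {Q : Set (Ultrafilter X × Ultrafilter X)} {A B : Set X}

/-- The translate of a pair of ultrafilters by a group element. -/
def translatePair (g : G) (p : Ultrafilter X × Ultrafilter X) : Ultrafilter X × Ultrafilter X :=
  (p.1.map (g • ·), p.2.map (g • ·))

theorem translatePair_mul (g h : G) (p : Ultrafilter X × Ultrafilter X) :
    translatePair (g * h) p = translatePair g (translatePair h p) := by
  simp only [translatePair, Ultrafilter.map_map, Function.comp_def, mul_smul]

theorem translatePair_one (p : Ultrafilter X × Ultrafilter X) :
    translatePair (1 : G) p = p := by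
  simp only [translatePair, one_smul, Ultrafilter.map_id']

theorem separates_translatePair_iff (g : G) :
    Separates A (translatePair g p) ↔ Separates (g⁻¹ • A) p := by
  simp only [Separates, translatePair, Ultrafilter.mem_map, Set.preimage_smul]

theorem separates_smul_translatePair (g : G) :
    Separates (g • A) (translatePair g p) ↔ Separates A p := by
  rw [separates_translatePair_iff, inv_smul_smul]

theorem edgeBoundary_smul (hG : ∀ (g : G) x y, Γ.Adj (g • x) (g • y) ↔ Γ.Adj x y) (g : G)
    (A : Set X) : edgeBoundary Γ (g • A) = g • edgeBoundary Γ A := by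
  ext ⟨x, y⟩
  simp only [edgeBoundary, mem_smul_set_iff_inv_smul_mem, Prod.smul_mk, mem_ofPred_eq, hG]

theorem cutWeight_smul (hG : ∀ (g : G) x y, Γ.Adj (g • x) (g • y) ↔ Γ.Adj x y) (g : G)
    (A : Set X) : cutWeight Γ (g • A) = cutWeight Γ A := by
  rw [cutWeight, edgeBoundary_smul hG, ncard_smul_set, cutWeight]

theorem IsMinCut.smul (hG : ∀ (g : G) x y, Γ.Adj (g • x) (g • y) ↔ Γ.Adj x y)
    (h : IsMinCut Γ p A) (g : G) : IsMinCut Γ (translatePair g p) (g • A) := by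
  refine ⟨⟨?_, (separates_smul_translatePair g).2 h.separates⟩, fun B hB _ ↦ ?_⟩
  · rw [edgeBoundary_smul hG]
    exact h.finite_edgeBoundary.smul_set
  · have hfin : (edgeBoundary Γ (g⁻¹ • B)).Finite := by
      rw [edgeBoundary_smul hG]
      exact hB.1.smul_set
    simp only [cutWeight_smul hG]
    rw [← cutWeight_smul hG g⁻¹ B]
    exact h.cutWeight_le hfin ((separates_translatePair_iff g).1 hB.2)

theorem nested_smul_smul (g : G) : Nested (g • A) (g • B) ↔ Nested A B := by
  simp only [Nested, ← smul_set_compl, smul_set_subset_smul_set_iff]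

theorem smul_crossingCuts_subset (hG : ∀ (g : G) x y, Γ.Adj (g • x) (g • y) ↔ Γ.Adj x y)
    (hQ : ∀ (g : G), ∀ p ∈ Q, translatePair g p ∈ Q) (g : G) (A : Set X) :
    g • crossingCuts Γ Q A ⊆ crossingCuts Γ Q (g • A) := by
  rintro _ ⟨D, ⟨⟨p, hp, hD⟩, hAD⟩, rfl⟩
  exact ⟨⟨_, hQ g p hp, hD.smul hG g⟩, mt (nested_smul_smul g).1 hAD⟩

theorem crossingCuts_smul (hG : ∀ (g : G) x y, Γ.Adj (g • x) (g • y) ↔ Γ.Adj x y)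
    (hQ : ∀ (g : G), ∀ p ∈ Q, translatePair g p ∈ Q) (g : G) (A : Set X) :
    crossingCuts Γ Q (g • A) = g • crossingCuts Γ Q A := by
  refine (smul_crossingCuts_subset hG hQ g A).antisymm' ?_
  rw [subset_smul_set_iff]
  simpa using smul_crossingCuts_subset hG hQ g⁻¹ (g • A)

theorem IsOptimalCut.smul (hG : ∀ (g : G) x y, Γ.Adj (g • x) (g • y) ↔ Γ.Adj x y)
    (hQ : ∀ (g : G), ∀ p ∈ Q, translatePair g p ∈ Q) (h : IsOptimalCut Γ Q p A) (g : G) :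
    IsOptimalCut Γ Q (translatePair g p) (g • A) := by
  refine ⟨h.isMinCut.smul hG g, fun B hB _ ↦ ?_⟩
  have hB' : IsMinCut Γ p (g⁻¹ • B) := by
    simpa only [← translatePair_mul, inv_mul_cancel, translatePair_one] using hB.smul hG g⁻¹
  simpa only [crossingCuts_smul hG hQ, ncard_smul_set] using h.ncard_le hB'

theorem finite_stabilizer_of_finite_edgeBoundary
    (hG : ∀ (g : G) x y, Γ.Adj (g • x) (g • y) ↔ Γ.Adj x y)
    (hX : ∀ x y : X, {g : G | g • x = y}.Finite) (hA : (edgeBoundary Γ A).Finite)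
    (hA' : (edgeBoundary Γ A).Nonempty) : (MulAction.stabilizer G A : Set G).Finite := by
  obtain ⟨e, he⟩ := hA'
  refine (hA.biUnion fun e' _ ↦ hX e.1 e'.1).subset fun g hg ↦ ?_
  have hge : g • e ∈ edgeBoundary Γ A := by
    rw [← MulAction.mem_stabilizer_iff.1 hg, edgeBoundary_smul hG]
    exact smul_mem_smul_set he
  exact mem_biUnion hge rfl

end Translation

section Cayley

variable {G : Type*} [Group G] {S : Set G} {A : Set G}

theorem preconnected_mulCayley (hS : Subgroup.closure S = ⊤) :
    (SimpleGraph.mulCayley S).Preconnected := by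
  suffices h : ∀ g x : G, (SimpleGraph.mulCayley S).Reachable x (x * g) by
    intro x y
    simpa using h (x⁻¹ * y) x
  intro g
  have hg : g ∈ Subgroup.closure S := hS ▸ Subgroup.mem_top g
  induction hg using Subgroup.closure_induction with
  | mem s hs =>
    intro x
    by_cases h : x = x * s
    · rw [← h]
    · exact SimpleGraph.Adj.reachable (by simp [SimpleGraph.mulCayley_adj, h, hs])
  | one => simp
  | mul g h _ _ hg hh =>
    intro x
    rw [← mul_assoc]
    exact (hg x).trans (hh _)
  | inv g _ hg =>
    intro x
    simpa using (hg (x * g⁻¹)).symm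

theorem AlmostInvariant.finite_edgeBoundary_mulCayley (hA : AlmostInvariant A) (hS : S.Finite) :
    (edgeBoundary (SimpleGraph.mulCayley S) A).Finite := by
  refine ((hS.union hS.inv).biUnion
    fun s _ ↦ (hA s).image fun x ↦ (x, x * s)).subset ?_
  rintro ⟨x, y⟩ ⟨hxy, hx, hy⟩
  refine mem_biUnion (x := x⁻¹ * y) ?_ ⟨x, ⟨hx, by simpa using hy⟩, by simp⟩
  simpa using ((SimpleGraph.mulCayley_adj S x y).1 hxy).2

theorem almostInvariant_of_finite_edgeBoundary_mulCayley (hS : Subgroup.closure S = ⊤)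
    (hA : (edgeBoundary (SimpleGraph.mulCayley S) A).Finite) : AlmostInvariant A := by
  refine almostInvariant_of_closure_eq_top hS fun s hs ↦ ⟨?_, ?_⟩ <;>
  · refine (hA.image Prod.fst).subset fun x hx ↦ ⟨(x, _), ⟨?_, hx⟩, rfl⟩
    rw [SimpleGraph.mulCayley_adj]
    refine ⟨fun h ↦ hx.2 ((congrArg (· ∈ A) h).mp hx.1), ?_⟩
    simp [hs]

end Cayley

/-! ### Trees from nested families of cuts -/

section TreeSet

variable {X : Type*} {𝓔 : Set (Set X)} {v w : Set (Set X)} {A B C D : Set X}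

/-- A family of pairwise nested cuts which is the set of oriented edges of a tree: `Aᶜ` is the
reverse of `A`, and `A ⊆ B` means that a path runs through `B` and then through `A`. -/
structure TreeSet (𝓔 : Set (Set X)) : Prop where
  compl_mem : ∀ A ∈ 𝓔, Aᶜ ∈ 𝓔
  nested : ∀ A ∈ 𝓔, ∀ B ∈ 𝓔, Nested A B
  finite_interval : ∀ x y, {A ∈ 𝓔 | x ∈ A ∧ y ∉ A}.Finite
  nonempty : ∀ A ∈ 𝓔, A.Nonempty

/-- The head of the oriented edge `A`. A vertex is encoded as the set of all edges pointing
towards it; the edges with head `v` are the minimal elements of `v`. -/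
def edgeHead (𝓔 : Set (Set X)) (A : Set X) : Set (Set X) :=
  {B ∈ 𝓔 | A ⊆ B ∨ Aᶜ ⊂ B}

/-- The vertices of the tree of a family of cuts. -/
def IsVertex (𝓔 : Set (Set X)) (v : Set (Set X)) : Prop :=
  ∃ A ∈ 𝓔, v = edgeHead 𝓔 A

theorem isVertex_edgeHead (hA : A ∈ 𝓔) : IsVertex 𝓔 (edgeHead 𝓔 A) := ⟨A, hA, rfl⟩

theorem mem_edgeHead_self (hA : A ∈ 𝓔) : A ∈ edgeHead 𝓔 A := ⟨hA, .inl subset_rfl⟩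

theorem IsVertex.subset (hv : IsVertex 𝓔 v) : v ⊆ 𝓔 := by
  obtain ⟨A, -, rfl⟩ := hv
  exact sep_subset _ _

theorem IsVertex.mem_of_subset (hv : IsVertex 𝓔 v) (hB : B ∈ v) (hC : C ∈ 𝓔) (hBC : B ⊆ C) :
    C ∈ v := by
  obtain ⟨A, -, rfl⟩ := hv
  rcases hB.2 with h | h
  · exact ⟨hC, .inl (h.trans hBC)⟩
  · exact ⟨hC, .inr (h.trans_subset hBC)⟩

namespace TreeSet

theorem not_subset_compl (h𝓔 : TreeSet 𝓔) (hA : A ∈ 𝓔) (hAB : A ⊆ B) : ¬ A ⊆ Bᶜ := by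
  obtain ⟨x, hx⟩ := h𝓔.nonempty A hA
  exact fun h ↦ h hx (hAB hx)

theorem compl_mem_iff (h𝓔 : TreeSet 𝓔) (hv : IsVertex 𝓔 v) (hB : B ∈ 𝓔) : Bᶜ ∈ v ↔ B ∉ v := by
  obtain ⟨A, hA, rfl⟩ := hv
  have hB' := h𝓔.compl_mem B hB
  constructor
  · rintro ⟨-, h1 | h1⟩ ⟨-, h2 | h2⟩
    · exact h𝓔.not_subset_compl hA h2 h1
    · exact h2.not_subset (subset_compl_comm.1 h1)
    · exact h1.not_subset (compl_subset_compl.2 h2)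
    · exact h𝓔.not_subset_compl (h𝓔.compl_mem A hA) h2.subset h1.subset
  · intro h
    rcases h𝓔.nested A hA B hB with h1 | h1 | h1 | h1
    · exact absurd ⟨hB, .inl h1⟩ h
    · exact ⟨hB', .inl h1⟩
    · obtain rfl | hne := eq_or_ne Aᶜ B
      · exact ⟨hB', .inl (_root_.compl_compl A).superset⟩
      · exact absurd ⟨hB, .inr (h1.ssubset_of_ne hne)⟩ h
    · obtain heq | hne := eq_or_ne Aᶜ Bᶜ
      · exact absurd ⟨hB, .inl (compl_injective heq).subset⟩ h
      · exact ⟨hB', .inr (h1.ssubset_of_ne hne)⟩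

theorem compl_notMem (h𝓔 : TreeSet 𝓔) (hv : IsVertex 𝓔 v) (hB : B ∈ v) : Bᶜ ∉ v :=
  fun h ↦ (h𝓔.compl_mem_iff hv (hv.subset hB)).1 h hB

theorem minimal_edgeHead (h𝓔 : TreeSet 𝓔) (hA : A ∈ 𝓔) : Minimal (· ∈ edgeHead 𝓔 A) A := by
  refine ⟨mem_edgeHead_self hA, ?_⟩
  rintro B ⟨-, h | h⟩ hBA
  · exact h
  · exact (h𝓔.not_subset_compl (h𝓔.compl_mem A hA) (h.subset.trans hBA) subset_rfl).elim

theorem eq_of_subset (h𝓔 : TreeSet 𝓔) (hv : IsVertex 𝓔 v) (hw : IsVertex 𝓔 w) (hvw : v ⊆ w) :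
    v = w := by
  refine hvw.antisymm fun B hB ↦ ?_
  by_contra hBv
  exact h𝓔.compl_notMem hw hB (hvw ((h𝓔.compl_mem_iff hv (hw.subset hB)).2 hBv))

theorem eq_edgeHead (h𝓔 : TreeSet 𝓔) (hv : IsVertex 𝓔 v) (hA : Minimal (· ∈ v) A) :
    v = edgeHead 𝓔 A := by
  have hA𝓔 := hv.subset hA.prop
  refine h𝓔.eq_of_subset hv ⟨A, hA𝓔, rfl⟩ fun B hB ↦ ⟨hv.subset hB, ?_⟩
  rcases h𝓔.nested A hA𝓔 B (hv.subset hB) with h | h | h | h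
  · exact .inl h
  · exact absurd (hv.mem_of_subset hA.prop (h𝓔.compl_mem B (hv.subset hB)) h)
      (h𝓔.compl_notMem hv hB)
  · refine .inr (h.ssubset_of_ne ?_)
    rintro rfl
    exact h𝓔.compl_notMem hv hA.prop hB
  · exact .inl (hA.le_of_le hB (compl_subset_compl.1 h))

theorem compl_ssubset_of_minimal (h𝓔 : TreeSet 𝓔) (hv : IsVertex 𝓔 v)
    (hA : Minimal (· ∈ v) A) (hD : Minimal (· ∈ v) D) (hne : A ≠ D) : Aᶜ ⊂ D := by
  rcases (h𝓔.eq_edgeHead hv hA ▸ hD.prop : D ∈ edgeHead 𝓔 A).2 with h | h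
  · exact absurd (h.antisymm (hD.le_of_le hA.prop h)) hne
  · exact h

theorem exists_minimal_subset (h𝓔 : TreeSet 𝓔) (hv : IsVertex 𝓔 v) (hB : B ∈ v) :
    ∃ D ⊆ B, Minimal (· ∈ v) D := by
  obtain ⟨A, hA, rfl⟩ := hv
  by_cases hAB : A ⊆ B
  · exact ⟨A, hAB, h𝓔.minimal_edgeHead hA⟩
  obtain ⟨x, hx⟩ := h𝓔.nonempty _ (h𝓔.compl_mem A hA)
  obtain ⟨y, hy⟩ := h𝓔.nonempty _ (h𝓔.compl_mem B hB.1)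
  have hfin : {C ∈ edgeHead 𝓔 A | C ⊆ B}.Finite := by
    refine (h𝓔.finite_interval x y).subset ?_
    rintro C ⟨⟨hC, h | h⟩, hCB⟩
    · exact absurd (h.trans hCB) hAB
    · exact ⟨hC, h.subset hx, fun hyC ↦ hy (hCB hyC)⟩
  obtain ⟨D, hD⟩ := hfin.exists_minimal ⟨B, hB, subset_rfl⟩
  exact ⟨D, hD.prop.2, hD.prop.1, fun C hC hCD ↦
    hD.le_of_le ⟨hC, hCD.trans hD.prop.2⟩ hCD⟩

theorem exists_forall_mem_or_mem (h𝓔 : TreeSet 𝓔) (hv : IsVertex 𝓔 v) :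
    ∃ x y, ∀ B ∈ v, x ∈ B ∨ y ∈ B := by
  obtain ⟨A, hA, rfl⟩ := hv
  obtain ⟨x, hx⟩ := h𝓔.nonempty A hA
  obtain ⟨y, hy⟩ := h𝓔.nonempty _ (h𝓔.compl_mem A hA)
  exact ⟨x, y, fun B hB ↦ hB.2.imp (· hx) (·.subset hy)⟩

theorem finite_sdiff (h𝓔 : TreeSet 𝓔) (hv : IsVertex 𝓔 v) (hw : IsVertex 𝓔 w) :
    (v \ w).Finite := by
  obtain ⟨x, x', hx⟩ := h𝓔.exists_forall_mem_or_mem hv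
  obtain ⟨y, y', hy⟩ := h𝓔.exists_forall_mem_or_mem hw
  refine ((h𝓔.finite_interval x y).union ((h𝓔.finite_interval x y').union
    ((h𝓔.finite_interval x' y).union (h𝓔.finite_interval x' y')))).subset ?_
  rintro B ⟨hBv, hBw⟩
  have hB := hv.subset hBv
  rcases hx B hBv with h | h <;> rcases hy Bᶜ ((h𝓔.compl_mem_iff hw hB).2 hBw) with h' | h'
  exacts [.inl ⟨hB, h, h'⟩, .inr (.inl ⟨hB, h, h'⟩), .inr (.inr (.inl ⟨hB, h, h'⟩)),
    .inr (.inr (.inr ⟨hB, h, h'⟩))]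

theorem exists_minimal_notMem (h𝓔 : TreeSet 𝓔) (hv : IsVertex 𝓔 v) (hw : IsVertex 𝓔 w)
    (hne : v ≠ w) : ∃ D, Minimal (· ∈ v) D ∧ D ∉ w := by
  obtain ⟨B, hBv, hBw⟩ := not_subset.1 fun h ↦ hne (h𝓔.eq_of_subset hv hw h)
  obtain ⟨D, hDB, hD⟩ := h𝓔.exists_minimal_subset hv hBv
  exact ⟨D, hD, fun h ↦ hBw (hw.mem_of_subset h (hv.subset hBv) hDB)⟩

theorem minimal_unique_of_notMem (h𝓔 : TreeSet 𝓔) (hv : IsVertex 𝓔 v) (hw : IsVertex 𝓔 w)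
    (hA : Minimal (· ∈ v) A) (hAw : A ∉ w) (hD : Minimal (· ∈ v) D) (hDw : D ∉ w) : A = D := by
  by_contra hne
  exact hDw (hw.mem_of_subset ((h𝓔.compl_mem_iff hw (hv.subset hA.prop)).2 hAw)
    (hv.subset hD.prop) (h𝓔.compl_ssubset_of_minimal hv hA hD hne).subset)

theorem edgeHead_compl_sdiff (h𝓔 : TreeSet 𝓔) (hD : D ∈ 𝓔) (hw : IsVertex 𝓔 w) (hDw : D ∉ w) :
    edgeHead 𝓔 Dᶜ \ w = (edgeHead 𝓔 D \ w) \ {D} := by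
  have hDc : Dᶜ ∈ w := (h𝓔.compl_mem_iff hw hD).2 hDw
  ext B
  simp only [edgeHead, mem_sdiff, mem_singleton_iff, mem_ofPred_eq, _root_.compl_compl]
  constructor
  · rintro ⟨⟨hB, h⟩, hBw⟩
    refine ⟨⟨⟨hB, ?_⟩, hBw⟩, ?_⟩
    · exact h.symm.imp (·.subset) (·.ssubset_of_ne fun h ↦ hBw (h ▸ hDc))
    · rintro rfl
      exact h𝓔.compl_notMem (isVertex_edgeHead (h𝓔.compl_mem B hD))
        (mem_edgeHead_self (h𝓔.compl_mem B hD))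
        ⟨by rwa [_root_.compl_compl], by rwa [_root_.compl_compl]⟩
  · rintro ⟨⟨⟨hB, h⟩, hBw⟩, hne⟩
    exact ⟨⟨hB, h.symm.imp (·.subset) (·.ssubset_of_ne (Ne.symm hne))⟩, hBw⟩

theorem ncard_edgeHead_compl_sdiff_lt (h𝓔 : TreeSet 𝓔) (hD : D ∈ 𝓔) (hw : IsVertex 𝓔 w)
    (hDw : D ∉ w) : (edgeHead 𝓔 Dᶜ \ w).ncard < (edgeHead 𝓔 D \ w).ncard := by
  rw [h𝓔.edgeHead_compl_sdiff hD hw hDw]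
  exact ncard_sdiff_singleton_lt_of_mem ⟨mem_edgeHead_self hD, hDw⟩
    (h𝓔.finite_sdiff (isVertex_edgeHead hD) hw)

theorem isVertex_induction (h𝓔 : TreeSet 𝓔) (hw : IsVertex 𝓔 w) {P : Set (Set X) → Prop}
    (base : P w) (step : ∀ A ∈ 𝓔, P (edgeHead 𝓔 Aᶜ) → P (edgeHead 𝓔 A)) (hv : IsVertex 𝓔 v) :
    P v := by
  induction hn : (v \ w).ncard using Nat.strong_induction_on generalizing v with
  | _ n ih =>
    subst hn
    obtain rfl | hne := eq_or_ne v w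
    · exact base
    · obtain ⟨D, hD, hDw⟩ := h𝓔.exists_minimal_notMem hv hw hne
      have hD𝓔 := hv.subset hD.prop
      obtain rfl := h𝓔.eq_edgeHead hv hD
      exact step D hD𝓔 (ih _ (h𝓔.ncard_edgeHead_compl_sdiff_lt hD𝓔 hw hDw)
        (isVertex_edgeHead (h𝓔.compl_mem D hD𝓔)) rfl)

theorem mem_iff_mem_ultrafilter (h𝓔 : TreeSet 𝓔) (hv : IsVertex 𝓔 v)
    {u : Ultrafilter X} (hu : ∀ D, Minimal (· ∈ v) D → D ∈ u) (hB : B ∈ 𝓔) : B ∈ v ↔ B ∈ u := by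
  have hvu {B} (hB : B ∈ v) : B ∈ u := by
    obtain ⟨D, hDB, hD⟩ := h𝓔.exists_minimal_subset hv hB
    exact Filter.mem_of_superset (hu D hD) hDB
  refine ⟨hvu, fun hBu ↦ ?_⟩
  by_contra hBv
  exact Ultrafilter.compl_mem_iff_notMem.1 (hvu ((h𝓔.compl_mem_iff hv hB).2 hBv)) hBu

end TreeSet

end TreeSet

/-! ### Transports along a tree and edge twists -/

section Transport

variable {X K : Type*} [Group K] {𝓔 : Set (Set X)} {v w : Set (Set X)} {A : Set X}
  {τ : Set X → K} {d d' : Set (Set X) → Set (Set X) → K}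

/-- A transport along the paths of the tree of `𝓔`, with value `τ A` along the edge `A`. -/
structure IsTransport (𝓔 : Set (Set X)) (τ : Set X → K) (d : Set (Set X) → Set (Set X) → K) :
    Prop where
  trans : ∀ u v w, d u v * d v w = d u w
  edge : ∀ A ∈ 𝓔, d (edgeHead 𝓔 Aᶜ) (edgeHead 𝓔 A) = τ A

open Classical in
/-- The product of the labels `τ` along the path from `v` to `w`, in which the edge leaving `v`
towards `w` is the reverse of the unique edge with head `v` which does not point to `w`. -/
noncomputable def pathProduct (𝓔 : Set (Set X)) (τ : Set X → K) (w v : Set (Set X)) : K :=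
  if h : ∃ D, Minimal (· ∈ v) D ∧ D ∉ w ∧ (edgeHead 𝓔 Dᶜ \ w).ncard < (v \ w).ncard then
    τ h.chooseᶜ * pathProduct 𝓔 τ w (edgeHead 𝓔 h.chooseᶜ)
  else 1
termination_by (v \ w).ncard
decreasing_by exact h.choose_spec.2.2

theorem pathProduct_edgeHead (h𝓔 : TreeSet 𝓔) (hA : A ∈ 𝓔) (hw : IsVertex 𝓔 w) (hAw : A ∉ w) :
    pathProduct 𝓔 τ w (edgeHead 𝓔 A) = τ Aᶜ * pathProduct 𝓔 τ w (edgeHead 𝓔 Aᶜ) := by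
  have h : ∃ D, Minimal (· ∈ edgeHead 𝓔 A) D ∧ D ∉ w ∧
      (edgeHead 𝓔 Dᶜ \ w).ncard < (edgeHead 𝓔 A \ w).ncard :=
    ⟨A, h𝓔.minimal_edgeHead hA, hAw, h𝓔.ncard_edgeHead_compl_sdiff_lt hA hw hAw⟩
  have hchoose : h.choose = A :=
    h𝓔.minimal_unique_of_notMem (isVertex_edgeHead hA) hw h.choose_spec.1 h.choose_spec.2.1
      (h𝓔.minimal_edgeHead hA) hAw
  rw [pathProduct, dif_pos h, hchoose]

theorem exists_isTransport (h𝓔 : TreeSet 𝓔) (hτ : ∀ A ∈ 𝓔, τ Aᶜ = (τ A)⁻¹) :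
    ∃ d, IsTransport 𝓔 τ d := by
  obtain rfl | ⟨B, hB⟩ := 𝓔.eq_empty_or_nonempty
  · exact ⟨fun _ _ ↦ 1, fun _ _ _ ↦ mul_one 1, fun _ h ↦ h.elim⟩
  have hw := isVertex_edgeHead hB
  let p := pathProduct 𝓔 τ (edgeHead 𝓔 B)
  refine ⟨fun u v ↦ p u * (p v)⁻¹, fun _ _ _ ↦ by group, fun A hA ↦ ?_⟩
  by_cases hAB : A ∈ edgeHead 𝓔 B
  · have h := pathProduct_edgeHead (τ := τ) h𝓔 (h𝓔.compl_mem A hA) hw (h𝓔.compl_notMem hw hAB)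
    rw [_root_.compl_compl] at h
    simp only [p, h, mul_inv_cancel_right]
  · simp only [p, pathProduct_edgeHead h𝓔 hA hw hAB, hτ A hA]
    group

namespace IsTransport

theorem self (hd : IsTransport 𝓔 τ d) (v : Set (Set X)) : d v v = 1 :=
  mul_eq_left.1 (hd.trans v v v)

theorem inv (hd : IsTransport 𝓔 τ d) (v w : Set (Set X)) : (d v w)⁻¹ = d w v :=
  inv_eq_of_mul_eq_one_right ((hd.trans v w v).trans (hd.self v))

theorem eq (hd : IsTransport 𝓔 τ d) (hd' : IsTransport 𝓔 τ d') (h𝓔 : TreeSet 𝓔)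
    (hv : IsVertex 𝓔 v) (hw : IsVertex 𝓔 w) : d v w = d' v w := by
  refine h𝓔.isVertex_induction hv (P := fun w ↦ d v w = d' v w) ?_ (fun A hA h ↦ ?_) hw
  · rw [hd.self, hd'.self]
  · rw [← hd.trans v (edgeHead 𝓔 Aᶜ), ← hd'.trans v (edgeHead 𝓔 Aᶜ), h, hd.edge A hA,
      hd'.edge A hA]

theorem mem_subgroup (hd : IsTransport 𝓔 τ d) (h𝓔 : TreeSet 𝓔) {N : Subgroup K}
    (hτ : ∀ A ∈ 𝓔, τ A ∈ N) (hv : IsVertex 𝓔 v) (hw : IsVertex 𝓔 w) : d v w ∈ N := by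
  refine h𝓔.isVertex_induction hv (P := fun w ↦ d v w ∈ N) ?_ (fun A hA h ↦ ?_) hw
  · rw [hd.self]
    exact N.one_mem
  · rw [← hd.trans v (edgeHead 𝓔 Aᶜ), hd.edge A hA]
    exact N.mul_mem h (hτ A hA)

end IsTransport

end Transport

section Twist

variable {G X K : Type*} [Group G] [MulAction G X] [Group K] {𝓔 : Set (Set X)}
  {v w : Set (Set X)} {A : Set X} {τ : Set X → K} {d : Set (Set X) → Set (Set X) → K}
  {φ : G →* K}

theorem smul_edgeHead (hG : ∀ (g : G), ∀ A ∈ 𝓔, g • A ∈ 𝓔) (g : G) (A : Set X) :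
    g • edgeHead 𝓔 A = edgeHead 𝓔 (g • A) := by
  have hsubset (g : G) (A : Set X) : g • edgeHead 𝓔 A ⊆ edgeHead 𝓔 (g • A) := by
    rintro _ ⟨B, ⟨hB, h⟩, rfl⟩
    refine ⟨hG g B hB, h.imp smul_set_mono fun h ↦ ?_⟩
    rw [← smul_set_compl]
    exact ⟨smul_set_mono h.1, fun h' ↦ h.2 (smul_set_subset_smul_set_iff.1 h')⟩
  refine (hsubset g A).antisymm ?_
  rw [subset_smul_set_iff]
  simpa using hsubset g⁻¹ (g • A)

theorem IsVertex.smul (hG : ∀ (g : G), ∀ A ∈ 𝓔, g • A ∈ 𝓔) (hv : IsVertex 𝓔 v) (g : G) :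
    IsVertex 𝓔 (g • v) := by
  obtain ⟨A, hA, rfl⟩ := hv
  exact ⟨g • A, hG g A hA, smul_edgeHead hG g A⟩

theorem minimal_smul (hA : Minimal (· ∈ v) A) (g : G) : Minimal (· ∈ g • v) (g • A) := by
  refine ⟨smul_mem_smul_set hA.prop, ?_⟩
  rintro _ ⟨B, hB, rfl⟩ hBA
  exact smul_set_mono (hA.le_of_le hB (smul_set_subset_smul_set_iff.1 hBA))

theorem stabilizer_le_stabilizer_edgeHead (hG : ∀ (g : G), ∀ A ∈ 𝓔, g • A ∈ 𝓔) (A : Set X) :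
    MulAction.stabilizer G A ≤ MulAction.stabilizer G (edgeHead 𝓔 A) := by
  intro g hg
  rw [MulAction.mem_stabilizer_iff, smul_edgeHead hG, MulAction.mem_stabilizer_iff.1 hg]

namespace IsTransport

theorem smul_smul (hd : IsTransport 𝓔 τ d) (h𝓔 : TreeSet 𝓔)
    (hG : ∀ (g : G), ∀ A ∈ 𝓔, g • A ∈ 𝓔)
    (hτ : ∀ A ∈ 𝓔, ∀ g : G, τ (g • A) = φ g * τ A * (φ g)⁻¹) (hv : IsVertex 𝓔 v)
    (hw : IsVertex 𝓔 w) (g : G) : d (g • v) (g • w) = φ g * d v w * (φ g)⁻¹ := by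
  have hd' : IsTransport 𝓔 τ fun u v ↦ (φ g)⁻¹ * d (g • u) (g • v) * φ g := by
    refine ⟨fun u v w ↦ ?_, fun A hA ↦ ?_⟩
    · rw [← hd.trans (g • u) (g • v) (g • w)]
      group
    · rw [smul_edgeHead hG, smul_edgeHead hG, smul_set_compl, hd.edge _ (hG g A hA), hτ A hA]
      group
  rw [hd.eq hd' h𝓔 hv hw]
  group

theorem exists_twist (hd : IsTransport 𝓔 τ d) (h𝓔 : TreeSet 𝓔)
    (hG : ∀ (g : G), ∀ A ∈ 𝓔, g • A ∈ 𝓔)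
    (hτ : ∀ A ∈ 𝓔, ∀ g : G, τ (g • A) = φ g * τ A * (φ g)⁻¹) (hv : IsVertex 𝓔 v) :
    ∃ ψ : G →* K, ∀ g, ψ g = d v (g • v) * φ g := by
  refine ⟨MonoidHom.mk' (fun g ↦ d v (g • v) * φ g) fun g h ↦ ?_, fun _ ↦ rfl⟩
  rw [mul_smul, ← hd.trans v (g • v) (g • h • v), hd.smul_smul h𝓔 hG hτ hv (hv.smul hG h),
    map_mul]
  group

theorem twist_eq_conj (hd : IsTransport 𝓔 τ d) (h𝓔 : TreeSet 𝓔)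
    (hG : ∀ (g : G), ∀ A ∈ 𝓔, g • A ∈ 𝓔)
    (hτ : ∀ A ∈ 𝓔, ∀ g : G, τ (g • A) = φ g * τ A * (φ g)⁻¹) (hv : IsVertex 𝓔 v)
    (hw : IsVertex 𝓔 w) {g : G} (hg : g • w = w) :
    d v (g • v) * φ g = d v w * φ g * (d v w)⁻¹ := by
  have h := hd.smul_smul h𝓔 hG hτ hw hv g
  rw [hg] at h
  rw [← hd.trans v w, h, hd.inv]
  group

end IsTransport

open Classical in
/-- The equivariant function with value `s` at `A` and trivial outside the orbit of `A`. -/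
noncomputable def orbitLabel (φ : G →* K) (A : Set X) (s : K) (B : Set X) : K :=
  if h : ∃ g : G, B = g • A then φ h.choose * s * (φ h.choose)⁻¹ else 1

variable {s : K}

theorem orbitLabel_smul_self (hs : ∀ g ∈ MulAction.stabilizer G A, Commute (φ g) s) (g : G) :
    orbitLabel φ A s (g • A) = φ g * s * (φ g)⁻¹ := by
  have h : ∃ k : G, g • A = k • A := ⟨g, rfl⟩
  rw [orbitLabel, dif_pos h]
  have hchoose := h.choose_spec
  generalize h.choose = k at hchoose ⊢
  have hcomm := hs (g⁻¹ * k) (by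
    rw [MulAction.mem_stabilizer_iff, mul_smul, ← hchoose, inv_smul_smul])
  rw [map_mul, map_inv] at hcomm
  calc φ k * s * (φ k)⁻¹ = φ g * ((φ g)⁻¹ * φ k * s) * (φ k)⁻¹ := by group
    _ = φ g * s * (φ g)⁻¹ := by rw [hcomm.eq]; group

theorem orbitLabel_self (hs : ∀ g ∈ MulAction.stabilizer G A, Commute (φ g) s) :
    orbitLabel φ A s A = s := by
  simpa using orbitLabel_smul_self hs 1

theorem orbitLabel_of_notMem {B : Set X} (hB : B ∉ MulAction.orbit G A) :
    orbitLabel φ A s B = 1 :=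
  dif_neg fun ⟨g, hg⟩ ↦ hB ⟨g, hg.symm⟩

theorem orbitLabel_smul (hs : ∀ g ∈ MulAction.stabilizer G A, Commute (φ g) s) (g : G)
    (B : Set X) : orbitLabel φ A s (g • B) = φ g * orbitLabel φ A s B * (φ g)⁻¹ := by
  by_cases hB : B ∈ MulAction.orbit G A
  · obtain ⟨k, rfl⟩ := hB
    dsimp only
    rw [← mul_smul, orbitLabel_smul_self hs, orbitLabel_smul_self hs, map_mul]
    group
  · rw [orbitLabel_of_notMem hB, orbitLabel_of_notMem (B := g • B) fun h ↦
      hB (by simpa using MulAction.mem_orbit_of_mem_orbit g⁻¹ h)]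
    group

theorem orbitLabel_mem (N : Subgroup K) [N.Normal] (hsN : s ∈ N) (B : Set X) :
    orbitLabel φ A s B ∈ N := by
  rw [orbitLabel]
  split_ifs
  · exact Subgroup.Normal.conj_mem ‹_› s hsN _
  · exact N.one_mem

/-- `ψ` is a twist of `φ` along the edge `A` by `t`: it agrees with `φ` on the stabilizer of the
tail of `A` and with a conjugate by `t` on the stabilizer of the head; if the two endpoints are
identified by `h`, then the stable letter `h` is multiplied by `t`. -/
structure IsEdgeTwist (𝓔 : Set (Set X)) (φ : G →* K) (A : Set X) (t : K) (ψ : G →* K) :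
    Prop where
  eq_of_smul_tail : ∀ g ∈ MulAction.stabilizer G (edgeHead 𝓔 Aᶜ), ψ g = φ g
  eq_of_smul_head : ∀ g ∈ MulAction.stabilizer G (edgeHead 𝓔 A), ψ g = t * φ g * t⁻¹
  eq_of_smul_tail_eq_head : ∀ h : G, h • edgeHead 𝓔 Aᶜ = edgeHead 𝓔 A → ψ h = t * φ h

theorem exists_isEdgeTwist (h𝓔 : TreeSet 𝓔) (hG : ∀ (g : G), ∀ A ∈ 𝓔, g • A ∈ 𝓔) (hA : A ∈ 𝓔)
    (hs : ∀ g ∈ MulAction.stabilizer G A, Commute (φ g) s) (N : Subgroup K) [N.Normal]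
    (hsN : s ∈ N) :
    ∃ ψ : G →* K, IsEdgeTwist 𝓔 φ A ((orbitLabel φ A s Aᶜ)⁻¹ * s) ψ ∧
      ∀ g, ψ g * (φ g)⁻¹ ∈ N := by
  let τ (B : Set X) := (orbitLabel φ A s Bᶜ)⁻¹ * orbitLabel φ A s B
  have hτ (B) (_ : B ∈ 𝓔) (g : G) : τ (g • B) = φ g * τ B * (φ g)⁻¹ := by
    simp only [τ, ← smul_set_compl, orbitLabel_smul hs]
    group
  obtain ⟨d, hd⟩ := exists_isTransport (τ := τ) h𝓔 (by simp [τ])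
  have hA' := h𝓔.compl_mem A hA
  have hv := isVertex_edgeHead hA'
  obtain ⟨ψ, hψ⟩ := hd.exists_twist h𝓔 hG hτ hv
  have hedge := hd.edge A hA
  simp only [τ, orbitLabel_self hs] at hedge
  refine ⟨ψ, ⟨fun g hg ↦ ?_, fun g hg ↦ ?_, fun h hh ↦ ?_⟩, fun g ↦ ?_⟩
  · rw [hψ, hg, hd.self, one_mul]
  · rw [hψ, hd.twist_eq_conj h𝓔 hG hτ hv (isVertex_edgeHead hA) hg, hedge]
  · rw [hψ, hh, hedge]
  · rw [hψ, mul_inv_cancel_right]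
    exact hd.mem_subgroup h𝓔 (fun B _ ↦ N.mul_mem (N.inv_mem (orbitLabel_mem N hsN _))
      (orbitLabel_mem N hsN _)) hv (hv.smul hG g)

end Twist

/-! ### Trees separating the ends of the elements of a free subgroup -/

section OptimalCuts

variable {G X : Type*} [Group G] [MulAction G X] {Γ : SimpleGraph X}
  {p : Ultrafilter X × Ultrafilter X} {Q : Set (Ultrafilter X × Ultrafilter X)} {A B C : Set X}

theorem Separates.nonempty (h : Separates A p) : A.Nonempty := by
  rw [nonempty_iff_ne_empty]
  rintro rfl
  simp [Separates] at h

/-- The optimal cuts of all pairs in `Q`. -/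
def optimalCuts (Γ : SimpleGraph X) (Q : Set (Ultrafilter X × Ultrafilter X)) : Set (Set X) :=
  {A | ∃ p ∈ Q, IsOptimalCut Γ Q p A}

theorem treeSet_optimalCuts (hΓ : Γ.Preconnected) {k : ℕ}
    (hk : ∀ p ∈ Q, ∀ D, IsMinCut Γ p D → cutWeight Γ D ≤ k) : TreeSet (optimalCuts Γ Q) where
  compl_mem := fun A ⟨p, hp, hA⟩ ↦ ⟨p, hp, hA.of_eq_or_eq_compl (.inr rfl)⟩
  nested := fun _ ⟨_, hp, hA⟩ _ ⟨_, _, hB⟩ ↦ hA.nested hΓ hk hp hB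
  finite_interval x y := by
    refine (finite_setOf_connected_cuts Γ x y k).subset ?_
    rintro A ⟨⟨p, hp, hA⟩, hx, hy⟩
    exact ⟨hA.isMinCut.finite_edgeBoundary, hk p hp A hA.isMinCut,
      hA.isMinCut.preconnected_induce hΓ, hA.isMinCut.compl.preconnected_induce hΓ, hx, hy⟩
  nonempty := fun _ ⟨_, _, hA⟩ ↦ hA.isMinCut.separates.nonempty

theorem smul_mem_optimalCuts (hG : ∀ (g : G) x y, Γ.Adj (g • x) (g • y) ↔ Γ.Adj x y)
    (hQ : ∀ (g : G), ∀ p ∈ Q, translatePair g p ∈ Q) (g : G) (hA : A ∈ optimalCuts Γ Q) :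
    g • A ∈ optimalCuts Γ Q := by
  obtain ⟨p, hp, hA⟩ := hA
  exact ⟨_, hQ g p hp, hA.smul hG hQ g⟩

theorem TreeSet.mono {𝓔 𝓔' : Set (Set X)} (h𝓔 : TreeSet 𝓔) (h : 𝓔' ⊆ 𝓔)
    (hcompl : ∀ A ∈ 𝓔', Aᶜ ∈ 𝓔') : TreeSet 𝓔' where
  compl_mem := hcompl
  nested A hA B hB := h𝓔.nested A (h hA) B (h hB)
  finite_interval x y := (h𝓔.finite_interval x y).subset fun _ hA ↦ ⟨h hA.1, hA.2⟩
  nonempty A hA := h𝓔.nonempty A (h hA)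

theorem exists_finite_orbit_representatives {S : Set G} (hS : S.Finite) {𝓔 : Set (Set G)}
    (h𝓔 : ∀ x y, {A ∈ 𝓔 | x ∈ A ∧ y ∉ A}.Finite) (hG : ∀ (g : G), ∀ A ∈ 𝓔, g • A ∈ 𝓔)
    (hne : ∀ A ∈ 𝓔, (edgeBoundary (SimpleGraph.mulCayley S) A).Nonempty) :
    ∃ R : Set (Set G), R.Finite ∧ ∀ A ∈ 𝓔, ∃ a ∈ R, A ∈ MulAction.orbit G a := by
  refine ⟨⋃ s ∈ S ∪ S⁻¹, {A ∈ 𝓔 | 1 ∈ A ∧ s ∉ A},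
    (hS.union hS.inv).biUnion fun s _ ↦ h𝓔 1 s, fun A hA ↦ ?_⟩
  obtain ⟨⟨x, y⟩, hxy, hx, hy⟩ := hne A hA
  refine ⟨x⁻¹ • A, mem_biUnion (x := x⁻¹ * y) ?_ ⟨hG _ A hA, ?_, ?_⟩, x, smul_inv_smul x A⟩
  · simpa using ((SimpleGraph.mulCayley_adj S x y).1 hxy).2
  · simpa [mem_smul_set_iff_inv_smul_mem] using hx
  · simpa [mem_smul_set_iff_inv_smul_mem] using hy

/-- The orbit of the unoriented edge `{A, Aᶜ}`. -/
def edgeOrbit (G : Type*) {X : Type*} [Group G] [MulAction G X] (A : Set X) : Set (Set X) :=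
  {B | ∃ g : G, B = g • A ∨ B = g • Aᶜ}

theorem mem_edgeOrbit_self (A : Set X) : A ∈ edgeOrbit G A := ⟨1, by simp⟩

theorem compl_mem_edgeOrbit (h : B ∈ edgeOrbit G A) : Bᶜ ∈ edgeOrbit G A := by
  obtain ⟨g, rfl | rfl⟩ := h
  exacts [⟨g, .inr (smul_set_compl).symm⟩, ⟨g, .inl (by rw [smul_set_compl, _root_.compl_compl])⟩]

theorem smul_mem_edgeOrbit (g : G) (h : B ∈ edgeOrbit G A) : g • B ∈ edgeOrbit G A := by
  obtain ⟨k, hk⟩ := h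
  exact ⟨g * k, hk.imp (by rintro rfl; rw [mul_smul]) (by rintro rfl; rw [mul_smul])⟩

theorem mem_edgeOrbit_trans (hAB : A ∈ edgeOrbit G B) (hBC : B ∈ edgeOrbit G C) :
    A ∈ edgeOrbit G C := by
  obtain ⟨g, rfl | rfl⟩ := hAB
  exacts [smul_mem_edgeOrbit g hBC, smul_mem_edgeOrbit g (compl_mem_edgeOrbit hBC)]

theorem mem_edgeOrbit_comm : A ∈ edgeOrbit G B ↔ B ∈ edgeOrbit G A := by
  suffices h : ∀ A B : Set X, A ∈ edgeOrbit G B → B ∈ edgeOrbit G A from ⟨h A B, h B A⟩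
  rintro A B ⟨g, rfl | rfl⟩
  · exact ⟨g⁻¹, .inl (inv_smul_smul g B).symm⟩
  · exact ⟨g⁻¹, .inr (by rw [← smul_set_compl, _root_.compl_compl, inv_smul_smul])⟩

end OptimalCuts

section EndTree

variable {G : Type*} [Group G] {F : Subgroup G} {𝓔 : Set (Set G)} {A B : Set G}

/-- A `G`-invariant tree of almost invariant subsets of `G` with finite edge stabilizers and
finitely many edge orbits, whose edges separate the two ends of every nontrivial element of
`F`. -/
structure EndTree (F : Subgroup G) (𝓔 : Set (Set G)) : Prop extends TreeSet 𝓔 where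
  smul_mem : ∀ g : G, ∀ A ∈ 𝓔, g • A ∈ 𝓔
  almostInvariant : ∀ A ∈ 𝓔, AlmostInvariant A
  finite_stabilizer : ∀ A ∈ 𝓔, (MulAction.stabilizer G A : Set G).Finite
  finite_orbits : ∃ R : Set (Set G), R.Finite ∧ ∀ A ∈ 𝓔, ∃ a ∈ R, A ∈ MulAction.orbit G a
  exists_separates : ∀ f ∈ F, f ≠ 1 → ∃ A ∈ 𝓔, Separates A (powerLimits f)

/-- An end tree in which no edge orbit is superfluous: for every edge there is an element of `F`
whose ends are separated by the translates of this edge only. -/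
structure ReducedEndTree (F : Subgroup G) (𝓔 : Set (Set G)) : Prop extends EndTree F 𝓔 where
  exists_separates_only : ∀ A ∈ 𝓔, ∃ f ∈ F, f ≠ 1 ∧
    ∀ D ∈ 𝓔, Separates D (powerLimits f) → D ∈ edgeOrbit G A

theorem endTree_optimalCuts {S : Set G} (hS : Subgroup.closure S = ⊤) (hSfin : S.Finite)
    {Q : Set (Ultrafilter G × Ultrafilter G)} (hQ : ∀ (g : G), ∀ p ∈ Q, translatePair g p ∈ Q)
    (hF : ∀ f ∈ F, f ≠ 1 → powerLimits f ∈ Q) {k : ℕ}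
    (hk : ∀ p ∈ Q, ∃ A, (edgeBoundary (SimpleGraph.mulCayley S) A).Finite ∧ Separates A p ∧
      cutWeight (SimpleGraph.mulCayley S) A ≤ k) :
    EndTree F (optimalCuts (SimpleGraph.mulCayley S) Q) := by
  have hΓ := preconnected_mulCayley hS
  have hG (g x y : G) : (SimpleGraph.mulCayley S).Adj (g • x) (g • y) ↔
    (SimpleGraph.mulCayley S).Adj x y := SimpleGraph.mulCayley_adj_mul_iff_right
  have htree : TreeSet (optimalCuts (SimpleGraph.mulCayley S) Q) :=
    treeSet_optimalCuts hΓ fun p hp D hD ↦ by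
      obtain ⟨A, hA, hAp, hAk⟩ := hk p hp
      exact (hD.cutWeight_le hA hAp).trans hAk
  have hfin {A} (hA : A ∈ optimalCuts (SimpleGraph.mulCayley S) Q) :
      (edgeBoundary (SimpleGraph.mulCayley S) A).Finite := by
    obtain ⟨p, -, hA⟩ := hA
    exact hA.isMinCut.finite_edgeBoundary
  have hne (A) (hA : A ∈ optimalCuts (SimpleGraph.mulCayley S) Q) :
      (edgeBoundary (SimpleGraph.mulCayley S) A).Nonempty :=
    edgeBoundary_nonempty hΓ (htree.nonempty A hA) (htree.nonempty _ (htree.compl_mem A hA))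
  refine ⟨htree, fun g A hA ↦ smul_mem_optimalCuts hG hQ g hA,
    fun A hA ↦ almostInvariant_of_finite_edgeBoundary_mulCayley hS (hfin hA),
    fun A hA ↦ finite_stabilizer_of_finite_edgeBoundary hG (fun x y ↦ ?_) (hfin hA) (hne A hA),
    exists_finite_orbit_representatives hSfin htree.finite_interval
      (fun g A hA ↦ smul_mem_optimalCuts hG hQ g hA) hne, fun f hf hf1 ↦ ?_⟩
  · refine (finite_singleton (y * x⁻¹)).subset fun g hg ↦ ?_
    rw [mem_singleton_iff, ← hg, smul_eq_mul, mul_inv_cancel_right]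
  · obtain ⟨A, hA, hAf, -⟩ := hk _ (hF f hf hf1)
    obtain ⟨B, hB⟩ := exists_isOptimalCut Q ⟨A, hA, hAf⟩
    exact ⟨B, ⟨_, hF f hf hf1, hB⟩, hB.isMinCut.separates⟩

theorem exists_endTree {α : Type*} [Group.FG G] (F : Subgroup G) [F.FiniteIndex]
    (e : F ≃* FreeGroup α) : ∃ 𝓔, EndTree F 𝓔 := by
  have : Group.FG (FreeGroup α) := Group.fg_of_surjective (f := e.toMonoidHom) e.surjective
  have := finite_of_fg_freeGroup α
  obtain ⟨S, hS, hSfin⟩ := Group.fg_iff.1 ‹Group.FG G›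
  obtain ⟨𝒜, h𝒜, hAI, hsep⟩ := exists_finite_separating_almostInvariant F e
  obtain ⟨k, hk⟩ := (h𝒜.image (cutWeight (SimpleGraph.mulCayley S))).bddAbove
  refine ⟨_, endTree_optimalCuts (k := k) hS hSfin
    (Q := {p | ∃ (g : G), ∃ f ∈ F, f ≠ 1 ∧ p = translatePair g (powerLimits f)}) ?_
    (fun f hf hf1 ↦ ⟨1, f, hf, hf1, (translatePair_one _).symm⟩) ?_⟩
  · rintro g _ ⟨h, f, hf, hf1, rfl⟩
    exact ⟨g * h, f, hf, hf1, (translatePair_mul g h _).symm⟩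
  · rintro _ ⟨g, f, hf, hf1, rfl⟩
    obtain ⟨A, hA, h, hAf⟩ := hsep f hf hf1
    refine ⟨g • h • A, (((hAI A hA).smul h).smul g).finite_edgeBoundary_mulCayley hSfin,
      (separates_smul_translatePair g).2 hAf, ?_⟩
    have hG (g x y : G) : (SimpleGraph.mulCayley S).Adj (g • x) (g • y) ↔
      (SimpleGraph.mulCayley S).Adj x y := SimpleGraph.mulCayley_adj_mul_iff_right
    rw [cutWeight_smul hG, cutWeight_smul hG]
    exact hk (mem_image_of_mem _ hA)

theorem EndTree.edgeOrbit_subset (h𝓔 : EndTree F 𝓔) (hA : A ∈ 𝓔) : edgeOrbit G A ⊆ 𝓔 := by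
  rintro _ ⟨g, rfl | rfl⟩
  exacts [h𝓔.smul_mem g A hA, h𝓔.smul_mem g _ (h𝓔.compl_mem A hA)]

theorem EndTree.mono {𝓔' : Set (Set G)} (h𝓔 : EndTree F 𝓔) (h : 𝓔' ⊆ 𝓔)
    (hG : ∀ A ∈ 𝓔', ∀ B ∈ edgeOrbit G A, B ∈ 𝓔')
    (hsep : ∀ f ∈ F, f ≠ 1 → ∃ A ∈ 𝓔', Separates A (powerLimits f)) : EndTree F 𝓔' where
  toTreeSet := h𝓔.toTreeSet.mono h fun A hA ↦
    hG A hA _ (compl_mem_edgeOrbit (mem_edgeOrbit_self A))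
  smul_mem g A hA := hG A hA _ (smul_mem_edgeOrbit g (mem_edgeOrbit_self A))
  almostInvariant A hA := h𝓔.almostInvariant A (h hA)
  finite_stabilizer A hA := h𝓔.finite_stabilizer A (h hA)
  finite_orbits := by
    obtain ⟨R, hR, hR𝓔⟩ := h𝓔.finite_orbits
    exact ⟨R, hR, fun A hA ↦ hR𝓔 A (h hA)⟩
  exists_separates := hsep

theorem EndTree.exists_reducedEndTree (h𝓔 : EndTree F 𝓔) : ∃ 𝓔', ReducedEndTree F 𝓔' := by
  let IsSeparating (R : Set (Set G)) : Prop :=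
    ∀ f ∈ F, f ≠ 1 → ∃ a ∈ R, ∃ A ∈ edgeOrbit G a, Separates A (powerLimits f)
  obtain ⟨R₀, hR₀, hR₀orbit⟩ := h𝓔.finite_orbits
  have hR₀sep : IsSeparating (R₀ ∩ 𝓔) := by
    intro f hf hf1
    obtain ⟨A, hA, hAf⟩ := h𝓔.exists_separates f hf hf1
    obtain ⟨a, ha, g, rfl⟩ := hR₀orbit A hA
    exact ⟨a, ⟨ha, by simpa using h𝓔.smul_mem g⁻¹ _ hA⟩, _, ⟨g, .inl rfl⟩, hAf⟩
  have hfin : {R | R ⊆ R₀ ∩ 𝓔 ∧ IsSeparating R}.Finite :=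
    (hR₀.inter_of_left 𝓔).finite_subsets.subset fun _ hR ↦ hR.1
  obtain ⟨R, ⟨hR₀R, hRsep⟩, hRmin⟩ := hfin.exists_minimal ⟨_, subset_rfl, hR₀sep⟩
  have hR𝓔 : ⋃ a ∈ R, edgeOrbit G a ⊆ 𝓔 :=
    iUnion₂_subset fun a ha ↦ h𝓔.edgeOrbit_subset (hR₀R ha).2
  refine ⟨⋃ a ∈ R, edgeOrbit G a, ⟨h𝓔.mono hR𝓔 ?_ ?_, ?_⟩⟩
  · simpa only [mem_iUnion₂] using
      fun A ⟨a, ha, hA⟩ B hB ↦ ⟨a, ha, mem_edgeOrbit_trans hB hA⟩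
  · intro f hf hf1
    obtain ⟨a, ha, A, hA, hAf⟩ := hRsep f hf hf1
    exact ⟨A, mem_biUnion ha hA, hAf⟩
  · intro A hA
    obtain ⟨a, ha, hAa⟩ := mem_iUnion₂.1 hA
    have hRa : ¬ IsSeparating (R \ {a}) := fun h ↦
      (hRmin ⟨sdiff_subset.trans hR₀R, h⟩ sdiff_subset ha).2 rfl
    simp only [IsSeparating] at hRa
    push Not at hRa
    obtain ⟨f, hf, hf1, hfa⟩ := hRa
    refine ⟨f, hf, hf1, fun D hD hDf ↦ ?_⟩
    obtain ⟨b, hb, hDb⟩ := mem_iUnion₂.1 hD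
    obtain rfl : b = a := by_contra fun hba ↦ hfa b ⟨hb, hba⟩ D hDb hDf
    exact mem_edgeOrbit_trans hDb (mem_edgeOrbit_comm.1 hAa)

theorem not_isOfFinOrder_of_mem [IsMulTorsionFree F] {f : G} (hf : f ∈ F) (hf1 : f ≠ 1) :
    ¬ IsOfFinOrder f := by
  lift f to F using hf
  rw [Submonoid.isOfFinOrder_coe]
  exact not_isOfFinOrder_of_isMulTorsionFree (by simpa using hf1)

theorem TreeSet.mem_powerLimit_of_smul_eq {v : Set (Set G)} {f : G} (h𝓔 : TreeSet 𝓔)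
    (hf : ¬ IsOfFinOrder f) (hB : AlmostInvariant B) (hv : IsVertex 𝓔 v) (hfv : f • v = v)
    (hBv : B ∈ v) : B ∈ powerLimit f := by
  obtain ⟨x, y, hxy⟩ := h𝓔.exists_forall_mem_or_mem hv
  have hpow (n : ℕ) : f ^ n * x ∈ B ∨ f ^ n * y ∈ B := by
    have hfv' : f ∈ MulAction.stabilizer G v := hfv
    have hmem : (f ^ n)⁻¹ • B ∈ v :=
      MulAction.mem_stabilizer_iff.1 (inv_mem (pow_mem hfv' n)) ▸ smul_mem_smul_set hBv
    simpa [mem_smul_set_iff_inv_smul_mem] using hxy _ hmem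
  have hlim := powerLimit_le_cofinite hf
  rw [← Ultrafilter.mem_coe, powerLimit]
  rcases Ultrafilter.eventually_or.1 (Filter.Eventually.of_forall hpow) with h | h
  · exact (hB.mem_map_mul_right_iff hlim x).1 h
  · exact (hB.mem_map_mul_right_iff hlim y).1 h

namespace EndTree

variable {v : Set (Set G)} {f : G}

theorem smul_ne [IsMulTorsionFree F] (h𝓔 : EndTree F 𝓔) (hf : f ∈ F) (hf1 : f ≠ 1)
    (hv : IsVertex 𝓔 v) : f • v ≠ v := by
  intro hfv
  have hford := not_isOfFinOrder_of_mem hf hf1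
  obtain ⟨B, hB, hBv, hBf⟩ : ∃ B ∈ 𝓔, B ∈ v ∧ Separates B (powerLimits f) := by
    obtain ⟨B, hB, hBf⟩ := h𝓔.exists_separates f hf hf1
    by_cases hBv : B ∈ v
    · exact ⟨B, hB, hBv, hBf⟩
    · exact ⟨Bᶜ, h𝓔.compl_mem B hB, (h𝓔.compl_mem_iff hv hB).2 hBv, separates_compl.2 hBf⟩
  have hBai := h𝓔.almostInvariant B hB
  have hfv' : f⁻¹ • v = v := inv_smul_eq_iff.2 hfv.symm
  exact hBf (iff_of_true (h𝓔.mem_powerLimit_of_smul_eq hford hBai hv hfv hBv)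
    (h𝓔.mem_powerLimit_of_smul_eq (isOfFinOrder_inv_iff.not.2 hford) hBai hv hfv' hBv))

theorem exists_minimal_separates_ne [IsMulTorsionFree F] (h𝓔 : EndTree F 𝓔) (hA : A ∈ 𝓔)
    (hf : f ∈ F) (hf1 : f ≠ 1) (hAf : A ∈ powerLimit f) (hAf' : A ∉ powerLimit f⁻¹) :
    ∃ D, Minimal (· ∈ edgeHead 𝓔 A) D ∧ D ≠ A ∧ Separates D (powerLimits f) := by
  by_contra! hD
  have hv := isVertex_edgeHead hA
  have hmin (D) (hDv : Minimal (· ∈ edgeHead 𝓔 A) D) : D ∈ powerLimit f := by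
    rcases eq_or_ne D A with rfl | hDA
    · exact hAf
    · refine (not_not.1 (hD D hDv hDA)).2 (Filter.mem_of_superset
        (Ultrafilter.compl_mem_iff_notMem.2 hAf') ?_)
      exact (h𝓔.compl_ssubset_of_minimal hv (h𝓔.minimal_edgeHead hA) hDv hDA.symm).subset
  refine h𝓔.smul_ne hf hf1 hv (h𝓔.eq_of_subset (hv.smul h𝓔.smul_mem f) hv fun B hB ↦ ?_)
  have hB𝓔 := (hv.smul h𝓔.smul_mem f).subset hB
  rw [mem_smul_set_iff_inv_smul_mem,
    h𝓔.mem_iff_mem_ultrafilter hv hmin (h𝓔.smul_mem _ B hB𝓔),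
    ← (h𝓔.almostInvariant B hB𝓔).mem_powerLimit_conj_iff (not_isOfFinOrder_of_mem hf hf1),
    mul_inv_cancel_right] at hB
  exact (h𝓔.mem_iff_mem_ultrafilter hv hmin hB𝓔).2 hB

end EndTree

theorem ReducedEndTree.exists_minimal_ne [IsMulTorsionFree F] [F.Normal]
    (h𝓔 : ReducedEndTree F 𝓔) (hA : A ∈ 𝓔) :
    ∃ D, Minimal (· ∈ edgeHead 𝓔 A) D ∧ D ≠ A ∧ D ∈ edgeOrbit G A := by
  obtain ⟨f, hf, hf1, hfA⟩ : ∃ f ∈ F, f ≠ 1 ∧ Separates A (powerLimits f) ∧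
      ∀ D ∈ 𝓔, Separates D (powerLimits f) → D ∈ edgeOrbit G A := by
    obtain ⟨f, hf, hf1, honly⟩ := h𝓔.exists_separates_only A hA
    have hford := not_isOfFinOrder_of_mem hf hf1
    obtain ⟨D, hD, hDf⟩ := h𝓔.exists_separates f hf hf1
    have hconj (B) (hB : B ∈ 𝓔) (h : G) :
        Separates B (powerLimits (h * f * h⁻¹)) ↔ Separates (h⁻¹ • B) (powerLimits f) := by
      simpa using ((h𝓔.almostInvariant B hB).smul h⁻¹).separates_powerLimits_conj_iff hford h
    obtain ⟨h, hAD⟩ := mem_edgeOrbit_comm.1 (honly D hD hDf)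
    refine ⟨h * f * h⁻¹, ‹F.Normal›.conj_mem f hf h, by simpa using hf1, ?_, fun B hB hBf ↦ ?_⟩
    · rw [hconj A hA]
      rcases hAD with rfl | rfl
      · rwa [inv_smul_smul]
      · rwa [inv_smul_smul, separates_compl]
    · rw [hconj B hB] at hBf
      simpa using smul_mem_edgeOrbit h (honly _ (h𝓔.smul_mem _ B hB) hBf)
  obtain ⟨hAf, honly⟩ := hfA
  by_cases h : A ∈ powerLimit f
  · obtain ⟨D, hD, hDA, hDf⟩ := h𝓔.exists_minimal_separates_ne hA hf hf1 h
      fun h' ↦ hAf (iff_of_true h h')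
    exact ⟨D, hD, hDA, honly D hD.prop.1 hDf⟩
  · obtain ⟨D, hD, hDA, hDf⟩ := h𝓔.exists_minimal_separates_ne hA (inv_mem hf) (by simpa using hf1)
      (by_contra fun h' ↦ hAf (iff_of_false h h')) (by rwa [inv_inv])
    refine ⟨D, hD, hDA, honly D hD.prop.1 ?_⟩
    simpa only [Separates, powerLimits, inv_inv, iff_comm] using hDf

end EndTree

/-! ### Endomorphisms close to the identity are injective -/

section Hopfian

instance finite_monoidHom_of_fg {G K : Type*} [Group G] [Group.FG G] [Group K] [Finite K] :
    Finite (G →* K) := by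
  obtain ⟨s, hs⟩ := Group.FG.out (G := G)
  refine Finite.of_injective (fun (f : G →* K) (x : s) ↦ f x) fun f f' h ↦ ?_
  exact MonoidHom.eq_of_eqOn_dense hs fun x hx ↦ congrFun h ⟨x, hx⟩

theorem injective_of_surjective_of_residuallyFinite {G : Type*} [Group G] [Group.FG G]
    [Group.ResiduallyFinite G] {f : G →* G} (hf : Function.Surjective f) :
    Function.Injective f := by
  rw [injective_iff_map_eq_one]
  intro g hg
  refine Group.eq_one_iff_forall_finiteIndexNormalSubroup g fun N ↦ ?_
  have hinj : Function.Injective fun θ : G →* G ⧸ (N : Subgroup G) ↦ θ.comp f :=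
    fun _ _ ↦ (MonoidHom.cancel_right hf).1
  obtain ⟨θ, hθ⟩ := Finite.surjective_of_injective hinj (QuotientGroup.mk' (N : Subgroup G))
  have hθg : θ (f g) = QuotientGroup.mk' (N : Subgroup G) g := DFunLike.congr_fun hθ g
  rw [hg, map_one] at hθg
  exact (QuotientGroup.eq_one_iff g).1 hθg.symm

/-- The letters act on the finite set of suffixes of `w` as partial left translations; extended to
permutations, they move `1` along the suffixes to `w`. -/
instance residuallyFinite_freeGroup {α : Type*} : Group.ResiduallyFinite (FreeGroup α) := by
  classical
  refine Group.residuallyFinite_of_forall_exists_finite_monoidHom fun w hw ↦ ?_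
  let S : Finset (FreeGroup α) := (w.toWord.tails.map FreeGroup.mk).toFinset
  have mem_S {L : List (α × Bool)} (hL : L <:+ w.toWord) : FreeGroup.mk L ∈ S :=
    List.mem_toFinset.2 (List.mem_map_of_mem ((List.mem_tails _ _).2 hL))
  have hσ (a : α) : ∃ σ : Equiv.Perm S, ∀ s : S, FreeGroup.of a * s ∈ S →
      (σ s : FreeGroup α) = FreeGroup.of a * s :=
    Set.MapsTo.exists_equiv_extend_of_card_eq (Fintype.card_coe S)
      (s := {s : S | FreeGroup.of a * s ∈ S}) (fun _ hs ↦ hs)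
      (((mul_right_injective (FreeGroup.of a)).comp Subtype.val_injective).injOn)
  choose σ hσ using hσ
  have hone : (1 : FreeGroup α) ∈ S := mem_S w.toWord.nil_suffix
  have lift_apply_one (L : List (α × Bool)) (hL : L <:+ w.toWord) :
      FreeGroup.lift σ (FreeGroup.mk L) ⟨1, hone⟩ = ⟨FreeGroup.mk L, mem_S hL⟩ := by
    induction L with
    | nil => rfl
    | cons x L ih =>
      obtain ⟨a, b⟩ := x
      have hL' : L <:+ w.toWord := (List.suffix_cons _ L).trans hL
      have hmem := mem_S hL
      cases b with
      | true =>
        have hmk : FreeGroup.mk ((a, true) :: L) = FreeGroup.of a * FreeGroup.mk L := rfl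
        simp only [hmk, map_mul, Equiv.Perm.mul_apply, ih hL', FreeGroup.lift_apply_of] at hmem ⊢
        exact Subtype.ext (hσ a _ hmem)
      | false =>
        have hmk : FreeGroup.mk ((a, false) :: L) = (FreeGroup.of a)⁻¹ * FreeGroup.mk L := rfl
        simp only [hmk, map_mul, map_inv, Equiv.Perm.mul_apply, ih hL', FreeGroup.lift_apply_of,
          Equiv.Perm.inv_eq_iff_eq] at hmem ⊢
        exact Subtype.ext <| by rw [hσ a] <;> simp [mem_S hL']
  refine ⟨Equiv.Perm S, inferInstance, inferInstance, FreeGroup.lift σ, fun h ↦ hw ?_⟩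
  simpa [FreeGroup.mk_toWord, h, eq_comm] using lift_apply_one _ (List.suffix_refl _)

theorem injective_of_forall_comp_eq {α : Type*} [Finite α] {θ : FreeGroup α →* FreeGroup α}
    (hθ : ∀ χ : FreeGroup α →* Multiplicative (ZMod 2), χ.comp θ = χ) : Function.Injective θ := by
  let e := IsFreeGroup.mulEquiv θ.range
  let r : FreeGroup α →* FreeGroup (IsFreeGroup.Generators θ.range) :=
    e.symm.toMonoidHom.comp θ.rangeRestrict
  have hr : Function.Surjective r := e.symm.surjective.comp θ.rangeRestrict_surjective
  have : Group.FG (FreeGroup (IsFreeGroup.Generators θ.range)) := Group.fg_of_surjective hr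
  have := finite_of_fg_freeGroup (IsFreeGroup.Generators θ.range)
  have hbij : Function.Bijective
      fun χ : FreeGroup (IsFreeGroup.Generators θ.range) →* Multiplicative (ZMod 2) ↦ χ.comp r := by
    refine ⟨fun _ _ ↦ (MonoidHom.cancel_right hr).1, fun χ ↦
      ⟨(χ.comp θ.range.subtype).comp e.toMonoidHom, MonoidHom.ext fun x ↦ ?_⟩⟩
    simpa [r] using DFunLike.congr_fun (hθ χ) x
  have hcard : 2 ^ Nat.card (IsFreeGroup.Generators θ.range) = 2 ^ Nat.card α := by
    simpa [Nat.card_fun] using Nat.card_congr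
      ((FreeGroup.lift.trans (Equiv.ofBijective _ hbij)).trans FreeGroup.lift.symm)
  obtain ⟨b⟩ := Finite.card_eq.1 (Nat.pow_right_injective le_rfl hcard)
  have hinj := injective_of_surjective_of_residuallyFinite
    (f := (FreeGroup.freeGroupCongr b).toMonoidHom.comp r)
    ((FreeGroup.freeGroupCongr b).surjective.comp hr)
  have hr' : Function.Injective r := .of_comp (f := FreeGroup.freeGroupCongr b) hinj
  have hθ' : Function.Injective θ.rangeRestrict := .of_comp (f := e.symm) hr'
  exact fun x y hxy ↦ hθ' (Subtype.ext hxy)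

end Hopfian

section CloseToIdentity

variable {G α : Type*} [Group G] (F : Subgroup G)

/-- The elements of `F` that die in every homomorphism from `F` to a group of order two. -/
def modTwoKernel : Subgroup G :=
  (⨅ χ : F →* Multiplicative (ZMod 2), χ.ker).map F.subtype

variable {F}

theorem mem_modTwoKernel {g : G} : g ∈ modTwoKernel F ↔
    ∃ h : g ∈ F, ∀ χ : F →* Multiplicative (ZMod 2), χ ⟨g, h⟩ = 1 := by
  simp [modTwoKernel, Subgroup.mem_iInf]

theorem modTwoKernel_le : modTwoKernel F ≤ F := Subgroup.map_subtype_le _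

instance [F.Normal] : (modTwoKernel F).Normal where
  conj_mem g hg x := by
    obtain ⟨hgF, hg⟩ := mem_modTwoKernel.1 hg
    exact mem_modTwoKernel.2 ⟨Subgroup.Normal.conj_mem ‹_› g hgF x, fun χ ↦
      hg (χ.comp (MulAut.conjNormal (H := F) x).toMonoidHom)⟩

instance [Group.FG F] [F.FiniteIndex] : (modTwoKernel F).FiniteIndex where
  index_ne_zero := by
    have : (⨅ χ : F →* Multiplicative (ZMod 2), χ.ker).FiniteIndex :=
      Subgroup.finiteIndex_iInf fun χ ↦ Subgroup.finiteIndex_ker χ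
    rw [modTwoKernel, Subgroup.index_map_subtype]
    exact mul_ne_zero Subgroup.FiniteIndex.index_ne_zero Subgroup.FiniteIndex.index_ne_zero

theorem injective_of_mul_inv_mem_modTwoKernel [Finite α] (e : F ≃* FreeGroup α) {ψ : G →* G}
    (hψ : ∀ g, ψ g * g⁻¹ ∈ modTwoKernel F) : Function.Injective ψ := by
  have hψF (x : F) : ψ x ∈ F := by
    simpa using F.mul_mem (modTwoKernel_le (hψ x)) x.2
  let θ : F →* F := (ψ.comp F.subtype).codRestrict F hψF
  have hθ (χ : F →* Multiplicative (ZMod 2)) (x : F) : χ (θ x) = χ x := by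
    obtain ⟨_, hx⟩ := mem_modTwoKernel.1 (hψ x)
    rw [← mul_inv_eq_one, ← map_inv, ← map_mul]
    exact hx χ
  have hinj : Function.Injective ((e.toMonoidHom.comp θ).comp e.symm.toMonoidHom) :=
    injective_of_forall_comp_eq fun χ ↦ MonoidHom.ext fun x ↦ by
      simpa using hθ (χ.comp e.toMonoidHom) (e.symm x)
  rw [injective_iff_map_eq_one] at hinj ⊢
  intro g hg
  have hgF : g ∈ F := by simpa [hg] using modTwoKernel_le (hψ g)
  have hθg : θ ⟨g, hgF⟩ = 1 := Subtype.ext hg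
  have heg : e ⟨g, hgF⟩ = 1 := hinj _ (by simp [hθg])
  simpa using heg

end CloseToIdentity

/-! ### Edge stabilizers have finite centralizers -/

section FiniteIndex

variable {G : Type*} [Group G] {H N : Subgroup G}

theorem natCard_eq_relIndex_of_disjoint (h : Disjoint N H) : Nat.card H = N.relIndex H := by
  rw [← Subgroup.inf_relIndex_right, h.eq_bot, Subgroup.relIndex_bot_left]

theorem finite_of_disjoint_of_finiteIndex [N.FiniteIndex] (h : Disjoint N H) : Finite H :=
  Nat.finite_of_card_ne_zero <| by
    rw [natCard_eq_relIndex_of_disjoint h]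
    exact Subgroup.FiniteIndex.index_ne_zero (H := N.subgroupOf H)

theorem natCard_le_index_of_disjoint [N.FiniteIndex] (h : Disjoint N H) :
    Nat.card H ≤ N.index := by
  rw [natCard_eq_relIndex_of_disjoint h, ← Subgroup.relIndex_top_right]
  exact Subgroup.relIndex_le_of_le_right le_top (by simp [Subgroup.FiniteIndex.index_ne_zero])

theorem exists_mem_inf_ne_one (N : Subgroup G) [N.FiniteIndex] (hH : Infinite H) :
    ∃ x ∈ N, x ∈ H ∧ x ≠ 1 := by
  by_contra! h
  exact not_finite_iff_infinite.2 hH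
    (finite_of_disjoint_of_finiteIndex (Subgroup.disjoint_def.2 (h _)))

theorem exists_pow_mem_commute [N.Normal] [N.FiniteIndex] [Finite H] {h : G}
    (hH : ∀ x ∈ H, h * x * h⁻¹ ∈ H) :
    ∃ j, 0 < j ∧ h ^ j ∈ N ∧ ∀ x ∈ H, Commute x (h ^ j) := by
  let h' : Subgroup.normalizer (H : Set G) := ⟨h, Subgroup.mem_normalizer_fintype hH⟩
  obtain ⟨j, hj, hpow⟩ := isOfFinOrder_iff_pow_eq_one.1
    (isOfFinOrder_of_finite (H.normalizerMonoidHom h', QuotientGroup.mk' N h))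
  obtain ⟨hconj, hmk⟩ := Prod.ext_iff.1 hpow
  simp only [Prod.pow_fst, Prod.pow_snd, ← map_pow] at hconj hmk
  refine ⟨j, hj, (QuotientGroup.eq_one_iff _).1 hmk, fun x hx ↦ ?_⟩
  have hx' : h ^ j * x * (h ^ j)⁻¹ = x :=
    congrArg Subtype.val (DFunLike.congr_fun hconj (⟨x, hx⟩ : H))
  exact (mul_inv_eq_iff_eq_mul.1 hx').symm

end FiniteIndex

section Twists

variable {G : Type*} [Group G] {F N : Subgroup G} {𝓔 : Set (Set G)} {A B : Set G}

/-- Every endomorphism congruent to the identity modulo `N` is bijective. -/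
def BijectiveModulo (N : Subgroup G) : Prop :=
  ∀ ψ : G →* G, (∀ g, ψ g * g⁻¹ ∈ N) → Function.Bijective ψ

theorem OutFinite.exists_infinite_conj (hout : OutFinite G) {ψ : ℕ → G →* G}
    (hψ : ∀ m, Function.Bijective (ψ m)) :
    ∃ I : Set ℕ, I.Infinite ∧ ∃ m₀, ∀ m ∈ I, ∃ x, ∀ g, ψ m g = x * ψ m₀ g * x⁻¹ := by
  let Ψ (m : ℕ) : MulAut G := MulEquiv.ofBijective (ψ m) (hψ m)
  have : (MulAut.conj : G →* MulAut G).range.FiniteIndex := hout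
  have : Finite (MulAut G ⧸ (MulAut.conj : G →* MulAut G).range) :=
    Subgroup.finite_quotient_of_finiteIndex
  obtain ⟨q, hq⟩ := Finite.exists_infinite_fiber
    fun m ↦ (Ψ m : MulAut G ⧸ (MulAut.conj : G →* MulAut G).range)
  rw [infinite_coe_iff] at hq
  obtain ⟨m₀, hm₀⟩ := hq.nonempty
  refine ⟨_, hq, m₀, fun m hm ↦ ?_⟩
  obtain ⟨y, hy⟩ := QuotientGroup.eq.1 (hm₀.trans hm.symm)
  refine ⟨ψ m₀ y, fun g ↦ ?_⟩
  have hΨ : Ψ m = Ψ m₀ * MulAut.conj y := by rw [hy, mul_inv_cancel_left]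
  calc ψ m g = Ψ m₀ (y * g * y⁻¹) := DFunLike.congr_fun hΨ g
    _ = ψ m₀ (y * g * y⁻¹) := rfl
    _ = ψ m₀ y * ψ m₀ g * (ψ m₀ y)⁻¹ := by simp

theorem EndTree.disjoint_stabilizer [IsMulTorsionFree F] (h𝓔 : EndTree F 𝓔)
    {v : Set (Set G)} (hv : IsVertex 𝓔 v) : Disjoint F (MulAction.stabilizer G v) :=
  Subgroup.disjoint_def.2 fun hf hfv ↦ by_contra fun hf1 ↦ h𝓔.smul_ne hf hf1 hv hfv

theorem EndTree.disjoint_stabilizer_edge [IsMulTorsionFree F] (h𝓔 : EndTree F 𝓔) (hA : A ∈ 𝓔) :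
    Disjoint F (MulAction.stabilizer G A) :=
  (h𝓔.disjoint_stabilizer (isVertex_edgeHead hA)).mono_right
    (stabilizer_le_stabilizer_edgeHead h𝓔.smul_mem A)

theorem TreeSet.exists_hnn_twist (h𝓔 : TreeSet 𝓔) (hG : ∀ (g : G), ∀ A ∈ 𝓔, g • A ∈ 𝓔)
    (hA : A ∈ 𝓔) (hAc : Aᶜ ∉ MulAction.orbit G A) {h : G}
    (hh : h • edgeHead 𝓔 Aᶜ = edgeHead 𝓔 A) {K : Type*} [Group K] (φ : G →* K) {s : K}
    (hs : ∀ g ∈ MulAction.stabilizer G A, Commute (φ g) s) {M : Subgroup K} [M.Normal]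
    (hsM : s ∈ M) : ∃ ψ : G →* K, ψ h = s * φ h ∧ ∀ g, ψ g * (φ g)⁻¹ ∈ M := by
  obtain ⟨ψ, hψ, hψM⟩ := exists_isEdgeTwist (φ := φ) h𝓔 hG hA hs M hsM
  exact ⟨ψ, by simpa [orbitLabel_of_notMem hAc] using hψ.eq_of_smul_tail_eq_head h hh, hψM⟩

/-- Multiplying the stable letter `h` by powers of `h ^ j` changes the exponent sum of `h`, which
is a conjugacy invariant, so these twists are pairwise non-conjugate. -/
theorem TreeSet.not_forall_commute_pow_stableLetter [N.Normal] (hN : BijectiveModulo N)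
    (hout : OutFinite G) (h𝓔 : TreeSet 𝓔) (hG : ∀ (g : G), ∀ A ∈ 𝓔, g • A ∈ 𝓔) (hA : A ∈ 𝓔)
    (hAc : Aᶜ ∉ MulAction.orbit G A) {h : G} (hh : h • edgeHead 𝓔 Aᶜ = edgeHead 𝓔 A) {j : ℕ}
    (hj : 0 < j) (hjN : h ^ j ∈ N) : ¬ ∀ g ∈ MulAction.stabilizer G A, Commute g (h ^ j) := by
  intro hcomm
  have hψ (m : ℕ) : ∃ ψ : G →* G, ψ h = (h ^ j) ^ m * h ∧ Function.Bijective ψ := by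
    obtain ⟨ψ, hψ, hψN⟩ := h𝓔.exists_hnn_twist hG hA hAc hh (MonoidHom.id G)
      (fun g hg ↦ (hcomm g hg).pow_right m) (N.pow_mem hjN m)
    exact ⟨ψ, hψ, hN ψ hψN⟩
  choose ψ hψ hbij using hψ
  obtain ⟨χ, hχ, -⟩ := h𝓔.exists_hnn_twist hG hA hAc hh (1 : G →* Multiplicative ℤ)
    (s := Multiplicative.ofAdd 1) (fun _ _ ↦ Commute.all _ _) (Subgroup.mem_top _)
  obtain ⟨I, hI, m₀, hconj⟩ := hout.exists_infinite_conj hbij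
  obtain ⟨m, hm, hne⟩ := hI.exists_notMem_finset {m₀}
  obtain ⟨x, hx⟩ := hconj m hm
  have hχψ (m : ℕ) : (χ (ψ m h)).toAdd = m * j + 1 := by
    simp [hψ, hχ]
  have hχeq : χ (ψ m h) = χ (ψ m₀ h) := by
    rw [hx, map_mul, map_mul, map_inv, mul_comm (χ x), mul_inv_cancel_right]
  have hmul : (m * j : ℤ) = m₀ * j := by
    simpa [hχψ] using congrArg Multiplicative.toAdd hχeq
  have hj' : (j : ℤ) ≠ 0 := by positivity
  exact hne (by simpa using mul_right_cancel₀ hj' hmul)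

theorem ReducedEndTree.exists_smul_edgeHead_eq_smul_ne [IsMulTorsionFree F] [F.Normal] [N.Normal]
    [N.FiniteIndex] (hN : BijectiveModulo N) (hout : OutFinite G) (h𝓔 : ReducedEndTree F 𝓔)
    (hA : A ∈ 𝓔) : ∃ g : G, g • edgeHead 𝓔 A = edgeHead 𝓔 A ∧ g • A ≠ A := by
  by_contra! hfix
  obtain ⟨D, hD, hDA, hDorb⟩ := h𝓔.exists_minimal_ne hA
  have hv := h𝓔.eq_edgeHead (isVertex_edgeHead hA) hD
  have hDorb' : D ∉ MulAction.orbit G A := by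
    rintro ⟨g, rfl⟩
    exact hDA (hfix g (by rw [smul_edgeHead h𝓔.smul_mem]; exact hv.symm))
  obtain ⟨h, rfl | rfl⟩ := hDorb
  · exact hDorb' ⟨h, rfl⟩
  have hAc : Aᶜ ∉ MulAction.orbit G A := fun hAc ↦
    hDorb' (MulAction.mem_orbit_of_mem_orbit h hAc)
  have hh : h • edgeHead 𝓔 Aᶜ = edgeHead 𝓔 A := by rw [smul_edgeHead h𝓔.smul_mem, ← hv]
  have : Finite (MulAction.stabilizer G A) := h𝓔.finite_stabilizer A hA
  obtain ⟨j, hj, hjN, hcomm⟩ := exists_pow_mem_commute (H := MulAction.stabilizer G A) (N := N)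
    (h := h) fun x hx ↦ by
      rw [← stabilizer_compl] at hx
      have hx' := stabilizer_le_stabilizer_edgeHead h𝓔.smul_mem _ hx
      rw [MulAction.mem_stabilizer_iff] at hx'
      refine hfix _ ?_
      rw [mul_smul, mul_smul, ← hh, inv_smul_smul, hx']
  exact h𝓔.not_forall_commute_pow_stableLetter hN hout h𝓔.smul_mem hA hAc hh hj hjN hcomm

theorem TreeSet.smul_eq_of_minimal_notMem (h𝓔 : TreeSet 𝓔) {v w : Set (Set G)}
    (hv : IsVertex 𝓔 v) (hw : IsVertex 𝓔 w) (hA : Minimal (· ∈ v) A) (hAw : A ∉ w) {g : G}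
    (hgv : g • v = v) (hgw : g • w = w) : g • A = A := by
  have hgA := minimal_smul hA g
  rw [hgv] at hgA
  refine h𝓔.minimal_unique_of_notMem hv hw hgA ?_ hA hAw
  rwa [← hgw, smul_mem_smul_set_iff]

theorem EndTree.exists_stabilizer_eq_of_mem_centralizer [IsMulTorsionFree F] (h𝓔 : EndTree F 𝓔)
    {v : Set (Set G)} (hv : IsVertex 𝓔 v) {z : G} (hzF : z ∈ F) (hz1 : z ≠ 1)
    (hz : z ∈ Subgroup.centralizer (MulAction.stabilizer G v : Set G)) :
    ∃ D, Minimal (· ∈ v) D ∧ MulAction.stabilizer G D = MulAction.stabilizer G v := by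
  have hzv := hv.smul h𝓔.smul_mem z
  obtain ⟨D, hD, hDz⟩ := h𝓔.exists_minimal_notMem hv hzv (h𝓔.smul_ne hzF hz1 hv).symm
  refine ⟨D, hD, le_antisymm ?_ fun g hg ↦ ?_⟩
  · rw [h𝓔.eq_edgeHead hv hD]
    exact stabilizer_le_stabilizer_edgeHead h𝓔.smul_mem D
  · refine h𝓔.smul_eq_of_minimal_notMem hv hzv hD hDz hg ?_
    rw [← mul_smul, Subgroup.mem_centralizer_iff.1 hz g hg, mul_smul, hg]

theorem ReducedEndTree.finite_centralizer_stabilizer_edgeHead [IsMulTorsionFree F] [F.Normal]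
    [F.FiniteIndex] [N.Normal] [N.FiniteIndex] (hN : BijectiveModulo N) (hout : OutFinite G)
    (h𝓔 : ReducedEndTree F 𝓔) (hA : A ∈ 𝓔)
    (hmax : ∀ D ∈ 𝓔, Infinite (Subgroup.centralizer (MulAction.stabilizer G D : Set G)) →
      Nat.card (MulAction.stabilizer G D) ≤ Nat.card (MulAction.stabilizer G A)) :
    Finite (Subgroup.centralizer (MulAction.stabilizer G (edgeHead 𝓔 A) : Set G)) := by
  by_contra hinf
  rw [not_finite_iff_infinite] at hinf
  have hv := isVertex_edgeHead hA
  obtain ⟨z, hzF, hz, hz1⟩ := exists_mem_inf_ne_one F hinf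
  obtain ⟨D, hD, hDstab⟩ := h𝓔.exists_stabilizer_eq_of_mem_centralizer hv hzF hz1 hz
  have hle := hmax D (hv.subset hD.prop) (by rwa [hDstab])
  rw [hDstab] at hle
  obtain ⟨g, hgv, hgA⟩ := h𝓔.exists_smul_edgeHead_eq_smul_ne hN hout hA
  have := finite_of_disjoint_of_finiteIndex (h𝓔.disjoint_stabilizer hv)
  have heq := Subgroup.eq_of_le_of_card_ge (stabilizer_le_stabilizer_edgeHead h𝓔.smul_mem A) hle
  exact hgA (heq.ge hgv)

theorem exists_ne_eq_of_isEdgeTwist (hout : OutFinite G) {t : ℕ → G} {ψ : ℕ → G →* G}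
    (hψ : ∀ m, IsEdgeTwist 𝓔 (MonoidHom.id G) A (t m) (ψ m))
    (hbij : ∀ m, Function.Bijective (ψ m))
    (htail : Finite (Subgroup.centralizer (MulAction.stabilizer G (edgeHead 𝓔 Aᶜ) : Set G)))
    (hhead : Finite (Subgroup.centralizer (MulAction.stabilizer G (edgeHead 𝓔 A) : Set G))) :
    ∃ m n, m ≠ n ∧ t m = t n := by
  obtain ⟨I, hI, m₀, hconj⟩ := hout.exists_infinite_conj hbij
  have hmaps : MapsTo t I
      ((Subgroup.centralizer (MulAction.stabilizer G (edgeHead 𝓔 Aᶜ) : Set G) : Set G) * {t m₀} *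
        (Subgroup.centralizer (MulAction.stabilizer G (edgeHead 𝓔 A) : Set G) : Set G)) := by
    intro m hm
    obtain ⟨x, hx⟩ := hconj m hm
    refine ⟨x * t m₀, ⟨x, ?_, _, rfl, rfl⟩, (t m₀)⁻¹ * x⁻¹ * t m, ?_, by group⟩
    · refine Subgroup.mem_centralizer_iff.2 fun g hg ↦ ?_
      have hxg := hx g
      rw [(hψ m).eq_of_smul_tail g hg, (hψ m₀).eq_of_smul_tail g hg] at hxg
      exact eq_mul_inv_iff_mul_eq.1 hxg
    · refine Subgroup.mem_centralizer_iff.2 fun g hg ↦ ?_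
      have hxg := hx g
      rw [(hψ m).eq_of_smul_head g hg, (hψ m₀).eq_of_smul_head g hg] at hxg
      calc g * ((t m₀)⁻¹ * x⁻¹ * t m)
          = (t m₀)⁻¹ * x⁻¹ * (x * (t m₀ * g * (t m₀)⁻¹) * x⁻¹) * t m := by group
        _ = (t m₀)⁻¹ * x⁻¹ * t m * g := by
          rw [← MonoidHom.id_apply G g, ← hxg]
          group
  obtain ⟨m, -, n, -, hne, htmn⟩ := hI.exists_ne_map_eq_of_mapsTo hmaps
    ((Set.Finite.mul htail (finite_singleton _)).mul hhead)
  exact ⟨m, n, hne, htmn⟩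

theorem Nested.eq_or_eq_compl_of_smul_eq_compl {X : Type*} [MulAction G X] {A B : Set X}
    (h : Nested A B) {g : G} (hA : g • A = Aᶜ) (hB : g • B = Bᶜ) : B = A ∨ B = Aᶜ := by
  have hA' : g • Aᶜ = A := by rw [smul_set_compl, hA, _root_.compl_compl]
  have hB' : g • Bᶜ = B := by rw [smul_set_compl, hB, _root_.compl_compl]
  rcases h with h | h | h | h <;> have hg := smul_set_mono (a := g) h
  · rw [hA, hB, compl_subset_compl] at hg
    exact .inl (hg.antisymm h)
  · rw [hA, hB'] at hg
    exact .inr ((subset_compl_comm.1 h).antisymm hg)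
  · rw [hA', hB] at hg
    exact .inr ((subset_compl_comm.1 hg).antisymm h)
  · rw [hA', hB'] at hg
    exact .inl ((compl_subset_compl.1 h).antisymm hg)

theorem EndTree.injective_twist_pow [IsMulTorsionFree F] (h𝓔 : EndTree F 𝓔) (hA : A ∈ 𝓔) {c : G}
    (hcF : c ∈ F) (hc1 : c ≠ 1)
    (hc : c ∈ Subgroup.centralizer (MulAction.stabilizer G A : Set G)) :
    Function.Injective fun m : ℕ ↦ (orbitLabel (MonoidHom.id G) A (c ^ m) Aᶜ)⁻¹ * c ^ m := by
  have hzpow := injective_zpow_iff_not_isOfFinOrder.2 (not_isOfFinOrder_of_mem hcF hc1)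
  have hpow := injective_pow_iff_not_isOfFinOrder.2 (not_isOfFinOrder_of_mem hcF hc1)
  intro m n hmn
  dsimp only at hmn
  by_cases hAc : Aᶜ ∈ MulAction.orbit G A
  · obtain ⟨h, hh⟩ := hAc
    dsimp only at hh
    have hcomm (k : ℕ) : ∀ g ∈ MulAction.stabilizer G A, Commute (MonoidHom.id G g) (c ^ k) :=
      fun g hg ↦ Commute.pow_right (Subgroup.mem_centralizer_iff.1 hc g hg) k
    rw [← hh, orbitLabel_smul_self (hcomm m), orbitLabel_smul_self (hcomm n)] at hmn
    simp only [MonoidHom.id_apply] at hmn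
    let j : ℤ := m - n
    have hj : h * c ^ j = c ^ j * h := by
      rw [zpow_sub, zpow_natCast, zpow_natCast]
      calc h * (c ^ m * (c ^ n)⁻¹)
          = h * c ^ m * h⁻¹ * (h * c ^ n * h⁻¹)⁻¹ * h := by group
        _ = c ^ m * (c ^ n)⁻¹ * h := by
          rw [inv_mul_eq_iff_eq_mul, ← mul_assoc] at hmn
          rw [mul_left_inj, eq_mul_inv_iff_mul_eq]
          exact hmn.symm
    have hhB : h • c ^ j • A = (c ^ j • A)ᶜ := by
      rw [← mul_smul, hj, mul_smul, hh, smul_set_compl]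
    have hsq : (c ^ j * c ^ j) • A = A := by
      rw [mul_smul]
      rcases (h𝓔.nested A hA _ (h𝓔.smul_mem (c ^ j) A hA)).eq_or_eq_compl_of_smul_eq_compl hh hhB
        with hB | hB
      · rw [hB, hB]
      · rw [hB, smul_set_compl, hB, _root_.compl_compl]
    have hone : c ^ (j + j) = c ^ (0 : ℤ) := by
      rw [zpow_add, zpow_zero]
      exact Subgroup.disjoint_def.1 (h𝓔.disjoint_stabilizer_edge hA)
        (F.mul_mem (F.zpow_mem hcF j) (F.zpow_mem hcF j)) hsq
    have := hzpow hone
    omega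
  · simpa [orbitLabel_of_notMem hAc, hpow.eq_iff] using hmn

/-- Otherwise, an edge with infinite centralizer and largest stabilizer could be twisted by the
powers of an element of that centralizer, giving infinitely many outer automorphisms. -/
theorem ReducedEndTree.finite_centralizer_stabilizer [IsMulTorsionFree F] [F.Normal]
    [F.FiniteIndex] [N.Normal] [N.FiniteIndex] (hNF : N ≤ F) (hN : BijectiveModulo N)
    (hout : OutFinite G) (h𝓔 : ReducedEndTree F 𝓔) (hA : A ∈ 𝓔) :
    Finite (Subgroup.centralizer (MulAction.stabilizer G A : Set G)) := by
  by_contra hinf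
  rw [not_finite_iff_infinite] at hinf
  obtain ⟨A, ⟨hA, hinf⟩, hmax⟩ := Set.Finite.exists_maximalFor'
    (fun B ↦ Nat.card (MulAction.stabilizer G B))
    {B ∈ 𝓔 | Infinite (Subgroup.centralizer (MulAction.stabilizer G B : Set G))}
    ((finite_Iic F.index).subset (image_subset_iff.2 fun B hB ↦
      natCard_le_index_of_disjoint (h𝓔.disjoint_stabilizer_edge hB.1))) ⟨A, hA, hinf⟩
  have hmax (D) (hD : D ∈ 𝓔)
      (hDinf : Infinite (Subgroup.centralizer (MulAction.stabilizer G D : Set G))) :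
      Nat.card (MulAction.stabilizer G D) ≤ Nat.card (MulAction.stabilizer G A) :=
    (le_total _ _).elim id (hmax ⟨hD, hDinf⟩)
  have hhead := h𝓔.finite_centralizer_stabilizer_edgeHead hN hout hA hmax
  have htail := h𝓔.finite_centralizer_stabilizer_edgeHead hN hout (h𝓔.compl_mem A hA)
    (by simpa using hmax)
  obtain ⟨c, hcN, hc, hc1⟩ := exists_mem_inf_ne_one N hinf
  have htwist (m : ℕ) := exists_isEdgeTwist (φ := MonoidHom.id G) h𝓔.toTreeSet h𝓔.smul_mem hA
    (fun g hg ↦ Commute.pow_right (Subgroup.mem_centralizer_iff.1 hc g hg) m) N (N.pow_mem hcN m)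
  choose ψ hψ hψN using htwist
  obtain ⟨m, n, hne, htmn⟩ :=
    exists_ne_eq_of_isEdgeTwist hout hψ (fun m ↦ hN _ (hψN m)) htail hhead
  exact hne (h𝓔.injective_twist_pow hA (hNF hcN) hc1 hc htmn)

end Twists

/-! ### Finite groups acting on trees -/

section FixedCell

variable {X K : Type*} [Group K] [MulAction K X] {𝓔 v w : Set (Set X)} {A B : Set X} {S : Set X}

/-- A cell of the tree of `𝓔`: a vertex, or an unoriented edge encoded as the pair `{A, Aᶜ}`. -/
def IsCell (𝓔 c : Set (Set X)) : Prop :=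
  IsVertex 𝓔 c ∨ ∃ A ∈ 𝓔, c = {A, Aᶜ}

/-- A consistent orientation of some of the edges of the tree of `𝓔`, for instance of all edges
towards a given vertex: an edge pointing towards an oriented edge `B` along a path is oriented
as well. -/
structure IsPartialOrientation (𝓔 v : Set (Set X)) : Prop where
  subset : v ⊆ 𝓔
  mem_of_subset : ∀ B ∈ v, ∀ C ∈ 𝓔, B ⊆ C → C ∈ v
  compl_notMem : ∀ B ∈ v, Bᶜ ∉ v

/-- The edges of the tree of `𝓔` which are not oriented by `v`. -/
def unoriented (𝓔 v : Set (Set X)) : Set (Set X) :=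
  {B ∈ 𝓔 | B ∉ v ∧ Bᶜ ∉ v}

theorem TreeSet.isVertex_of_isPartialOrientation (h𝓔 : TreeSet 𝓔) (hne : 𝓔.Nonempty)
    (hS : S.Finite) (hv : IsPartialOrientation 𝓔 v) (hSv : {B ∈ 𝓔 | S ⊆ B} ⊆ v)
    (htotal : unoriented 𝓔 v = ∅) : IsVertex 𝓔 v := by
  have htotal (B) (hB : B ∈ 𝓔) (hBv : B ∉ v) : Bᶜ ∈ v := by
    by_contra h
    exact (htotal.subset ⟨hB, hBv, h⟩).elim
  obtain ⟨A, hA⟩ : v.Nonempty := by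
    obtain ⟨A, hA⟩ := hne
    by_cases h : A ∈ v
    exacts [⟨A, h⟩, ⟨Aᶜ, htotal A hA h⟩]
  obtain ⟨y, hy⟩ := h𝓔.nonempty Aᶜ (h𝓔.compl_mem A (hv.subset hA))
  have hfin : {B ∈ v | B ⊆ A}.Finite := by
    refine (hS.biUnion fun x _ ↦ h𝓔.finite_interval x y).subset ?_
    rintro B ⟨hB, hBA⟩
    obtain ⟨x, hxS, hxB⟩ : ∃ x ∈ S, x ∉ Bᶜ := not_subset.1 fun h ↦
      hv.compl_notMem B hB (hSv ⟨h𝓔.compl_mem B (hv.subset hB), h⟩)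
    exact mem_biUnion hxS ⟨hv.subset hB, not_not.1 hxB, fun h ↦ hy (hBA h)⟩
  obtain ⟨M, ⟨hM, hMA⟩, hmin⟩ := hfin.exists_minimal ⟨A, hA, subset_rfl⟩
  have hmin (B) (hB : B ∈ v) (hBM : B ⊆ M) : M ⊆ B := hmin ⟨hB, hBM.trans hMA⟩ hBM
  refine ⟨M, hv.subset hM, Subset.antisymm (fun B hB ↦ ⟨hv.subset hB, ?_⟩) ?_⟩
  · rcases h𝓔.nested M (hv.subset hM) B (hv.subset hB) with h | h | h | h
    · exact .inl h
    · exact (hv.compl_notMem B hB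
        (hv.mem_of_subset M hM _ (h𝓔.compl_mem B (hv.subset hB)) h)).elim
    · exact .inr (h.ssubset_of_ne fun h ↦ hv.compl_notMem M hM (h ▸ hB))
    · exact .inl (hmin B hB (compl_subset_compl.1 h))
  · rintro B ⟨hB, h | h⟩
    · exact hv.mem_of_subset M hM B hB h
    · by_contra hBv
      exact h.not_subset (subset_compl_comm.1 (hmin _ (htotal B hB hBv)
        (compl_subset_comm.1 h.subset)))

theorem TreeSet.compl_mem_unoriented (h𝓔 : TreeSet 𝓔) (hB : B ∈ unoriented 𝓔 v) :
    Bᶜ ∈ unoriented 𝓔 v :=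
  ⟨h𝓔.compl_mem B hB.1, hB.2.2, by simpa using hB.2.1⟩

theorem TreeSet.eq_or_eq_compl_of_maximal_unoriented (h𝓔 : TreeSet 𝓔)
    (hA : Maximal (· ∈ unoriented 𝓔 v) A) (hA' : Maximal (· ∈ unoriented 𝓔 v) Aᶜ)
    (hB : B ∈ unoriented 𝓔 v) : B = A ∨ B = Aᶜ := by
  have hB' := h𝓔.compl_mem_unoriented hB
  rcases h𝓔.nested A hA.prop.1 B hB.1 with h | h | h | h
  · exact .inl (hA.eq_of_le hB h).symm
  · exact .inr (eq_compl_comm.1 (hA.eq_of_le hB' h))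
  · exact .inr (hA'.eq_of_le hB h).symm
  · exact .inl (compl_injective (hA'.eq_of_le hB' h)).symm

theorem TreeSet.isPartialOrientation_union_maximal (h𝓔 : TreeSet 𝓔)
    (hv : IsPartialOrientation 𝓔 v)
    (hmax : ∀ A, Maximal (· ∈ unoriented 𝓔 v) A → ¬ Maximal (· ∈ unoriented 𝓔 v) Aᶜ) :
    IsPartialOrientation 𝓔 (v ∪ {A | Maximal (· ∈ unoriented 𝓔 v) A}) where
  subset := union_subset hv.subset fun B hB ↦ hB.prop.1
  mem_of_subset := by
    rintro B (hB | hB) C hC hBC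
    · exact .inl (hv.mem_of_subset B hB C hC hBC)
    · by_cases hCv : C ∈ v
      · exact .inl hCv
      by_cases hCv' : Cᶜ ∈ v
      · exact (hB.prop.2.2 (hv.mem_of_subset _ hCv' _
          (h𝓔.compl_mem B hB.prop.1) (compl_subset_compl.2 hBC))).elim
      · exact .inr (hB.eq_of_le ⟨hC, hCv, hCv'⟩ hBC ▸ hB)
  compl_notMem := by
    rintro B (hB | hB) (hB' | hB')
    · exact hv.compl_notMem B hB hB'
    · exact hB'.prop.2.2 (by rwa [_root_.compl_compl])
    · exact hB.prop.2.2 hB'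
    · exact hmax B hB hB'

theorem maximal_unoriented_smul (hK : ∀ (k : K), ∀ B ∈ 𝓔, k • B ∈ 𝓔)
    (hv : ∀ (k : K), ∀ B ∈ v, k • B ∈ v) (k : K) (hB : Maximal (· ∈ unoriented 𝓔 v) B) :
    Maximal (· ∈ unoriented 𝓔 v) (k • B) := by
  have hU (k : K) (B) (hB : B ∈ unoriented 𝓔 v) : k • B ∈ unoriented 𝓔 v := by
    refine ⟨hK k B hB.1, fun h ↦ hB.2.1 ?_, fun h ↦ hB.2.2 ?_⟩
    · simpa using hv k⁻¹ _ h
    · rw [← smul_set_compl] at h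
      simpa using hv k⁻¹ _ h
  refine ⟨hU k B hB.prop, fun C hC hBC ↦ ?_⟩
  exact subset_smul_set_iff.2
    (hB.le_of_ge (hU k⁻¹ C hC) (smul_set_subset_iff_subset_inv_smul_set.1 hBC))

theorem smul_pair_compl (hK : ∀ k : K, k • A = A ∨ k • A = Aᶜ) (k : K) :
    k • ({A, Aᶜ} : Set (Set X)) = {A, Aᶜ} := by
  rw [smul_set_insert, smul_set_singleton, smul_set_compl]
  rcases hK k with h | h <;> rw [h]
  rw [_root_.compl_compl, pair_comm]

theorem isPartialOrientation_setOf_subset (hS : S.Nonempty) :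
    IsPartialOrientation 𝓔 {B ∈ 𝓔 | S ⊆ B} where
  subset := sep_subset _ _
  mem_of_subset _ hB _ hC hBC := ⟨hC, hB.2.trans hBC⟩
  compl_notMem _ hB hB' := hS.elim fun _ hx ↦ hB'.2 hx (hB.2 hx)

theorem TreeSet.finite_unoriented (h𝓔 : TreeSet 𝓔) (hS : S.Finite)
    (hSv : {B ∈ 𝓔 | S ⊆ B} ⊆ v) : (unoriented 𝓔 v).Finite := by
  refine (hS.biUnion fun x _ ↦ hS.biUnion fun y _ ↦ h𝓔.finite_interval x y).subset ?_
  rintro B ⟨hB, h, h'⟩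
  obtain ⟨y, hyS, hy⟩ := not_subset.1 fun hSB ↦ h (hSv ⟨hB, hSB⟩)
  obtain ⟨x, hxS, hx⟩ := not_subset.1 fun hSB ↦ h' (hSv ⟨h𝓔.compl_mem B hB, hSB⟩)
  exact mem_biUnion hxS (mem_biUnion hyS ⟨hB, not_not.1 hx, hy⟩)

theorem unoriented_union_ssubset (hA : A ∈ unoriented 𝓔 v) (hAw : A ∈ w) :
    unoriented 𝓔 (v ∪ w) ⊂ unoriented 𝓔 v :=
  ssubset_iff_exists.2 ⟨fun _ hB ↦ ⟨hB.1, fun h ↦ hB.2.1 (.inl h), fun h ↦ hB.2.2 (.inl h)⟩,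
    A, hA, fun h ↦ h.2.1 (.inr hAw)⟩

/-- Orient all edges towards an orbit as far as possible, then prune: orienting the leaves of the
unoriented part inwards leaves a smaller invariant part, until a vertex or one edge remains. -/
theorem TreeSet.exists_isCell_forall_smul_eq [Finite K] [Nonempty X] (h𝓔 : TreeSet 𝓔)
    (hne : 𝓔.Nonempty) (hK : ∀ (k : K), ∀ B ∈ 𝓔, k • B ∈ 𝓔) :
    ∃ c, IsCell 𝓔 c ∧ ∀ k : K, k • c = c := by
  obtain ⟨x⟩ := ‹Nonempty X›
  set S := MulAction.orbit K x with hSdef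
  have hSfin : S.Finite := finite_range _
  let P (v : Set (Set X)) : Prop :=
    IsPartialOrientation 𝓔 v ∧ {B ∈ 𝓔 | S ⊆ B} ⊆ v ∧ ∀ (k : K), ∀ B ∈ v, k • B ∈ v
  have hP : P {B ∈ 𝓔 | S ⊆ B} := by
    refine ⟨isPartialOrientation_setOf_subset (MulAction.nonempty_orbit x), subset_rfl,
      fun k B hB ↦ ⟨hK k B hB.1, ?_⟩⟩
    rw [subset_smul_set_iff, hSdef, MulAction.smul_orbit]
    exact hB.2
  obtain ⟨v, hv⟩ := exists_minimalFor_of_wellFoundedLT P (fun v ↦ (unoriented 𝓔 v).ncard) ⟨_, hP⟩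
  obtain ⟨hvo, hSv, hvK⟩ := hv.prop
  have hfin := h𝓔.finite_unoriented hSfin hSv
  by_cases hmax : ∃ A, Maximal (· ∈ unoriented 𝓔 v) A ∧ Maximal (· ∈ unoriented 𝓔 v) Aᶜ
  · obtain ⟨A, hA, hA'⟩ := hmax
    exact ⟨{A, Aᶜ}, .inr ⟨A, hA.prop.1, rfl⟩, smul_pair_compl fun k ↦
      h𝓔.eq_or_eq_compl_of_maximal_unoriented hA hA' (maximal_unoriented_smul hK hvK k hA).prop⟩
  · push Not at hmax
    have hempty : unoriented 𝓔 v = ∅ := by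
      by_contra hne
      obtain ⟨A, hA⟩ := hfin.exists_maximal (nonempty_iff_ne_empty.2 hne)
      refine hv.not_lt (j := v ∪ {A | Maximal (· ∈ unoriented 𝓔 v) A})
        ⟨h𝓔.isPartialOrientation_union_maximal hvo hmax, hSv.trans subset_union_left, ?_⟩
        (ncard_lt_ncard (unoriented_union_ssubset hA.prop hA) hfin)
      rintro k B (hB | hB)
      exacts [.inl (hvK k B hB), .inr (maximal_unoriented_smul hK hvK k hB)]
    refine ⟨v, .inl (h𝓔.isVertex_of_isPartialOrientation hne hSfin hvo hSv hempty), fun k ↦ ?_⟩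
    exact (smul_set_subset_iff.2 fun B hB ↦ hvK k B hB).antisymm
      (subset_smul_set_iff.2 (smul_set_subset_iff.2 fun B hB ↦ hvK k⁻¹ B hB))

end FixedCell

/-! ### Finite subgroups -/

section FiniteSubgroups

variable {G H : Type*} [Group G] [Group H] {C D : Subgroup G} {p : Subgroup G → Prop}

/-- The finite subgroups with finite centralizer are the ones which are rigid under conjugation:
only finitely many elements conjugate such a subgroup into a given finite subgroup. -/
def HasFiniteCentralizer (C : Subgroup G) : Prop :=
  Finite (Subgroup.centralizer (C : Set G))

/-- Finite subgroups with a sufficiently large intersection. With `p := HasFiniteCentralizer` this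
relation mimics the adjacency of vertex stabilizers along an edge of the tree. -/
def Linked (p : Subgroup G → Prop) (C D : Subgroup G) : Prop :=
  Finite C ∧ Finite D ∧ p (C ⊓ D)

/-- The setoid of subgroups up to conjugation. -/
def subgroupConjugacy (G : Type*) [Group G] : Setoid (Subgroup G) where
  r C D := ∃ g : G, C = MulAut.conj g • D
  iseqv.refl C := ⟨1, by simp⟩
  iseqv.symm := by
    rintro C D ⟨g, rfl⟩
    exact ⟨g⁻¹, by simp⟩
  iseqv.trans := by
    rintro C D E ⟨g, rfl⟩ ⟨h, rfl⟩
    exact ⟨g * h, by simp [mul_smul]⟩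

theorem map_conj_smul (φ : G →* H) (g : G) (C : Subgroup G) :
    (MulAut.conj g • C).map φ = MulAut.conj (φ g) • C.map φ := by
  have hcomp : φ.comp (MulAut.conj g).toMonoidHom = (MulAut.conj (φ g)).toMonoidHom.comp φ := by
    ext
    simp
  exact (Subgroup.map_map C φ _).trans <|
    (congrArg C.map hcomp).trans (Subgroup.map_map C (MulAut.conj (φ g)).toMonoidHom φ).symm

instance : Std.Symm (Linked p) where
  symm C D := fun ⟨hC, hD, h⟩ ↦ ⟨hD, hC, inf_comm C D ▸ h⟩

theorem finite_setOf_subgroup_le (D : Subgroup G) [Finite D] : {C | C ≤ D}.Finite :=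
  .of_injOn (f := fun C : Subgroup G ↦ (C : Set G)) (t := 𝒫 D) (fun _ hC ↦ hC)
    SetLike.coe_injective.injOn (Set.toFinite _).finite_subsets

theorem HasFiniteCentralizer.mono (hC : HasFiniteCentralizer C) (hCD : C ≤ D) :
    HasFiniteCentralizer D :=
  Set.Finite.subset hC (Subgroup.centralizer_le hCD)

theorem HasFiniteCentralizer.conj_smul (hC : HasFiniteCentralizer C) (g : G) :
    HasFiniteCentralizer (MulAut.conj g • C) := by
  have : Finite (Subgroup.centralizer (C : Set G)) := hC
  have hle : Subgroup.centralizer ((MulAut.conj g • C : Subgroup G) : Set G) ≤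
      MulAut.conj g • Subgroup.centralizer (C : Set G) := by
    intro x hx
    rw [Subgroup.mem_pointwise_smul_iff_inv_smul_mem, Subgroup.mem_centralizer_iff]
    intro c hc
    apply smul_left_cancel (MulAut.conj g)
    simpa only [smul_mul', smul_inv_smul] using Subgroup.mem_centralizer_iff.1 hx _
      (Subgroup.smul_mem_pointwise_smul c (MulAut.conj g) C hc)
  have : Finite (MulAut.conj g • Subgroup.centralizer (C : Set G) : Subgroup G) :=
    .of_equiv _ (Subgroup.equivSMul (MulAut.conj g) _).toEquiv
  exact Set.Finite.subset this hle

/-- Two elements which conjugate every `c ∈ C` to the same element of `D` differ by an element of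
the centralizer of `C`. -/
theorem HasFiniteCentralizer.finite_setOf_conj_smul_le [Finite C] [Finite D]
    (hC : HasFiniteCentralizer C) : {g : G | MulAut.conj g • C ≤ D}.Finite := by
  have : Finite (Subgroup.centralizer (C : Set G)) := hC
  let f (g : G) (c : C) : G := g * c * g⁻¹
  refine Set.Finite.of_finite_fibers f ?_ fun y hy ↦ ?_
  · refine (Set.Finite.pi' fun _ : C ↦ Set.toFinite (D : Set G)).subset ?_
    rintro _ ⟨g, hg, rfl⟩ c
    exact hg (Subgroup.smul_mem_pointwise_smul c.1 (MulAut.conj g) C c.2)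
  obtain ⟨g, -, rfl⟩ := hy
  refine ((Set.toFinite (Subgroup.centralizer (C : Set G) : Set G)).image (g * ·)).subset ?_
  rintro h ⟨-, hh⟩
  refine ⟨g⁻¹ * h, fun c hc ↦ ?_, mul_inv_cancel_left g h⟩
  have hhc : h * c * h⁻¹ = g * c * g⁻¹ := congrFun hh ⟨c, hc⟩
  calc c * (g⁻¹ * h) = g⁻¹ * (g * c * g⁻¹ * h) := by group
    _ = g⁻¹ * h * c := by rw [← hhc]; group

theorem exists_forall_not_hasFiniteCentralizer_map {F : Subgroup G} [IsMulTorsionFree F] [F.Normal]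
    [F.FiniteIndex] (hC : ¬ HasFiniteCentralizer C) :
    ∃ d : G, d ≠ 1 ∧ ∀ φ : G →* G, φ d ≠ 1 → ¬ HasFiniteCentralizer (C.map φ) := by
  obtain ⟨c, hcF, hcC, hc1⟩ := exists_mem_inf_ne_one F (not_finite_iff_infinite.1 hC)
  refine ⟨c ^ F.index, ?_, fun φ hφ hfin ↦ ?_⟩
  · intro h
    exact not_isOfFinOrder_of_mem hcF hc1
      (isOfFinOrder_iff_pow_eq_one.2 ⟨_, Nat.pos_of_ne_zero Subgroup.FiniteIndex.index_ne_zero, h⟩)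
  have : Finite (Subgroup.centralizer (C.map φ : Set G)) := hfin
  have hφc : φ c ∈ Subgroup.centralizer (C.map φ : Set G) := by
    rintro _ ⟨x, hx, rfl⟩
    rw [← map_mul, ← map_mul, hcC x hx]
  rw [map_pow] at hφ
  exact not_isOfFinOrder_of_mem (F.pow_index_mem _) hφ
    (Submonoid.isOfFinOrder_coe.2 (isOfFinOrder_of_finite (⟨_, hφc⟩ : Subgroup.centralizer _))).pow

end FiniteSubgroups

section Cells

variable {G : Type*} [Group G] {F C D : Subgroup G} {𝓔 c d : Set (Set G)} {A : Set G}

theorem EndTree.disjoint_stabilizer_of_isCell [IsMulTorsionFree F] (h𝓔 : EndTree F 𝓔)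
    (hc : IsCell 𝓔 c) : Disjoint F (MulAction.stabilizer G c) := by
  obtain hv | ⟨A, hA, rfl⟩ := hc
  · exact h𝓔.disjoint_stabilizer hv
  refine Subgroup.disjoint_def.2 fun {x} hx hxA ↦ by_contra fun hx1 ↦ ?_
  have hsq : x ^ 2 ∈ MulAction.stabilizer G A := by
    have hx : x • A = A ∨ x • A = Aᶜ := by
      simpa using hxA.subset (smul_mem_smul_set (mem_insert A _))
    obtain hx | hx := hx <;> simp [pow_two, mul_smul, hx, smul_set_compl]
  have : x ^ 2 = 1 := Subgroup.disjoint_def.1 (h𝓔.disjoint_stabilizer_edge hA) (F.pow_mem hx 2) hsq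
  exact not_isOfFinOrder_of_mem hx hx1 (isOfFinOrder_iff_pow_eq_one.2 ⟨2, two_pos, this⟩)

theorem EndTree.finite_stabilizer_of_isCell [IsMulTorsionFree F] [F.FiniteIndex]
    (h𝓔 : EndTree F 𝓔) (hc : IsCell 𝓔 c) : Finite (MulAction.stabilizer G c) :=
  finite_of_disjoint_of_finiteIndex (h𝓔.disjoint_stabilizer_of_isCell hc)

theorem EndTree.exists_isCell_le_stabilizer (h𝓔 : EndTree F 𝓔) (hne : 𝓔.Nonempty)
    (C : Subgroup G) [Finite C] : ∃ c, IsCell 𝓔 c ∧ C ≤ MulAction.stabilizer G c := by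
  obtain ⟨c, hc, hCc⟩ := h𝓔.toTreeSet.exists_isCell_forall_smul_eq hne
    (K := C) fun k ↦ h𝓔.smul_mem k
  exact ⟨c, hc, fun x hx ↦ hCc ⟨x, hx⟩⟩

theorem EndTree.exists_finite_isCell_mem_orbit (h𝓔 : EndTree F 𝓔) :
    ∃ T : Set (Set (Set G)), T.Finite ∧ (∀ d ∈ T, IsCell 𝓔 d) ∧
      ∀ c, IsCell 𝓔 c → ∃ d ∈ T, c ∈ MulAction.orbit G d := by
  obtain ⟨R, hR, hRorb⟩ := h𝓔.finite_orbits
  refine ⟨edgeHead 𝓔 '' (R ∩ 𝓔) ∪ (fun A ↦ {A, Aᶜ}) '' (R ∩ 𝓔),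
    ((hR.inter_of_left 𝓔).image _).union ((hR.inter_of_left 𝓔).image _), ?_, ?_⟩
  · rintro _ (⟨A, hA, rfl⟩ | ⟨A, hA, rfl⟩)
    exacts [.inl (isVertex_edgeHead hA.2), .inr ⟨A, hA.2, rfl⟩]
  · have hRorb (A) (hA : A ∈ 𝓔) : ∃ B ∈ R ∩ 𝓔, ∃ g : G, g • B = A := by
      obtain ⟨B, hBR, g, rfl⟩ := hRorb A hA
      exact ⟨B, ⟨hBR, by simpa using h𝓔.smul_mem g⁻¹ _ hA⟩, g, rfl⟩
    rintro c (⟨A, hA, rfl⟩ | ⟨A, hA, rfl⟩) <;> obtain ⟨B, hB, g, rfl⟩ := hRorb A hA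
    · exact ⟨_, .inl ⟨B, hB, rfl⟩, g, smul_edgeHead h𝓔.smul_mem g B⟩
    · exact ⟨_, .inr ⟨B, hB, rfl⟩, g, by simp [smul_set_insert, smul_set_compl]⟩

theorem EndTree.finite_conjugacyClasses_finite_subgroups [IsMulTorsionFree F] [F.FiniteIndex]
    (h𝓔 : EndTree F 𝓔) (hne : 𝓔.Nonempty) :
    (Quotient.mk (subgroupConjugacy G) '' {C | Finite C}).Finite := by
  obtain ⟨T, hT, hTcell, hTorb⟩ := h𝓔.exists_finite_isCell_mem_orbit
  have hfin : (⋃ d ∈ T, {C | C ≤ MulAction.stabilizer G d}).Finite := by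
    refine hT.biUnion fun d hd ↦ ?_
    have := h𝓔.finite_stabilizer_of_isCell (hTcell d hd)
    exact finite_setOf_subgroup_le _
  refine (hfin.image (Quotient.mk (subgroupConjugacy G))).subset ?_
  rintro _ ⟨C, hC : Finite C, rfl⟩
  obtain ⟨c, hc, hCc⟩ := h𝓔.exists_isCell_le_stabilizer hne C
  obtain ⟨d, hd, g, rfl⟩ := hTorb c hc
  refine ⟨MulAut.conj g⁻¹ • C, mem_biUnion hd ?_, Quotient.sound ⟨g⁻¹, rfl⟩⟩
  rw [MulAction.stabilizer_smul_eq_stabilizer_map_conj] at hCc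
  rw [map_inv]
  exact Subgroup.subset_pointwise_smul_iff.1 hCc

theorem EndTree.linked_stabilizer_edgeHead [IsMulTorsionFree F] [F.FiniteIndex]
    (h𝓔 : EndTree F 𝓔) (hcent : ∀ A ∈ 𝓔, HasFiniteCentralizer (MulAction.stabilizer G A))
    (hA : A ∈ 𝓔) (hc : IsCell 𝓔 c) (hAc : MulAction.stabilizer G A ≤ MulAction.stabilizer G c) :
    Linked HasFiniteCentralizer (MulAction.stabilizer G c)
      (MulAction.stabilizer G (edgeHead 𝓔 A)) :=
  ⟨h𝓔.finite_stabilizer_of_isCell hc,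
    h𝓔.finite_stabilizer_of_isCell (.inl (isVertex_edgeHead hA)),
    (hcent A hA).mono (le_inf hAc (stabilizer_le_stabilizer_edgeHead h𝓔.smul_mem A))⟩

theorem stabilizer_le_stabilizer_pair_compl (A : Set G) :
    MulAction.stabilizer G A ≤ MulAction.stabilizer G ({A, Aᶜ} : Set (Set G)) := by
  intro g hg
  simp_all [smul_set_insert, smul_set_compl]

theorem EndTree.exists_stabilizer_le_of_isCell (h𝓔 : EndTree F 𝓔) (hc : IsCell 𝓔 c) :
    ∃ A ∈ 𝓔, MulAction.stabilizer G A ≤ MulAction.stabilizer G c := by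
  obtain ⟨A, hA, rfl⟩ | ⟨A, hA, rfl⟩ := hc
  exacts [⟨A, hA, stabilizer_le_stabilizer_edgeHead h𝓔.smul_mem A⟩,
    ⟨A, hA, stabilizer_le_stabilizer_pair_compl A⟩]

theorem EndTree.reflTransGen_linked_stabilizer [IsMulTorsionFree F] [F.FiniteIndex]
    (h𝓔 : EndTree F 𝓔) (hcent : ∀ A ∈ 𝓔, HasFiniteCentralizer (MulAction.stabilizer G A))
    (hc : IsCell 𝓔 c) (hd : IsVertex 𝓔 d) :
    Relation.ReflTransGen (Linked HasFiniteCentralizer) (MulAction.stabilizer G c)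
      (MulAction.stabilizer G d) := by
  obtain ⟨A, hA, hAc⟩ := h𝓔.exists_stabilizer_le_of_isCell hc
  refine h𝓔.isVertex_induction (P := fun d ↦ Relation.ReflTransGen (Linked HasFiniteCentralizer)
    (MulAction.stabilizer G c) (MulAction.stabilizer G d)) (isVertex_edgeHead hA) ?_
    (fun B hB ih ↦ ih.tail ?_) hd
  · exact .single (h𝓔.linked_stabilizer_edgeHead hcent hA hc hAc)
  · refine h𝓔.linked_stabilizer_edgeHead hcent hB
      (.inl (isVertex_edgeHead (h𝓔.compl_mem B hB))) ?_
    simpa using stabilizer_le_stabilizer_edgeHead h𝓔.smul_mem Bᶜ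

theorem EndTree.reflTransGen_linked [IsMulTorsionFree F] [F.FiniteIndex]
    (h𝓔 : EndTree F 𝓔) (hne : 𝓔.Nonempty)
    (hcent : ∀ A ∈ 𝓔, HasFiniteCentralizer (MulAction.stabilizer G A))
    [Finite C] [Finite D] (hC : HasFiniteCentralizer C) (hD : HasFiniteCentralizer D) :
    Relation.ReflTransGen (Linked HasFiniteCentralizer) C D := by
  obtain ⟨A, hA⟩ := hne
  have htree (C : Subgroup G) [hfin : Finite C] (hC : HasFiniteCentralizer C) :
      Relation.ReflTransGen (Linked HasFiniteCentralizer) C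
        (MulAction.stabilizer G (edgeHead 𝓔 A)) := by
    obtain ⟨c, hc, hCc⟩ := h𝓔.exists_isCell_le_stabilizer ⟨A, hA⟩ C
    exact .head ⟨hfin, h𝓔.finite_stabilizer_of_isCell hc, by rwa [inf_eq_left.2 hCc]⟩
      (h𝓔.reflTransGen_linked_stabilizer hcent hc (isVertex_edgeHead hA))
  exact (htree C hC).trans (symm (htree D hD))

theorem EndTree.hasFiniteCentralizer_of_maximal [IsMulTorsionFree F] [F.FiniteIndex]
    (h𝓔 : EndTree F 𝓔) (hne : 𝓔.Nonempty)
    (hcent : ∀ A ∈ 𝓔, HasFiniteCentralizer (MulAction.stabilizer G A))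
    (hC : Maximal (fun C : Subgroup G ↦ Finite C) C) : HasFiniteCentralizer C := by
  have := hC.prop
  obtain ⟨c, hc, hCc⟩ := h𝓔.exists_isCell_le_stabilizer hne C
  obtain ⟨A, hA, hAc⟩ := h𝓔.exists_stabilizer_le_of_isCell hc
  exact (hcent A hA).mono (hAc.trans (hC.le_of_ge (h𝓔.finite_stabilizer_of_isCell hc) hCc))

end Cells

/-! ### Discriminating sets of endomorphisms -/

section Discriminating

variable {G Z : Type*} [Group G] {Q R : Set (G →* G)}

/-- No finite set of nontrivial elements meets all the kernels of the endomorphisms in `Q`. -/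
def Discriminating (Q : Set (G →* G)) : Prop :=
  ∀ S : Finset G, 1 ∉ S → ∃ φ ∈ Q, ∀ s ∈ S, φ s ≠ 1

theorem Discriminating.mono (hQ : Discriminating Q) (hQR : Q ⊆ R) : Discriminating R :=
  fun S hS ↦ (hQ S hS).imp fun _ ⟨hφ, hφS⟩ ↦ ⟨hQR hφ, hφS⟩

theorem Discriminating.exists_ne_one (hQ : Discriminating Q) {S : Set G} (hS : S.Finite) :
    ∃ φ ∈ Q, ∀ s ∈ S, s ≠ 1 → φ s ≠ 1 := by
  classical
  obtain ⟨φ, hφ, hφS⟩ := hQ (hS.toFinset.erase 1) (Finset.notMem_erase 1 _)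
  exact ⟨φ, hφ, fun s hs hs1 ↦ hφS s (Finset.mem_erase.2 ⟨hs1, hS.mem_toFinset.2 hs⟩)⟩

theorem Discriminating.exists_injOn (hQ : Discriminating Q) {S : Set G} (hS : S.Finite) :
    ∃ φ ∈ Q, InjOn φ S := by
  obtain ⟨φ, hφ, hφS⟩ := hQ.exists_ne_one (hS.inv.mul hS)
  refine ⟨φ, hφ, fun x hx y hy hxy ↦ ?_⟩
  by_contra hne
  exact hφS _ (mul_mem_mul (inv_mem_inv.2 hx) hy) (mt inv_mul_eq_one.1 hne) (by simp [hxy])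

theorem Discriminating.image2_comp (hQ : Discriminating Q) (hR : Discriminating R) :
    Discriminating (image2 MonoidHom.comp Q R) := by
  classical
  intro S hS
  obtain ⟨φ, hφ, hφS⟩ := hR S hS
  obtain ⟨ψ, hψ, hψS⟩ := hQ (S.image φ) (by simpa using hφS)
  exact ⟨_, mem_image2_of_mem hψ hφ, fun s hs ↦ hψS _ (Finset.mem_image_of_mem φ hs)⟩

theorem Discriminating.exists_fiber {ι : Type*} [Finite ι] (hQ : Discriminating Q)
    {r : (G →* G) → ι → Prop} (hr : ∀ φ ∈ Q, ∃ i, r φ i) :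
    ∃ i, Discriminating {φ ∈ Q | r φ i} := by
  classical
  by_contra! h
  simp only [Discriminating, not_forall] at h
  choose S hS hSφ using h
  have := Fintype.ofFinite ι
  obtain ⟨φ, hφ, hφS⟩ := hQ (Finset.univ.biUnion S) (by simpa using hS)
  obtain ⟨i, hi⟩ := hr φ hφ
  exact hSφ i ⟨φ, ⟨hφ, hi⟩, fun s hs ↦ hφS s (Finset.mem_biUnion.2 ⟨i, Finset.mem_univ i, hs⟩)⟩

/-- The self-maps of `W` realized by discriminating subsets of `Q` form a nonempty finite
semigroup, which contains an idempotent. -/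
theorem Discriminating.exists_idempotent (hQ : Discriminating Q)
    (hcomp : ∀ ψ ∈ Q, ∀ φ ∈ Q, ψ.comp φ ∈ Q) {a : (G →* G) → Z → Z}
    (ha : ∀ ψ φ z, a (ψ.comp φ) z = a ψ (a φ z)) {W : Set Z} (hW : W.Finite)
    (hmaps : ∀ φ ∈ Q, MapsTo (a φ) W W) :
    ∃ m : W → W, (∀ w, m (m w) = m w) ∧ Discriminating {φ ∈ Q | ∀ w : W, a φ w = m w} := by
  have : Finite W := hW
  have : Finite (Function.End W) := inferInstanceAs (Finite (W → W))
  let T : Set (Function.End W) := {m | Discriminating {φ ∈ Q | ∀ w : W, a φ w = m w}}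
  have hT : T.Nonempty := hQ.exists_fiber fun φ hφ ↦ ⟨(hmaps φ hφ).restrict, fun _ ↦ rfl⟩
  have hTmul : ∀ m ∈ T, ∀ m' ∈ T, m * m' ∈ T := by
    refine fun m hm m' hm' ↦ (hm.image2_comp hm').mono ?_
    rintro _ ⟨ψ, ⟨hψ, hψm⟩, φ, ⟨hφ, hφm⟩, rfl⟩
    exact ⟨hcomp ψ hψ φ hφ, fun w ↦ by rw [ha, hφm, hψm]; rfl⟩
  let : TopologicalSpace (Function.End W) := ⊥
  have : DiscreteTopology (Function.End W) := ⟨rfl⟩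
  obtain ⟨m, hm, hmm⟩ := exists_idempotent_in_compact_subsemigroup
    (fun _ ↦ continuous_of_discreteTopology) T hT T.toFinite.isCompact hTmul
  exact ⟨m, congrFun hmm, hm⟩

theorem Discriminating.exists_forall_eq (hQ : Discriminating Q)
    (hcomp : ∀ ψ ∈ Q, ∀ φ ∈ Q, ψ.comp φ ∈ Q) {S : Set G} (hS : S.Finite)
    (hSQ : ∀ s ∈ S, ((fun φ : G →* G ↦ φ s) '' Q).Finite) : ∃ φ ∈ Q, ∀ s ∈ S, φ s = s := by
  let W : Set G := S ∪ ⋃ s ∈ S, (fun φ : G →* G ↦ φ s) '' Q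
  have hW : W.Finite := hS.union (hS.biUnion hSQ)
  have hmaps : ∀ φ ∈ Q, MapsTo φ W W := by
    rintro φ hφ w (hw | hw)
    · exact .inr (mem_biUnion hw ⟨φ, hφ, rfl⟩)
    · obtain ⟨s, hs, ψ, hψ, rfl⟩ := mem_iUnion₂.1 hw
      exact .inr (mem_biUnion hs ⟨φ.comp ψ, hcomp φ hφ ψ hψ, rfl⟩)
  obtain ⟨m, hm, hmQ⟩ := hQ.exists_idempotent hcomp (a := fun φ ↦ φ) (fun _ _ _ ↦ rfl) hW hmaps
  obtain ⟨φ, ⟨hφ, hφm⟩, hinj⟩ := hmQ.exists_injOn hW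
  refine ⟨φ, hφ, fun s hs ↦ ?_⟩
  have hsW : s ∈ W := .inl hs
  refine hinj (hmaps φ hφ hsW) hsW ?_
  rw [hφm ⟨s, hsW⟩, hφm, hm]

end Discriminating

section RigidFamily

variable {G : Type*} [Group G] {Q : Set (G →* G)} {P : Subgroup G}

/-- The properties of the finite subgroups of a group acting on a tree with finite vertex
stabilizers and with edge stabilizers having finite centralizers that are used to show that the
group is strongly co-Hopfian. -/
structure HasRigidFiniteSubgroups (G : Type*) [Group G] : Prop where
  finite_conjugacyClasses : (Quotient.mk (subgroupConjugacy G) '' {C | Finite C}).Finite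
  hasFiniteCentralizer_of_maximal :
    ∀ C : Subgroup G, Maximal (fun C : Subgroup G ↦ Finite C) C → HasFiniteCentralizer C
  reflTransGen_linked : ∀ C D : Subgroup G, Finite C → Finite D → HasFiniteCentralizer C →
    HasFiniteCentralizer D → Relation.ReflTransGen (Linked HasFiniteCentralizer) C D
  exists_forall_not_hasFiniteCentralizer_map : ∀ C : Subgroup G, ¬ HasFiniteCentralizer C →
    ∃ d : G, d ≠ 1 ∧ ∀ φ : G →* G, φ d ≠ 1 → ¬ HasFiniteCentralizer (C.map φ)

/-- A discriminating semigroup of endomorphisms which all act in the same way on the conjugacy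
classes of finite subgroups, and which preserve a finite subgroup `P` with finite centralizer. -/
structure RigidFamily (Q : Set (G →* G)) (P : Subgroup G) : Prop where
  discriminating : Discriminating Q
  comp_mem : ∀ ψ ∈ Q, ∀ φ ∈ Q, ψ.comp φ ∈ Q
  exists_map_eq : ∀ φ ∈ Q, ∀ ψ ∈ Q, ∀ C : Subgroup G, Finite C →
    ∃ g : G, C.map φ = MulAut.conj g • C.map ψ
  finite : Finite P
  hasFiniteCentralizer : HasFiniteCentralizer P
  map_eq : ∀ φ ∈ Q, P.map φ = P

theorem exists_maximalFor_natCard_of_finite_conjugacyClasses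
    (h : (Quotient.mk (subgroupConjugacy G) '' {C | Finite C}).Finite) :
    ∃ C : Subgroup G, MaximalFor (fun C : Subgroup G ↦ Finite C) (fun C ↦ Nat.card C) C := by
  let card : Quotient (subgroupConjugacy G) → ℕ := Quotient.lift (fun C ↦ Nat.card C) (by
    rintro _ C ⟨g, rfl⟩
    exact Nat.card_congr (Subgroup.equivSMul _ C).symm.toEquiv)
  refine Set.Finite.exists_maximalFor' (fun C : Subgroup G ↦ Nat.card C) {C | Finite C} ?_
    ⟨⊥, inferInstanceAs (Finite (⊥ : Subgroup G))⟩
  have := h.image card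
  rw [image_image] at this
  exact this

theorem Discriminating.exists_forall_map_eq
    (hfin : (Quotient.mk (subgroupConjugacy G) '' {C | Finite C}).Finite)
    (hQ : Discriminating Q) (hcomp : ∀ ψ ∈ Q, ∀ φ ∈ Q, ψ.comp φ ∈ Q)
    (hconj : ∀ φ ∈ Q, ∀ g, (MulAut.conj g).toMonoidHom.comp φ ∈ Q) :
    ∃ R ⊆ Q, Discriminating R ∧ (∀ ψ ∈ R, ∀ φ ∈ R, ψ.comp φ ∈ R) ∧
      (∀ φ ∈ R, ∀ g, (MulAut.conj g).toMonoidHom.comp φ ∈ R) ∧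
      ∀ φ ∈ R, ∀ ψ ∈ R, ∀ C : Subgroup G, Finite C →
        ∃ g : G, C.map φ = MulAut.conj g • C.map ψ := by
  let a (φ : G →* G) : Quotient (subgroupConjugacy G) → Quotient (subgroupConjugacy G) :=
    Quotient.map (Subgroup.map φ) (by
      rintro _ C ⟨g, rfl⟩
      exact ⟨φ g, map_conj_smul φ g C⟩)
  have ha (ψ φ z) : a (ψ.comp φ) z = a ψ (a φ z) := by
    induction z using Quotient.inductionOn with
    | h C => exact congrArg _ (Subgroup.map_map C ψ φ).symm
  obtain ⟨m, hm, hmQ⟩ := hQ.exists_idempotent hcomp ha hfin fun φ _ ↦ by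
    rintro _ ⟨C, hC, rfl⟩
    exact ⟨C.map φ, Set.Finite.image φ hC, rfl⟩
  refine ⟨_, sep_subset _ _, hmQ, ?_, ?_, ?_⟩
  · rintro ψ ⟨hψ, hψm⟩ φ ⟨hφ, hφm⟩
    exact ⟨hcomp ψ hψ φ hφ, fun w ↦ by rw [ha, hφm, hψm, hm]⟩
  · rintro φ ⟨hφ, hφm⟩ g
    refine ⟨hconj φ hφ g, fun w ↦ ?_⟩
    rw [← hφm]
    obtain ⟨_, C, -, rfl⟩ := w
    exact Quotient.sound ⟨g, (Subgroup.map_map C _ φ).symm⟩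
  · rintro φ ⟨-, hφm⟩ ψ ⟨-, hψm⟩ C hC
    let w : Quotient.mk (subgroupConjugacy G) '' {C | Finite C} := ⟨_, C, hC, rfl⟩
    exact Quotient.exact ((hφm w).trans (hψm w).symm)

theorem Discriminating.sep_map_eq (hQ : Discriminating Q)
    (hconj : ∀ φ ∈ Q, ∀ g, (MulAut.conj g).toMonoidHom.comp φ ∈ Q)
    (hP : ∀ φ ∈ Q, ∃ g : G, P.map φ = MulAut.conj g • P) :
    Discriminating {φ ∈ Q | P.map φ = P} := by
  intro S hS
  obtain ⟨φ, hφ, hφS⟩ := hQ S hS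
  obtain ⟨g, hg⟩ := hP φ hφ
  refine ⟨_, ⟨hconj φ hφ g⁻¹, ?_⟩,
    fun s hs ↦ (map_ne_one_iff _ (MulAut.conj g⁻¹).injective).2 (hφS s hs)⟩
  rw [← Subgroup.map_map, hg]
  exact (congrArg (· • MulAut.conj g • P) (map_inv MulAut.conj g)).trans (inv_smul_smul _ P)

theorem Discriminating.exists_hasFiniteCentralizer_map (hG : HasRigidFiniteSubgroups G)
    (hQ : Discriminating Q) :
    ∃ φ ∈ Q, ∃ C : Subgroup G, Finite C ∧ HasFiniteCentralizer (C.map φ) := by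
  obtain ⟨C, hC, hCmax⟩ :=
    exists_maximalFor_natCard_of_finite_conjugacyClasses hG.finite_conjugacyClasses
  obtain ⟨φ, hφ, hφC⟩ := hQ.exists_injOn (toFinite (C : Set G))
  refine ⟨φ, hφ, C, hC, hG.hasFiniteCentralizer_of_maximal _
    ⟨Set.Finite.image φ hC, fun D (hD : Finite D) hCD ↦ ?_⟩⟩
  have hcard : Nat.card (C.map φ) = Nat.card C := Nat.card_image_of_injOn hφC
  refine (Subgroup.eq_of_le_of_card_ge hCD ?_).ge
  rw [hcard]
  exact (le_total (Nat.card D) (Nat.card C)).elim id (hCmax hD)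

theorem Discriminating.exists_rigidFamily (hG : HasRigidFiniteSubgroups G)
    (hQ : Discriminating Q) (hcomp : ∀ ψ ∈ Q, ∀ φ ∈ Q, ψ.comp φ ∈ Q)
    (hconj : ∀ φ ∈ Q, ∀ g, (MulAut.conj g).toMonoidHom.comp φ ∈ Q) :
    ∃ R ⊆ Q, ∃ P, RigidFamily R P := by
  obtain ⟨R, hRQ, hR, hRcomp, hRconj, hRmap⟩ :=
    hQ.exists_forall_map_eq hG.finite_conjugacyClasses hcomp hconj
  obtain ⟨φ₀, hφ₀, C, hC, hfin⟩ := hR.exists_hasFiniteCentralizer_map hG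
  have hP (φ) (hφ : φ ∈ R) : ∃ g : G, (C.map φ₀).map φ = MulAut.conj g • C.map φ₀ := by
    rw [Subgroup.map_map]
    exact hRmap _ (hRcomp φ hφ φ₀ hφ₀) φ₀ hφ₀ C hC
  refine ⟨{φ ∈ R | (C.map φ₀).map φ = C.map φ₀}, (sep_subset _ _).trans hRQ, C.map φ₀, ?_⟩
  constructor
  · exact hR.sep_map_eq hRconj hP
  · rintro ψ ⟨hψ, hψP⟩ φ ⟨hφ, hφP⟩
    exact ⟨hRcomp ψ hψ φ hφ, by rw [← Subgroup.map_map, hφP, hψP]⟩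
  · exact fun φ hφ ψ hψ ↦ hRmap φ hφ.1 ψ hψ.1
  · exact Set.Finite.image φ₀ hC
  · exact hfin
  · exact fun φ hφ ↦ hφ.2

end RigidFamily

section RigidlyJoined

open Relation

variable {G : Type*} [Group G] {Q : Set (G →* G)} {P A B C : Subgroup G} {φ : G →* G}

theorem finite_setOf_hasFiniteCentralizer_inf
    (hfin : (Quotient.mk (subgroupConjugacy G) '' {C | Finite C}).Finite) (A : Subgroup G)
    [Finite A] : {B : Subgroup G | Finite B ∧ HasFiniteCentralizer (A ⊓ B)}.Finite := by
  refine .of_finite_fibers (Quotient.mk (subgroupConjugacy G))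
    (hfin.subset (image_mono fun B hB ↦ hB.1)) ?_
  rintro _ ⟨B, ⟨hB, -⟩, rfl⟩
  have hconj : (⋃ C ∈ {C | C ≤ A ∧ HasFiniteCentralizer C},
      (fun g : G ↦ MulAut.conj g⁻¹ • B) '' {g | MulAut.conj g • C ≤ B}).Finite := by
    refine ((finite_setOf_subgroup_le A).subset fun C hC ↦ hC.1).biUnion ?_
    rintro C ⟨hCA, hC⟩
    have : Finite C := (toFinite (A : Set G)).subset hCA
    exact hC.finite_setOf_conj_smul_le.image _
  refine hconj.subset ?_
  rintro D ⟨⟨-, hD⟩, hDB⟩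
  obtain ⟨g, rfl⟩ := Quotient.exact hDB
  refine mem_biUnion ⟨inf_le_left, hD⟩ ⟨g⁻¹, ?_, by simp⟩
  rw [mem_ofPred_eq, map_inv, Subgroup.pointwise_smul_subset_iff, inv_inv]
  exact inf_le_right

/-- Some `φ ∈ Q` maps `C` onto a subgroup with finite centralizer. In a rigid family all of them
do. -/
def HasFiniteCentralizerImage (Q : Set (G →* G)) (C : Subgroup G) : Prop :=
  ∃ φ ∈ Q, HasFiniteCentralizer (C.map φ)

/-- Connectedness in the graph of finite subgroups, two of them being adjacent if the images of
their intersection under `Q` have finite centralizer. -/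
def RigidlyJoined (Q : Set (G →* G)) : Subgroup G → Subgroup G → Prop :=
  ReflTransGen (Linked (HasFiniteCentralizerImage Q))

theorem HasFiniteCentralizerImage.conj_smul (hA : HasFiniteCentralizerImage Q A) (g : G) :
    HasFiniteCentralizerImage Q (MulAut.conj g • A) :=
  hA.imp fun φ ⟨hφ, h⟩ ↦ ⟨hφ, by rw [map_conj_smul]; exact h.conj_smul _⟩

theorem RigidlyJoined.conj_smul (h : RigidlyJoined Q A B) (g : G) :
    RigidlyJoined Q (MulAut.conj g • A) (MulAut.conj g • B) := by
  refine ReflTransGen.lift (MulAut.conj g • ·) ?_ A B h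
  rintro C D ⟨hC, hD, hCD⟩
  refine ⟨?_, ?_, ?_⟩
  · exact .of_equiv _ (Subgroup.equivSMul _ C).toEquiv
  · exact .of_equiv _ (Subgroup.equivSMul _ D).toEquiv
  · rw [← Subgroup.smul_inf]
    exact hCD.conj_smul g

theorem RigidlyJoined.conj_smul_of_mem (h : RigidlyJoined Q P A) {a : G} (ha : a ∈ A) :
    RigidlyJoined Q P (MulAut.conj a • P) := by
  have := h.conj_smul a
  rw [Subgroup.conj_smul_eq_self_of_mem ha] at this
  exact ReflTransGen.trans h (symm this)

namespace RigidFamily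

theorem hasFiniteCentralizer_map (hQ : RigidFamily Q P) [hC : Finite C]
    (h : HasFiniteCentralizerImage Q C) (hφ : φ ∈ Q) : HasFiniteCentralizer (C.map φ) := by
  obtain ⟨ψ, hψ, hfin⟩ := h
  obtain ⟨g, hg⟩ := hQ.exists_map_eq φ hφ ψ hψ C hC
  rw [hg]
  exact hfin.conj_smul g

theorem hasFiniteCentralizer_of_image (hG : HasRigidFiniteSubgroups G) (hQ : RigidFamily Q P)
    [Finite C] (h : HasFiniteCentralizerImage Q C) : HasFiniteCentralizer C := by
  by_contra hC
  obtain ⟨d, hd, hdC⟩ := hG.exists_forall_not_hasFiniteCentralizer_map C hC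
  obtain ⟨φ, hφ, hφd⟩ := hQ.discriminating {d} (by simpa using hd.symm)
  exact hdC φ (hφd d (Finset.mem_singleton_self d)) (hQ.hasFiniteCentralizer_map h hφ)

theorem linked_map (hQ : RigidFamily Q P) (h : Linked (HasFiniteCentralizerImage Q) A B)
    (hφ : φ ∈ Q) : Linked (HasFiniteCentralizerImage Q) (A.map φ) (B.map φ) := by
  obtain ⟨hA, hB, hAB⟩ := h
  have : Finite (A ⊓ B : Subgroup G) := Set.Finite.subset hA inf_le_left
  refine ⟨Set.Finite.image φ hA, Set.Finite.image φ hB, φ, hφ, ?_⟩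
  refine .mono ?_ (Subgroup.map_mono (Subgroup.map_inf_le A B φ))
  rw [Subgroup.map_map]
  exact hQ.hasFiniteCentralizer_map hAB (hQ.comp_mem φ hφ φ hφ)

theorem finite_of_rigidlyJoined (hQ : RigidFamily Q P) (h : RigidlyJoined Q P A) : Finite A := by
  cases h with
  | refl => exact hQ.finite
  | tail _ h => exact h.2.1

theorem finite_image_map (hG : HasRigidFiniteSubgroups G) (hQ : RigidFamily Q P)
    (h : RigidlyJoined Q P A) : ((fun φ ↦ A.map φ) '' Q).Finite := by
  induction h with
  | refl =>
    refine (finite_singleton P).subset ?_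
    rintro _ ⟨φ, hφ, rfl⟩
    exact hQ.map_eq φ hφ
  | @tail A B _ hAB ih =>
    refine (ih.biUnion
      (t := fun C ↦ {D : Subgroup G | Finite D ∧ HasFiniteCentralizer (C ⊓ D)}) ?_).subset ?_
    · rintro _ ⟨φ, -, rfl⟩
      have : Finite (A.map φ) := Set.Finite.image φ hAB.1
      exact finite_setOf_hasFiniteCentralizer_inf hG.finite_conjugacyClasses _
    · rintro _ ⟨φ, hφ, rfl⟩
      obtain ⟨hA, hB, hfin⟩ := hQ.linked_map hAB hφ
      have : Finite (A.map φ ⊓ B.map φ : Subgroup G) := Set.Finite.subset hA inf_le_left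
      exact mem_biUnion ⟨φ, hφ, rfl⟩ ⟨hB, hQ.hasFiniteCentralizer_of_image hG hfin⟩

theorem finite_image_apply (hG : HasRigidFiniteSubgroups G) (hQ : RigidFamily Q P) {g : G}
    (h : RigidlyJoined Q P (MulAut.conj g • P)) : ((fun φ : G →* G ↦ φ g) '' Q).Finite := by
  have := hQ.finite
  have := hQ.finite_of_rigidlyJoined h
  refine ((hQ.finite_image_map hG h).biUnion (t := fun B ↦ {x | MulAut.conj x • P ≤ B})
    ?_).subset ?_
  · rintro _ ⟨φ, -, rfl⟩
    have : Finite ((MulAut.conj g • P).map φ) := Set.Finite.image φ ‹_›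
    exact hQ.hasFiniteCentralizer.finite_setOf_conj_smul_le
  · rintro _ ⟨φ, hφ, rfl⟩
    refine mem_biUnion ⟨φ, hφ, rfl⟩ ?_
    simp only [mem_ofPred_eq, map_conj_smul, hQ.map_eq φ hφ, le_refl]

theorem exists_forall_eq (hG : HasRigidFiniteSubgroups G) (hQ : RigidFamily Q P) {S : Set G}
    (hS : S.Finite) (hSP : ∀ s ∈ S, RigidlyJoined Q P (MulAut.conj s • P)) :
    ∃ φ ∈ Q, ∀ s ∈ S, φ s = s :=
  hQ.discriminating.exists_forall_eq hQ.comp_mem hS fun s hs ↦ hQ.finite_image_apply hG (hSP s hs)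

/-- Some `φ ∈ Q` fixes `A` pointwise, so the intersection of `A` with any subgroup is its own
image. -/
theorem rigidlyJoined_of_linked (hG : HasRigidFiniteSubgroups G) (hQ : RigidFamily Q P)
    (h : RigidlyJoined Q P A) (hAB : Linked HasFiniteCentralizer A B) : RigidlyJoined Q P B := by
  obtain ⟨hA, hB, hfin⟩ := hAB
  obtain ⟨φ, hφ, hφA⟩ :=
    hQ.exists_forall_eq hG (toFinite (A : Set G)) fun a ha ↦ h.conj_smul_of_mem ha
  refine ReflTransGen.tail h ⟨hA, hB, φ, hφ, ?_⟩
  have himage : (A ⊓ B).map φ = A ⊓ B :=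
    SetLike.coe_injective <| (image_congr fun a ha ↦ hφA a ha.1).trans (image_id _)
  rwa [himage]

theorem rigidlyJoined_conj_smul (hG : HasRigidFiniteSubgroups G) (hQ : RigidFamily Q P) (g : G) :
    RigidlyJoined Q P (MulAut.conj g • P) := by
  have := hQ.finite
  have hpath := hG.reflTransGen_linked P (MulAut.conj g • P) this
    (.of_equiv _ (Subgroup.equivSMul _ P).toEquiv) hQ.hasFiniteCentralizer
    (hQ.hasFiniteCentralizer.conj_smul g)
  generalize MulAut.conj g • P = B at hpath ⊢
  induction hpath with
  | refl => exact .refl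
  | tail _ h ih => exact hQ.rigidlyJoined_of_linked hG ih h

theorem id_mem (hG : HasRigidFiniteSubgroups G) (hQ : RigidFamily Q P) (hfg : Group.FG G) :
    MonoidHom.id G ∈ Q := by
  obtain ⟨S, hS⟩ := hfg.out
  obtain ⟨φ, hφ, hφS⟩ :=
    hQ.exists_forall_eq hG S.finite_toSet fun s _ ↦ hQ.rigidlyJoined_conj_smul hG s
  rwa [← MonoidHom.eq_of_eqOn_dense hS (f := φ) (g := MonoidHom.id G) hφS]

end RigidFamily

theorem CoHopfian.discriminating_of_not_stronglyCoHopfian (hco : CoHopfian G)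
    (h : ¬ StronglyCoHopfian G) : Discriminating {φ : G →* G | ¬ Function.Injective φ} := by
  intro S hS
  by_contra! hSφ
  refine h ⟨S, hS, fun φ hφS ↦ ?_⟩
  have hφ : Function.Injective φ := by
    by_contra hφ
    obtain ⟨s, hs, hs1⟩ := hSφ φ hφ
    exact hφS s hs hs1
  exact ⟨hφ, hco φ hφ⟩

theorem HasRigidFiniteSubgroups.stronglyCoHopfian (hG : HasRigidFiniteSubgroups G)
    (hfg : Group.FG G) (hco : CoHopfian G) : StronglyCoHopfian G := by
  by_contra h
  obtain ⟨Q, hQ, P, hP⟩ := (hco.discriminating_of_not_stronglyCoHopfian h).exists_rigidFamily hG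
    (fun ψ _ φ hφ hinj ↦ hφ (.of_comp hinj))
    (fun φ hφ g hinj ↦ hφ (.of_comp (f := MulAut.conj g) hinj))
  exact hQ (hP.id_mem hG hfg) Function.injective_id

end RigidlyJoined

section Main

variable {G : Type*} [Group G] {F : Subgroup G} {𝓔 : Set (Set G)}

theorem EndTree.hasRigidFiniteSubgroups [IsMulTorsionFree F] [F.Normal] [F.FiniteIndex]
    (h𝓔 : EndTree F 𝓔) (hne : 𝓔.Nonempty)
    (hcent : ∀ A ∈ 𝓔, HasFiniteCentralizer (MulAction.stabilizer G A)) :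
    HasRigidFiniteSubgroups G where
  finite_conjugacyClasses := h𝓔.finite_conjugacyClasses_finite_subgroups hne
  hasFiniteCentralizer_of_maximal _ hC := h𝓔.hasFiniteCentralizer_of_maximal hne hcent hC
  reflTransGen_linked _ _ _ _ hC hD := h𝓔.reflTransGen_linked hne hcent hC hD
  exists_forall_not_hasFiniteCentralizer_map _ hC :=
    exists_forall_not_hasFiniteCentralizer_map (F := F) hC

theorem VirtuallyFree.exists_normal_isFreeGroup (h : VirtuallyFree G) :
    ∃ F : Subgroup G, F.Normal ∧ F.FiniteIndex ∧ IsFreeGroup F := by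
  obtain ⟨H, hH, ⟨hfree⟩⟩ := h
  exact ⟨H.normalCore, H.normalCore_normal, inferInstance,
    .ofMulEquiv (Subgroup.subgroupOfEquivOfLe H.normalCore_le)⟩

theorem stronglyCoHopfian_of_finite [Finite G] : StronglyCoHopfian G := by
  classical
  cases nonempty_fintype G
  refine ⟨Finset.univ.erase 1, by simp, fun φ hφ ↦ ?_⟩
  refine Finite.injective_iff_bijective.1 ((injective_iff_map_eq_one φ).2 fun g hg ↦ ?_)
  by_contra hg1
  exact hφ g (by simp [hg1]) hg

theorem CoHopfian.bijectiveModulo_modTwoKernel {α : Type*} [Finite α] (hco : CoHopfian G)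
    (e : F ≃* FreeGroup α) : BijectiveModulo (modTwoKernel F) := fun ψ hψ ↦
  have hinj := injective_of_mul_inv_mem_modTwoKernel e hψ
  ⟨hinj, hco ψ hinj⟩

theorem CoHopfian.hasRigidFiniteSubgroups {α : Type*} [Group.FG G] [F.Normal] [F.FiniteIndex]
    [Nontrivial F] (e : F ≃* FreeGroup α) (hco : CoHopfian G) (hout : OutFinite G) :
    HasRigidFiniteSubgroups G := by
  have : Group.FG F := Subgroup.fg_of_index_ne_zero F
  have : Group.FG (FreeGroup α) := Group.fg_of_surjective (f := e.toMonoidHom) e.surjective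
  have := finite_of_fg_freeGroup α
  have : IsMulTorsionFree F := e.injective.isMulTorsionFree e.toMonoidHom
  obtain ⟨𝓔₀, h𝓔₀⟩ := exists_endTree F e
  obtain ⟨𝓔, h𝓔⟩ := h𝓔₀.exists_reducedEndTree
  obtain ⟨⟨f, hf⟩, hf1⟩ := exists_ne (1 : F)
  obtain ⟨A, hA, -⟩ := h𝓔.exists_separates f hf (by simpa using hf1)
  exact h𝓔.hasRigidFiniteSubgroups ⟨A, hA⟩ fun _ ↦
    h𝓔.finite_centralizer_stabilizer modTwoKernel_le (hco.bijectiveModulo_modTwoKernel e) hout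

end Main

/-- A finitely generated co-Hopfian virtually free group with finite outer
automorphism group is strongly co-Hopfian. -/
theorem coHopfian_outFinite_stronglyCoHopfian
    (G : Type*) [Group G] (hfg : Group.FG G) (hvf : VirtuallyFree G)
    (hco : CoHopfian G) (hout : OutFinite G) :
    StronglyCoHopfian G := by
  obtain ⟨F, hF, hFindex, hfree⟩ := hvf.exists_normal_isFreeGroup
  obtain htriv | hnontriv := subsingleton_or_nontrivial F
  · have := F.finite_quotient_of_finiteIndex
    have : Finite G := .of_subgroup_quotient F
    exact stronglyCoHopfian_of_finite
  · exact (hco.hasRigidFiniteSubgroups (IsFreeGroup.toFreeGroup F) hout).stronglyCoHopfian hfg hco
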